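/- arXiv:1308.2170 — 2 statements merged into one kernel-verified Lean document; each statement's English description precedes it below -/
import Mathlib

section
/- Let e ≥ 2, r = 3, with D^u as above for a fixed u ∈ {1,…,6}, and let M ∈ D^u be such that Pt(0,M) is Kleshchev. Then there exist a matrix L ∈ M(3,e) with wt(L) = 0, an integer m ≥ 0, indices i_1,…,i_m ∈ {1,…,e−1} and integers k_1,…,k_m > 0 such that, in the free ℤ[v,v^{−1}]-module with basis M(3,e), G^{(k_m)}_{i_m} ⋯ G^{(k_1)}_{i_1} [L] = [M] + Σ_{M′ ≠ M} a_{M′}(v) [M′], where every coefficient a_{M′}(v) lies in v·ℕ[v] and every M′ with a_{M′}(v) ≠ 0 lies in D^u. -/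
open scoped Classical

namespace AK
noncomputable section



/-! ### Matrices, order from base tuple, abacus β-sets -/

/-- The order ≺ on columns determined by a base tuple `B`. -/
def prec {e : ℕ} (B : Fin e → ℕ) (i j : Fin e) : Prop :=
  B i < B j ∨ (B i = B j ∧ i < j)

/-- `rank B i = π(B)⁻¹(i)`, the number of columns ≺-smaller than `i`. -/
def rank {e : ℕ} (B : Fin e → ℕ) (i : Fin e) : Fin e :=
  ⟨(Finset.univ.filter (fun j => prec B j i)).card, by
    have h1 : (Finset.univ.filter (fun j => prec B j i)) ⊆ Finset.univ.erase i := by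
      intro j hj
      rw [Finset.mem_filter] at hj
      refine Finset.mem_erase.mpr ⟨?_, Finset.mem_univ j⟩
      rintro rfl
      rcases hj.2 with h | ⟨-, h⟩ <;> exact lt_irrefl _ h
    have h2 := Finset.card_le_card h1
    have h3 : (Finset.univ.erase i).card < Finset.univ.card :=
      Finset.card_erase_lt_of_mem (Finset.mem_univ i)
    simpa using lt_of_le_of_lt h2 h3⟩

/-- The number of beads on runner `i` of the abacus of component `s` of `Pt(B,M)`. -/
def beads {e r : ℕ} (B : Fin e → ℕ) (M : Fin r → Fin e → Bool) (s : Fin r) (i : Fin e) : ℕ :=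
  B i + (if M s (rank B i) then 1 else 0)

/-- The canonical β-set of component `s` of `Pt(B,M)`. -/
def Tset {e r : ℕ} (B : Fin e → ℕ) (M : Fin r → Fin e → Bool) (s : Fin r) : Set ℤ :=
  {z | z < 0 ∨ (0 ≤ z ∧ ∃ h : z.toNat % e < e, z.toNat / e < beads B M s ⟨z.toNat % e, h⟩)}

/-- `n_s`, the total number of beads of component `s`. -/
def nsum {e r : ℕ} (B : Fin e → ℕ) (M : Fin r → Fin e → Bool) (s : Fin r) : ℕ :=
  ∑ i : Fin e, beads B M s i

/-- Decreasing enumeration of a set of integers: `tEnum T x` is `t_{x+1}`. -/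
noncomputable def tEnum (T : Set ℤ) : ℕ → ℤ
  | 0 => sSup T
  | (x + 1) => sSup (T ∩ Set.Iio (tEnum T x))

/-- The multipartition `Pt(B,M)`: component `s`, part `p+1` (0-indexed parts). -/
noncomputable def PtPart {e r : ℕ} (B : Fin e → ℕ) (M : Fin r → Fin e → Bool)
    (s : Fin r) (p : ℕ) : ℕ :=
  (tEnum (Tset B M s) p + (p + 1) - (nsum B M s : ℤ)).toNat

/-- The multicharge of `Pt(B,M)`. -/
noncomputable def PtCharge {e r : ℕ} (B : Fin e → ℕ) (M : Fin r → Fin e → Bool)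
    (s : Fin r) : ZMod e :=
  (nsum B M s : ZMod e)

/-! ### Nodes, good nodes and Kleshchev multipartitions -/

/-- A node `(s, x, y)` (all 0-indexed). -/
abbrev Node (r : ℕ) := Fin r × ℕ × ℕ

/-- `A` is above `B`. -/
def NodeAbove {r : ℕ} (A B : Node r) : Prop :=
  A.1 < B.1 ∨ (A.1 = B.1 ∧ A.2.1 < B.2.1)

/-- The residue of a node. -/
def res {e r : ℕ} (a : Fin r → ZMod e) (A : Node r) : ZMod e :=
  a A.1 - (A.2.1 : ZMod e) + (A.2.2 : ZMod e)

/-- `A` is a removable node of `lam`. -/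
def Removable {r : ℕ} (lam : Fin r → ℕ → ℕ) (A : Node r) : Prop :=
  A.2.2 + 1 = lam A.1 A.2.1 ∧ lam A.1 (A.2.1 + 1) < lam A.1 A.2.1

/-- `A` is an addable node of `lam`. -/
def Addable {r : ℕ} (lam : Fin r → ℕ → ℕ) (A : Node r) : Prop :=
  A.2.2 = lam A.1 A.2.1 ∧ (A.2.1 = 0 ∨ lam A.1 A.2.1 < lam A.1 (A.2.1 - 1))

/-- `A` is a normal node of `lam`. -/
def Normal {e r : ℕ} (a : Fin r → ZMod e) (lam : Fin r → ℕ → ℕ) (A : Node r) : Prop :=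
  Removable lam A ∧
    ∀ B : Node r, Addable lam B → res a B = res a A → NodeAbove A B →
      Set.ncard {C : Node r | Addable lam C ∧ res a C = res a A ∧ NodeAbove A C ∧ NodeAbove C B}
        < Set.ncard {C : Node r | Removable lam C ∧ res a C = res a A ∧ NodeAbove A C ∧ NodeAbove C B}

/-- `A` is a good node of `lam`: normal, and highest among normal nodes of its residue. -/
def Good {e r : ℕ} (a : Fin r → ZMod e) (lam : Fin r → ℕ → ℕ) (A : Node r) : Prop :=
  Normal a lam A ∧ ∀ B : Node r, Normal a lam B → res a B = res a A → B ≠ A → NodeAbove A B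

/-- Remove the node `A` from `lam`. -/
def removeNode {r : ℕ} (lam : Fin r → ℕ → ℕ) (A : Node r) : Fin r → ℕ → ℕ :=
  fun s x => if s = A.1 ∧ x = A.2.1 then lam s x - 1 else lam s x

/-- Kleshchev multipartitions (for the multicharge `a`). -/
inductive IsKleshchev {e r : ℕ} (a : Fin r → ZMod e) : (Fin r → ℕ → ℕ) → Prop
  | empty : IsKleshchev a (fun _ _ => 0)
  | step (lam : Fin r → ℕ → ℕ) (A : Node r) (hA : Good a lam A)
      (h : IsKleshchev a (removeNode lam A)) : IsKleshchev a lam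

/-! ### Weights and bead swaps -/

/-- `δ₊^M(t,s)`. -/
def deltaP {e r : ℕ} (M : Fin r → Fin e → Bool) (t s : Fin r) : ℕ :=
  (Finset.univ.filter (fun i => M t i = true ∧ M s i = false)).card

/-- `wt^M(t,s)`. -/
def wtPair {e r : ℕ} (M : Fin r → Fin e → Bool) (t s : Fin r) : ℕ :=
  min (deltaP M t s) (deltaP M s t)

/-- `wt(M)`. -/
def wtM {e r : ℕ} (M : Fin r → Fin e → Bool) : ℕ :=
  ∑ t : Fin r, ∑ s ∈ Finset.univ.filter (· < t), wtPair M t s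

/-- `M'` is obtained from `M` by a bead swap. -/
def BeadSwap {e r : ℕ} (M M' : Fin r → Fin e → Bool) : Prop :=
  ∃ i j : Fin e, i ≠ j ∧ ∃ s t : Fin r, s ≠ t ∧
    M s i = true ∧ M t j = true ∧ M s j = false ∧ M t i = false ∧
    M' s i = false ∧ M' t j = false ∧ M' s j = true ∧ M' t i = true ∧
    (∀ s' i', (s' ≠ s ∧ s' ≠ t) ∨ (i' ≠ i ∧ i' ≠ j) → M' s' i' = M s' i')




/-! ### The families `α^u_k`, `β^u_l`, `γ^u_{kl}` for `r = 3` -/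

def xcol : Fin 6 → Fin 3 → Bool := fun _ => ![false, false, false]

def ycol : Fin 6 → Fin 3 → Bool :=
  ![![false,true,true], ![true,false,false], ![true,true,false],
    ![false,false,true], ![false,true,true], ![true,false,false]]

def zcol : Fin 6 → Fin 3 → Bool :=
  ![![false,false,true], ![true,false,true], ![false,true,false],
    ![true,false,true], ![false,true,false], ![true,true,false]]

def oycol : Fin 6 → Fin 3 → Bool :=
  ![![true,false,true], ![false,false,true], ![false,true,true],
    ![true,false,false], ![true,true,false], ![false,true,false]]

def ozcol : Fin 6 → Fin 3 → Bool :=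
  ![![false,true,false], ![true,true,false], ![true,false,false],
    ![false,true,true], ![false,false,true], ![true,false,true]]

def aacol : Fin 6 → Fin 3 → Bool :=
  ![![true,true,false], ![false,true,false], ![true,false,true],
    ![false,true,false], ![true,false,true], ![false,false,true]]

def abcol : Fin 6 → Fin 3 → Bool :=
  ![![true,false,false], ![false,true,true], ![false,false,true],
    ![true,true,false], ![true,false,false], ![false,true,true]]

variable {e : ℕ}

/-- The matrix `α^u_k`. -/
def alphaM (Y Z : Finset (Fin e)) {y : ℕ} (hY : Y.card = y + 1) (u : Fin 6)
    (k : Fin (y + 1)) : Fin 3 → Fin e → Bool :=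
  fun s c =>
    if c = Y.orderEmbOfFin hY k then aacol u s
    else if c ∈ Y then ycol u s
    else if c ∈ Z then zcol u s
    else false

/-- The matrix `β^u_l`. -/
def betaM (Y Z : Finset (Fin e)) {z : ℕ} (hZ : Z.card = z + 1) (u : Fin 6)
    (l : Fin (z + 1)) : Fin 3 → Fin e → Bool :=
  fun s c =>
    if c = Z.orderEmbOfFin hZ l then abcol u s
    else if c ∈ Z then zcol u s
    else if c ∈ Y then ycol u s
    else false

/-- The matrix `γ^u_{kl}`. -/
def gammaM (Y Z : Finset (Fin e)) {y z : ℕ} (hY : Y.card = y + 1) (hZ : Z.card = z + 1)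
    (u : Fin 6) (k : Fin (y + 1)) (l : Fin (z + 1)) : Fin 3 → Fin e → Bool :=
  fun s c =>
    if c = Y.orderEmbOfFin hY k then oycol u s
    else if c = Z.orderEmbOfFin hZ l then ozcol u s
    else if c ∈ Y then ycol u s
    else if c ∈ Z then zcol u s
    else false

/-- The set `D^u` of matrices in the block. -/
def Duset (Y Z : Finset (Fin e)) {y z : ℕ} (hY : Y.card = y + 1) (hZ : Z.card = z + 1)
    (u : Fin 6) : Set (Fin 3 → Fin e → Bool) :=
  {A | (∃ k, A = alphaM Y Z hY u k) ∨ (∃ l, A = betaM Y Z hZ u l) ∨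
       (∃ k l, A = gammaM Y Z hY hZ u k l)}


/-! ### The operators `G^{(k)}_i` on the free `ℤ[v,v⁻¹]`-module with basis `M(r,e)` -/

/-- The column `i - 1`. -/
def colPred {e : ℕ} (i : Fin e) : Fin e :=
  ⟨i.1 - 1, Nat.lt_of_le_of_lt (Nat.sub_le _ _) i.isLt⟩

/-- `L →(i,k) M`: move `k` ones from column `i-1` to column `i`. -/
def GArrow {e r : ℕ} (i : Fin e) (k : ℕ) (L M : Fin r → Fin e → Bool) : Prop :=
  ∃ S : Finset (Fin r), S.card = k ∧
    (∀ s ∈ S, L s (colPred i) = true ∧ L s i = false) ∧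
    M = fun s c => if s ∈ S ∧ (c = colPred i ∨ c = i) then !(L s c) else L s c

/-- `N_i(L,M)` for `L →(i,k) M`. -/
def Nval {e r : ℕ} (i : Fin e) (L M : Fin r → Fin e → Bool) : ℤ :=
  ∑ a ∈ Finset.univ.filter (fun a : Fin r => ¬(L a i = M a i)),
    (((Finset.univ.filter
        (fun s : Fin r => a < s ∧ M s (colPred i) = true ∧ M s i = false)).card : ℤ)
      - ((Finset.univ.filter
        (fun s : Fin r => a < s ∧ L s (colPred i) = false ∧ L s i = true)).card : ℤ))

/-- The free `ℤ[v,v⁻¹]`-module on the set of `r × e` matrices. -/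
abbrev FM (r e : ℕ) := (Fin r → Fin e → Bool) →₀ LaurentPolynomial ℤ

/-- The operator `G^{(k)}_i`. -/
def Gop {e r : ℕ} (i : Fin e) (k : ℕ) (f : FM r e) : FM r e :=
  f.sum fun L c =>
    ∑ M ∈ Finset.univ.filter (fun M => GArrow i k L M),
      Finsupp.single M (c * LaurentPolynomial.T (Nval i L M))

/-- `G^{(k_m)}_{i_m} ⋯ G^{(k_1)}_{i_1}`, applied in order of the list. -/
def GopList {e r : ℕ} (ops : List (Fin e × ℕ)) (f : FM r e) : FM r e :=
  ops.foldl (fun g p => Gop p.1 p.2 g) f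

/-- Membership in `ℕ[v, v⁻¹]` (nonnegative Laurent polynomials). -/
def IsNNLaurent (a : LaurentPolynomial ℤ) : Prop :=
  ∃ f : ℤ →₀ ℕ, a = f.sum fun n c => (c : LaurentPolynomial ℤ) * LaurentPolynomial.T n

/-- Membership in `v·ℕ[v]`. -/
def IsVNPoly (a : LaurentPolynomial ℤ) : Prop :=
  ∃ f : ℤ →₀ ℕ, (∀ n ∈ f.support, 1 ≤ n) ∧
    a = f.sum fun n c => (c : LaurentPolynomial ℤ) * LaurentPolynomial.T n

/-!
Read a matrix as a word of columns, each a set of rows. If, in every term of an element, one of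
two adjacent columns contains the other and the difference has constant positive size, then a
single operator exchanges these columns and introduces no new terms. Starting from columns that
form a chain, which have weight `0`, at most three operators that do produce new terms, acting on
two, three or four columns, suffice to create `[M]` together with its lower order terms in `D^u`;
every other column is then moved to its place by exchanges.

After permuting its rows and possibly exchanging `Y` and `Z`, a matrix in `D^u` is determined by two
marks, and it can be created in this way if certain labels exist to the left or to the right of the
marks. To find them, count the entries `1` to the left of each column in each row. Moving beads back
along a sequence of removals of good nodes preserves inequalities between these counts for
consecutive rows, and in the absence of the labels these inequalities fail at the marks.
-/

/-! ### Families of columns -/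

section Families

variable {ι : Type*} {r : ℕ}

/-- The `0`-`1` matrix whose `c`-th column is the indicator function of `w c`. -/
def matrixOf {e : ℕ} (w : Fin e → Finset (Fin r)) : Fin r → Fin e → Bool :=
  fun s c => decide (s ∈ w c)

/-- A finite sum of monomials `v ^ n [w]`, where `w` assigns a column, encoded as a set of rows, to
each label; keeping labels apart from positions lets columns be permuted without rewriting `w`. -/
abbrev Family (ι : Type*) (r : ℕ) := Multiset ((ι → Finset (Fin r)) × ℤ)

lemma matrixOf_injective {e : ℕ} :
    Function.Injective (matrixOf : (Fin e → Finset (Fin r)) → Fin r → Fin e → Bool) := by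
  intro w w' h
  ext c s
  simpa [matrixOf] using congrFun (congrFun h s) c

/-- The element of the Fock space module described by a family, once labels are arranged in
positions by `ρ`. -/
def vec {e : ℕ} (ρ : Fin e ≃ ι) (F : Family ι r) : FM r e :=
  (F.map fun t => Finsupp.single (matrixOf (t.1 ∘ ρ)) (LaurentPolynomial.T t.2)).sum

lemma vec_cons {e : ℕ} (ρ : Fin e ≃ ι) (t : (ι → Finset (Fin r)) × ℤ) (F : Family ι r) :
    vec ρ (t ::ₘ F) =
      Finsupp.single (matrixOf (t.1 ∘ ρ)) (LaurentPolynomial.T t.2) + vec ρ F := by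
  simp [vec]

lemma vec_add {e : ℕ} (ρ : Fin e ≃ ι) (F F' : Family ι r) :
    vec ρ (F + F') = vec ρ F + vec ρ F' := by
  simp [vec]

/-- The exponent `N_i` of the step moving the beads in the rows `S` from column `a` to the next
column `b`. -/
def moveExponent (S a b : Finset (Fin r)) : ℤ :=
  ∑ s ∈ S, ((((a \ b) \ S).filter (s < ·)).card - ((b \ a).filter (s < ·)).card : ℤ)

variable [DecidableEq ι]

/-- Move the beads in the rows `S` from the column labelled `a` to the one labelled `b`. -/
def moveRows (a b : ι) (S : Finset (Fin r)) (w : ι → Finset (Fin r)) : ι → Finset (Fin r) :=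
  Function.update (Function.update w a (w a \ S)) b (w b ∪ S)

/-- The operator `G^{(k)}` for the adjacent columns labelled `a` and `b`. -/
def moveBeads (a b : ι) (k : ℕ) (F : Family ι r) : Family ι r :=
  F.bind fun t => ((t.1 a \ t.1 b).powersetCard k).val.map fun S =>
    (moveRows a b S t.1, t.2 + moveExponent S (t.1 a) (t.1 b))

lemma colPred_ne {e : ℕ} {i : Fin e} (hi : i.1 ≠ 0) : colPred i ≠ i :=
  fun h => by have := congrArg Fin.val h; simp only [colPred] at this; omega

lemma moveRows_apply_left {a b : ι} (hab : a ≠ b) (S : Finset (Fin r)) (w : ι → Finset (Fin r)) :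
    moveRows a b S w a = w a \ S := by
  simp [moveRows, hab]

lemma moveRows_apply_right (a b : ι) (S : Finset (Fin r)) (w : ι → Finset (Fin r)) :
    moveRows a b S w b = w b ∪ S := by
  simp [moveRows]

lemma moveRows_apply_of_ne {a b c : ι} (ha : c ≠ a) (hb : c ≠ b) (S : Finset (Fin r))
    (w : ι → Finset (Fin r)) : moveRows a b S w c = w c := by
  simp [moveRows, ha, hb]

lemma moveRows_comp {e : ℕ} (ρ : Fin e ≃ ι) (p i : Fin e) (S : Finset (Fin r))
    (w : ι → Finset (Fin r)) : moveRows (ρ p) (ρ i) S w ∘ ρ = moveRows p i S (w ∘ ρ) := by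
  unfold moveRows
  rw [Function.update_comp_eq_of_injective _ ρ.injective,
    Function.update_comp_eq_of_injective _ ρ.injective]
  rfl

lemma gArrow_matrixOf_iff {e : ℕ} {i : Fin e} (hi : i.1 ≠ 0) (k : ℕ) (w : Fin e → Finset (Fin r))
    (M : Fin r → Fin e → Bool) :
    GArrow i k (matrixOf w) M ↔
      ∃ S ∈ (w (colPred i) \ w i).powersetCard k, matrixOf (moveRows (colPred i) i S w) = M := by
  have hp := colPred_ne hi
  have key : ∀ S ⊆ w (colPred i) \ w i, matrixOf (moveRows (colPred i) i S w) =
      fun s c => if s ∈ S ∧ (c = colPred i ∨ c = i) then !(matrixOf w s c) else matrixOf w s c := by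
    intro S hS
    ext s c
    have hs : s ∈ S → s ∈ w (colPred i) ∧ s ∉ w i := fun h => Finset.mem_sdiff.mp (hS h)
    rcases eq_or_ne c i with rfl | hci
    · by_cases h : s ∈ S <;> simp_all [matrixOf, moveRows_apply_right]
    rcases eq_or_ne c (colPred i) with rfl | hcp
    · by_cases h : s ∈ S <;> simp_all [matrixOf, moveRows_apply_left]
    · simp [matrixOf, moveRows_apply_of_ne hcp hci, hcp, hci]
  constructor
  · rintro ⟨S, hcard, hS, rfl⟩
    have hsub : S ⊆ w (colPred i) \ w i := fun s hs => by simpa [matrixOf] using hS s hs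
    exact ⟨S, Finset.mem_powersetCard.mpr ⟨hsub, hcard⟩, key S hsub⟩
  · rintro ⟨S, hS, rfl⟩
    obtain ⟨hsub, hcard⟩ := Finset.mem_powersetCard.mp hS
    exact ⟨S, hcard, fun s hs => by simpa [matrixOf] using hsub hs, key S hsub⟩

lemma nval_matrixOf_moveRows {e : ℕ} {i : Fin e} (hi : i.1 ≠ 0) {w : Fin e → Finset (Fin r)}
    {S : Finset (Fin r)} (hS : S ⊆ w (colPred i) \ w i) :
    Nval i (matrixOf w) (matrixOf (moveRows (colPred i) i S w)) =
      moveExponent S (w (colPred i)) (w i) := by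
  unfold Nval moveExponent
  refine Finset.sum_congr ?_ fun a _ => ?_
  · ext s
    have hs : s ∈ S → s ∉ w i := fun h => (Finset.mem_sdiff.mp (hS h)).2
    by_cases h : s ∈ S <;> by_cases h' : s ∈ w i <;>
      simp_all [matrixOf, moveRows_apply_right]
  · congr 3 <;> ext s <;>
      simp [matrixOf, moveRows_apply_right, moveRows_apply_left (colPred_ne hi)] <;> tauto

lemma moveRows_injOn {a b : ι} (hab : a ≠ b) (w : ι → Finset (Fin r)) :
    Set.InjOn (fun S => moveRows a b S w) {S | S ⊆ w a} := by
  intro S hS T hT h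
  have h' := congrFun h a
  simp only [moveRows_apply_left hab] at h'
  rw [← Finset.sdiff_sdiff_eq_self hS, h', Finset.sdiff_sdiff_eq_self hT]

lemma gop_single_matrixOf {e : ℕ} {i : Fin e} (hi : i.1 ≠ 0) (k : ℕ) (w : Fin e → Finset (Fin r))
    (c : LaurentPolynomial ℤ) :
    Gop i k (Finsupp.single (matrixOf w) c) =
      ∑ S ∈ (w (colPred i) \ w i).powersetCard k,
        Finsupp.single (matrixOf (moveRows (colPred i) i S w))
          (c * LaurentPolynomial.T (moveExponent S (w (colPred i)) (w i))) := by
  unfold Gop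
  rw [Finsupp.sum_single_index (by simp)]
  have himage : Finset.univ.filter (fun M => GArrow i k (matrixOf w) M) =
      ((w (colPred i) \ w i).powersetCard k).image
        fun S => matrixOf (moveRows (colPred i) i S w) := by
    ext M
    simp [gArrow_matrixOf_iff hi]
  rw [himage, Finset.sum_image]
  · refine Finset.sum_congr rfl fun S hS => ?_
    rw [nval_matrixOf_moveRows hi (Finset.mem_powersetCard.mp hS).1]
  · intro S hS T hT h
    have hsub : ∀ U ∈ (w (colPred i) \ w i).powersetCard k, U ⊆ w (colPred i) :=
      fun U hU => (Finset.mem_powersetCard.mp hU).1.trans Finset.sdiff_subset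
    exact moveRows_injOn (colPred_ne hi) w (hsub S hS) (hsub T hT) (matrixOf_injective h)

lemma gop_add {e : ℕ} (i : Fin e) (k : ℕ) (f g : FM r e) :
    Gop i k (f + g) = Gop i k f + Gop i k g := by
  unfold Gop
  exact Finsupp.sum_add_index' (by simp) fun L c d => by
    simp [add_mul, Finsupp.single_add, Finset.sum_add_distrib]

lemma moveBeads_cons (a b : ι) (k : ℕ) (t : (ι → Finset (Fin r)) × ℤ) (F : Family ι r) :
    moveBeads a b k (t ::ₘ F) = (((t.1 a \ t.1 b).powersetCard k).val.map fun S =>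
      (moveRows a b S t.1, t.2 + moveExponent S (t.1 a) (t.1 b))) + moveBeads a b k F :=
  Multiset.cons_bind _ _ _

lemma gop_vec {e : ℕ} (ρ : Fin e ≃ ι) {i : Fin e} (hi : i.1 ≠ 0) (k : ℕ) (F : Family ι r) :
    Gop i k (vec ρ F) = vec ρ (moveBeads (ρ (colPred i)) (ρ i) k F) := by
  induction F using Multiset.induction with
  | empty => simp [vec, Gop, moveBeads]
  | cons t F ih =>
    rw [vec_cons, gop_add, ih, gop_single_matrixOf hi, moveBeads_cons, vec_add]
    congr 1
    simp only [vec, Multiset.map_map, Function.comp_apply, moveRows_comp,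
      LaurentPolynomial.T_add, Finset.sum_map_val]

end Families

section Attainable

variable {ι : Type*} {r : ℕ}

/-- The family `F` is obtained from a matrix of weight `0` by a sequence of operators `G^{(k)}_i`
when the labels are arranged from left to right as in the word `W`. -/
def Attainable (W : List ι) (F : Family ι r) : Prop :=
  ∀ ⦃e : ℕ⦄ (ρ : Fin e ≃ ι), List.ofFn ρ = W → ∃ L : Fin r → Fin e → Bool, wtM L = 0 ∧
    ∃ ops : List (Fin e × ℕ), (∀ p ∈ ops, p.1.1 ≠ 0 ∧ 0 < p.2) ∧
      GopList ops (Finsupp.single L 1) = vec ρ F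

/-- In every term of `F` the column labelled `a` properly contains the one labelled `b`, the
difference having constant size, so that exchanging the contents of these columns is a single
operator with no lower order terms. -/
def Dominates (F : Family ι r) (a b : ι) : Prop :=
  ∃ k, 0 < k ∧ ∀ t ∈ F, t.1 b ⊆ t.1 a ∧ (t.1 a).card = (t.1 b).card + k

lemma wtM_matrixOf_eq_zero {e : ℕ} {w : Fin e → Finset (Fin r)}
    (hw : ∀ i j, w i ⊆ w j ∨ w j ⊆ w i) : wtM (matrixOf w) = 0 := by
  have empty_of : ∀ s t : Fin r, ¬ (∃ i, s ∈ w i ∧ t ∉ w i) → deltaP (matrixOf w) s t = 0 := by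
    intro s t h
    simpa [deltaP, matrixOf, Finset.filter_eq_empty_iff] using h
  refine Finset.sum_eq_zero fun t _ => Finset.sum_eq_zero fun s _ => ?_
  by_cases hts : ∃ i, t ∈ w i ∧ s ∉ w i
  · have hst : ¬ ∃ j, s ∈ w j ∧ t ∉ w j := by
      obtain ⟨i, hti, hsi⟩ := hts
      rintro ⟨j, hsj, htj⟩
      exact (hw i j).elim (fun h => htj (h hti)) fun h => hsi (h hsj)
    rw [wtPair, empty_of s t hst, min_zero]
  · rw [wtPair, empty_of t s hts, zero_min]

lemma Attainable.of_chain (W : List ι) {w : ι → Finset (Fin r)}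
    (hw : ∀ x y, w x ⊆ w y ∨ w y ⊆ w x) : Attainable W ({(w, 0)} : Family ι r) := by
  intro e ρ _
  exact ⟨matrixOf (w ∘ ρ), wtM_matrixOf_eq_zero fun i j => hw (ρ i) (ρ j), [], by simp,
    by simp [GopList, vec]⟩

lemma Attainable.of_nodup {W : List ι} {F : Family ι r} (h : W.Nodup → Attainable W F) :
    Attainable W F := by
  intro e ρ hρ
  exact h (hρ ▸ List.nodup_ofFn.mpr ρ.injective) ρ hρ

lemma exists_adjacent_positions {e : ℕ} {ρ : Fin e ≃ ι} {A B : List ι} {a b : ι}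
    (hρ : List.ofFn ρ = A ++ a :: b :: B) :
    ∃ i : Fin e, i.1 ≠ 0 ∧ ρ (colPred i) = a ∧ ρ i = b := by
  have hlen : e = A.length + (B.length + 1 + 1) := by simpa using congrArg List.length hρ
  have hval : ∀ n (h : n < e), some (ρ ⟨n, h⟩) = (A ++ a :: b :: B)[n]? := by
    intro n h
    simp [← hρ, h]
  refine ⟨⟨A.length + 1, by omega⟩, by simp, ?_, ?_⟩
  · simpa [colPred] using hval A.length (by omega)
  · simpa using hval (A.length + 1) (by omega)

lemma gopList_concat {e : ℕ} (ops : List (Fin e × ℕ)) (i : Fin e) (k : ℕ) (f : FM r e) :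
    GopList (ops ++ [(i, k)]) f = Gop i k (GopList ops f) := by
  simp [GopList]

variable [DecidableEq ι]

lemma Attainable.moveBeads {A B : List ι} {a b : ι} {F : Family ι r} {k : ℕ} (hk : 0 < k)
    (h : Attainable (A ++ a :: b :: B) F) :
    Attainable (A ++ a :: b :: B) (moveBeads a b k F) := by
  intro e ρ hρ
  obtain ⟨L, hL, ops, hops, hvec⟩ := h ρ hρ
  obtain ⟨i, hi, rfl, rfl⟩ := exists_adjacent_positions hρ
  refine ⟨L, hL, ops ++ [(i, k)], ?_, ?_⟩
  · simpa [or_imp, forall_and, hi, hk] using hops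
  · rw [gopList_concat, hvec, gop_vec ρ hi]

lemma moveRows_sdiff {a b : ι} {w : ι → Finset (Fin r)} (h : w b ⊆ w a) :
    moveRows a b (w a \ w b) w = w ∘ Equiv.swap a b := by
  ext1 x
  rcases eq_or_ne x b with rfl | hb
  · rw [moveRows_apply_right, Finset.union_sdiff_of_subset h]; simp
  rcases eq_or_ne x a with rfl | ha
  · rw [moveRows_apply_left hb, Finset.sdiff_sdiff_eq_self h]; simp
  · rw [moveRows_apply_of_ne ha hb, Function.comp_apply, Equiv.swap_apply_of_ne_of_ne ha hb]

lemma moveBeads_of_sdiff_card {a b : ι} {k : ℕ} {F : Family ι r}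
    (h : ∀ t ∈ F, t.1 b ⊆ t.1 a ∧ (t.1 a).card = (t.1 b).card + k) :
    moveBeads a b k F = F.map fun t => (t.1 ∘ Equiv.swap a b, t.2) := by
  rw [← Multiset.bind_singleton]
  refine Multiset.bind_congr fun t ht => ?_
  obtain ⟨hsub, hcard⟩ := h t ht
  have hk : k = (t.1 a \ t.1 b).card := by rw [Finset.card_sdiff_of_subset hsub]; omega
  simp [hk, Finset.powersetCard_self, moveRows_sdiff hsub, moveExponent,
    Finset.sdiff_eq_empty_iff_subset.mpr hsub]

lemma map_swap_append_cons_cons {A B : List ι} {a b : ι} (h : (A ++ b :: a :: B).Nodup) :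
    (A ++ b :: a :: B).map (Equiv.swap a b) = A ++ a :: b :: B := by
  have hfix : ∀ C : List ι, a ∉ C → b ∉ C → C.map (Equiv.swap a b) = C := fun C ha hb =>
    (List.map_congr_left fun x hx => Equiv.swap_apply_of_ne_of_ne (ne_of_mem_of_not_mem hx ha)
      (ne_of_mem_of_not_mem hx hb)).trans (List.map_id C)
  simp only [List.nodup_append, List.nodup_cons, List.mem_cons, not_or] at h
  obtain ⟨-, ⟨⟨-, hbB⟩, haB, -⟩, hA⟩ := h
  rw [List.map_append, hfix A (fun ha => hA a ha a (by simp) rfl)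
      (fun hb => hA b hb b (by simp) rfl), List.map_cons, List.map_cons, hfix B haB hbB,
    Equiv.swap_apply_left, Equiv.swap_apply_right]

end Attainable

section Rules

variable {ι : Type*} {r : ℕ} {F : Family ι r}

lemma Attainable.swap {A B : List ι} {a b : ι} (hdom : Dominates F a b)
    (h : Attainable (A ++ a :: b :: B) F) : Attainable (A ++ b :: a :: B) F := by
  classical
  intro e ρ hρ
  obtain ⟨k, hk, hF⟩ := hdom
  have hρ' : List.ofFn (ρ.trans (Equiv.swap a b)) = A ++ a :: b :: B := by
    rw [Equiv.coe_trans, ← List.map_ofFn, hρ]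
    exact map_swap_append_cons_cons (hρ ▸ List.nodup_ofFn.mpr ρ.injective)
  obtain ⟨L, hL, ops, hops, hvec⟩ := h.moveBeads hk _ hρ'
  refine ⟨L, hL, ops, hops, hvec.trans ?_⟩
  rw [moveBeads_of_sdiff_card hF]
  simp [vec, Function.comp_assoc, ← Equiv.coe_trans, Equiv.trans_assoc]

lemma Attainable.pull_left {A C : List ι} {b : ι} (B : List ι) (hdom : ∀ x ∈ B, Dominates F x b)
    (h : Attainable (A ++ B ++ b :: C) F) : Attainable (A ++ b :: B ++ C) F := by
  induction B using List.reverseRecOn generalizing C with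
  | nil => simpa using h
  | append_singleton B x ih =>
    have h' : Attainable (A ++ B ++ b :: x :: C) F :=
      Attainable.swap (hdom x (by simp)) (by simpa using h)
    simpa using ih (fun y hy => hdom y (by simp [hy])) h'

lemma Attainable.push_right {A C : List ι} {a : ι} (B : List ι) (hdom : ∀ x ∈ B, Dominates F a x)
    (h : Attainable (A ++ a :: B ++ C) F) : Attainable (A ++ B ++ a :: C) F := by
  induction B generalizing A with
  | nil => simpa using h
  | cons x B ih =>
    have h' : Attainable (A ++ x :: a :: (B ++ C)) F :=
      Attainable.swap (hdom x (by simp)) (by simpa using h)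
    simpa using ih (A := A ++ [x]) (fun y hy => hdom y (by simp [hy])) (by simpa using h')

lemma Attainable.of_filter (p : ι → Prop) [DecidablePred p]
    (hdom : ∀ x y, p x → ¬ p y → Dominates F x y) (A W : List ι)
    (h : Attainable (A ++ (W.filter p ++ W.filter (¬ p ·))) F) : Attainable (A ++ W) F := by
  induction W generalizing A with
  | nil => simpa using h
  | cons x W ih =>
    suffices h' : Attainable ((A ++ [x]) ++ (W.filter p ++ W.filter (¬ p ·))) F by
      simpa using ih _ h'
    by_cases hx : p x
    · simpa [hx] using h
    · have h' := Attainable.pull_left (A := A) (b := x) (C := W.filter (¬ p ·)) (W.filter p)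
        (fun y hy => hdom y x (by simpa using (List.mem_filter.mp hy).2) hx)
        (by simpa [hx] using h)
      simpa using h'

end Rules

section Extension

variable {ι κ : Type*} {r : ℕ}

/-- Insert a family of columns at the labels `pos j`, all other columns being those of `base`. -/
def extendFamily (pos : κ → ι) (base : ι → Finset (Fin r)) (F : Family κ r) : Family ι r :=
  F.map fun t => (Function.extend pos t.1 base, t.2)

lemma dominates_extendFamily_left {pos : κ → ι} (hpos : Function.Injective pos)
    {base : ι → Finset (Fin r)} {F : Family κ r} {x : ι} (hx : x ∉ Set.range pos) {j : κ}
    (h : ∃ k, 0 < k ∧ ∀ t ∈ F, t.1 j ⊆ base x ∧ (base x).card = (t.1 j).card + k) :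
    Dominates (extendFamily pos base F) x (pos j) := by
  obtain ⟨k, hk, hF⟩ := h
  refine ⟨k, hk, fun t ht => ?_⟩
  obtain ⟨t', ht', rfl⟩ := Multiset.mem_map.mp ht
  simpa [hpos.extend_apply, Function.extend_apply' _ _ _ hx] using hF t' ht'

lemma dominates_extendFamily_right {pos : κ → ι} (hpos : Function.Injective pos)
    {base : ι → Finset (Fin r)} {F : Family κ r} {x : ι} (hx : x ∉ Set.range pos) {j : κ}
    (h : ∃ k, 0 < k ∧ ∀ t ∈ F, base x ⊆ t.1 j ∧ (t.1 j).card = (base x).card + k) :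
    Dominates (extendFamily pos base F) (pos j) x := by
  obtain ⟨k, hk, hF⟩ := h
  refine ⟨k, hk, fun t ht => ?_⟩
  obtain ⟨t', ht', rfl⟩ := Multiset.mem_map.mp ht
  simpa [hpos.extend_apply, Function.extend_apply' _ _ _ hx] using hF t' ht'

/-- The family is `[w]` plus terms `v ^ n [w']` with `n > 0` and `w' ≠ w` satisfying `D`. -/
def IsUnitriangular (D : (ι → Finset (Fin r)) → Prop) (w : ι → Finset (Fin r))
    (F : Family ι r) : Prop :=
  ∃ F' : Family ι r, F = (w, 0) ::ₘ F' ∧ ∀ t ∈ F', t.1 ≠ w ∧ 0 < t.2 ∧ D t.1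

lemma IsUnitriangular.extendFamily {pos : κ → ι} (hpos : Function.Injective pos)
    {base : ι → Finset (Fin r)} {D : (κ → Finset (Fin r)) → Prop} {D' : (ι → Finset (Fin r)) → Prop}
    (hD : ∀ w, D w → D' (Function.extend pos w base)) {w : κ → Finset (Fin r)} {F : Family κ r}
    (h : IsUnitriangular D w F) :
    IsUnitriangular D' (Function.extend pos w base) (extendFamily pos base F) := by
  obtain ⟨F', rfl, hF'⟩ := h
  refine ⟨AK.extendFamily pos base F', Multiset.map_cons _ _ _, fun t ht => ?_⟩
  obtain ⟨t', ht', rfl⟩ := Multiset.mem_map.mp ht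
  obtain ⟨hne, hexp, hDt⟩ := hF' t' ht'
  exact ⟨fun heq => hne (Function.extend_injective hpos base heq), hexp, hD _ hDt⟩

variable [DecidableEq ι]

instance [Fintype ι] (D : (ι → Finset (Fin r)) → Prop) [DecidablePred D] (w : ι → Finset (Fin r))
    (F : Family ι r) : Decidable (IsUnitriangular D w F) :=
  decidable_of_iff ((w, 0) ∈ F ∧ ∀ t ∈ F.erase (w, 0), t.1 ≠ w ∧ 0 < t.2 ∧ D t.1)
    ⟨fun h => ⟨F.erase (w, 0), (Multiset.cons_erase h.1).symm, h.2⟩, by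
      rintro ⟨F', rfl, hF'⟩
      simpa using hF'⟩

variable [DecidableEq κ]

lemma extend_update {pos : κ → ι} (hpos : Function.Injective pos) (base : ι → Finset (Fin r))
    (w : κ → Finset (Fin r)) (a : κ) (S : Finset (Fin r)) :
    Function.extend pos (Function.update w a S) base =
      Function.update (Function.extend pos w base) (pos a) S := by
  ext1 x
  by_cases hx : ∃ j, pos j = x
  · obtain ⟨j, rfl⟩ := hx
    rw [hpos.extend_apply]
    rcases eq_or_ne j a with rfl | hja
    · simp
    · rw [Function.update_of_ne hja, Function.update_of_ne (hpos.ne hja), hpos.extend_apply]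
  · rw [Function.extend_apply' _ _ _ hx, Function.update_of_ne (fun h => hx ⟨a, h.symm⟩),
      Function.extend_apply' _ _ _ hx]

lemma moveBeads_extendFamily {pos : κ → ι} (hpos : Function.Injective pos)
    (base : ι → Finset (Fin r)) (a b : κ) (k : ℕ) (F : Family κ r) :
    moveBeads (pos a) (pos b) k (extendFamily pos base F) =
      extendFamily pos base (moveBeads a b k F) := by
  simp only [moveBeads, extendFamily, Multiset.bind_map, Multiset.map_bind, Multiset.map_map,
    Function.comp_def, moveRows, extend_update hpos, hpos.extend_apply]

end Extension

/-! ### The matrices of `D^u` as marked partitions -/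

section MarkedColumns

variable {ι κ : Type*} [DecidableEq ι] [DecidableEq κ]

/-- The role played by each row in the matrices of `D^u`. Once rows are permuted by `role u`, these
matrices are the same for all `u`; this is what allows a uniform treatment. -/
def role : Fin 6 → Fin 3 → Fin 3 :=
  ![![0, 1, 2], ![2, 0, 1], ![1, 2, 0], ![1, 0, 2], ![0, 2, 1], ![2, 1, 0]]

/-- The row of each role in the matrix with marks `c` and `h`: the row of role `0` is `{c}`, and the
one of role `2` is `P ∪ Q` with `h` removed. Here `P` and `Q` are `Y` and `Z` in the order in which
the columns in `P` have two entries `1` and those in `Q` only one. -/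
def markedRow (P Q : Finset ι) (c h : ι) : Fin 3 → Finset ι :=
  ![{c}, if c ∈ P then insert h (P.erase c) else P, (P ∪ Q).erase h]

/-- The columns of the matrix in `D^u` with marks `c` and `h`. -/
def markedColumns (u : Fin 6) (P Q : Finset ι) (c h x : ι) : Finset (Fin 3) :=
  Finset.univ.filter fun s => x ∈ markedRow P Q c h (role u s)

/-- The pairs of marks that occur in `D^u`. Matrices of type `α` and `β` have `c = h` in `P` and `Q`
or vice versa, while those of type `γ` have `c ∈ P` and `h ∈ Q`. -/
def ValidMarks (P Q : Finset ι) (c h : ι) : Prop :=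
  (c = h ∧ (c ∈ P ∨ c ∈ Q)) ∨ (c ∈ P ∧ h ∈ Q)

instance (P Q : Finset ι) (c h : ι) : Decidable (ValidMarks P Q c h) :=
  inferInstanceAs (Decidable (_ ∨ _))

/-- The columns of a matrix in `D^u`. -/
def IsMarked (u : Fin 6) (P Q : Finset ι) (w : ι → Finset (Fin 3)) : Prop :=
  ∃ c h, ValidMarks P Q c h ∧ w = markedColumns u P Q c h

instance [Fintype ι] (u : Fin 6) (P Q : Finset ι) : DecidablePred (IsMarked u P Q) :=
  fun w => inferInstanceAs (Decidable (∃ c h, ValidMarks P Q c h ∧ w = markedColumns u P Q c h))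

/-- The unmarked column of a label in `P`. -/
def colP (u : Fin 6) : Finset (Fin 3) := Finset.univ.filter fun s => role u s ≠ 0

/-- The unmarked column of a label in `Q`. -/
def colQ (u : Fin 6) : Finset (Fin 3) := Finset.univ.filter fun s => role u s = 2

/-- The columns without any marks. -/
def plainColumns (u : Fin 6) (P Q : Finset ι) (x : ι) : Finset (Fin 3) :=
  if x ∈ P then colP u else if x ∈ Q then colQ u else ∅

/-- A maximal chain of columns containing the unmarked ones. -/
def flag (u : Fin 6) : Finset (Finset (Fin 3)) := {Finset.univ, colP u, colQ u, ∅}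

lemma sum_comp_role {M : Type*} [AddCommMonoid M] (u : Fin 6) (f : Fin 3 → M) :
    ∑ s, f (role u s) = f 0 + f 1 + f 2 := by
  have hbij : Function.Bijective (role u) := by revert u; decide
  rw [hbij.sum_comp, Fin.sum_univ_three]

lemma card_markedColumns {P Q : Finset ι} (hPQ : Disjoint P Q) (u : Fin 6) {c h : ι}
    (hch : ValidMarks P Q c h) (x : ι) :
    (markedColumns u P Q c h x).card = if x ∈ P then 2 else if x ∈ Q then 1 else 0 := by
  rw [markedColumns, Finset.card_filter,
    sum_comp_role u fun i => if x ∈ markedRow P Q c h i then 1 else 0]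
  have hdisj : ∀ y ∈ P, y ∉ Q := fun _ hy => Finset.disjoint_left.mp hPQ hy
  simp only [markedRow, Matrix.cons_val]
  rcases hch with ⟨rfl, hc | hc⟩ | ⟨hc, hh⟩ <;> grind

lemma mem_colP_iff {u : Fin 6} {s : Fin 3} : s ∈ colP u ↔ role u s ≠ 0 := by
  simp [colP]

lemma mem_colQ_iff {u : Fin 6} {s : Fin 3} : s ∈ colQ u ↔ role u s = 2 := by
  simp [colQ]

lemma mem_markedRow_embedding {P Q : Finset ι} {P₀ : Finset κ} [Fintype κ] {pos : κ → ι}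
    (hpos : Function.Injective pos) (hP : ∀ j, pos j ∈ P ↔ j ∈ P₀) (hQ : ∀ j, pos j ∈ Q ↔ j ∉ P₀)
    (c h j : κ) (i : Fin 3) :
    pos j ∈ markedRow P Q (pos c) (pos h) i ↔ j ∈ markedRow P₀ P₀ᶜ c h i := by
  fin_cases i
  · simp [markedRow, hpos.eq_iff]
  · simp only [markedRow, hP]
    split_ifs <;> simp [hpos.eq_iff, hP]
  · simp [markedRow, hpos.eq_iff, hP, hQ, em]

lemma mem_markedRow_of_ne {P Q : Finset ι} {c h x : ι} (hc : x ≠ c) (hh : x ≠ h) (i : Fin 3) :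
    x ∈ markedRow P Q c h i ↔ (x ∈ P ∧ i ≠ 0) ∨ (x ∈ Q ∧ i = 2) := by
  fin_cases i
  · simp [markedRow, hc]
  · simp only [markedRow]
    split_ifs <;> simp [hc, hh]
  · simp [markedRow, hh]

lemma markedColumns_extend {P Q : Finset ι} {P₀ : Finset κ} [Fintype κ] {pos : κ → ι}
    (hpos : Function.Injective pos) (hP : ∀ j, pos j ∈ P ↔ j ∈ P₀) (hQ : ∀ j, pos j ∈ Q ↔ j ∉ P₀)
    (u : Fin 6) (c h : κ) :
    Function.extend pos (markedColumns u P₀ P₀ᶜ c h) (plainColumns u P Q) =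
      markedColumns u P Q (pos c) (pos h) := by
  ext x s
  by_cases hx : ∃ j, pos j = x
  · obtain ⟨j, rfl⟩ := hx
    simp [hpos.extend_apply, markedColumns, mem_markedRow_embedding hpos hP hQ]
  · have hne : ∀ k, x ≠ pos k := fun k h => hx ⟨k, h.symm⟩
    have : role u s = 2 → role u s ≠ 0 := fun h => h ▸ by decide
    simp only [Function.extend_apply' _ _ _ hx, plainColumns, markedColumns, Finset.mem_filter,
      Finset.mem_univ, true_and, mem_markedRow_of_ne (hne c) (hne h)]
    split_ifs <;> simp_all [mem_colP_iff, mem_colQ_iff]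

end MarkedColumns

section Solves

variable {ι : Type*} [DecidableEq ι] {u : Fin 6} {P Q : Finset ι}

/-- When labels are arranged as in the word `W`, the matrix in `D^u` with marks `c` and `h` is the
leading term of an attainable family. -/
def Solves (u : Fin 6) (P Q : Finset ι) (W : List ι) (c h : ι) : Prop :=
  ∃ F : Family ι 3, Attainable W F ∧ IsUnitriangular (IsMarked u P Q) (markedColumns u P Q c h) F

lemma Solves.of_filter (hPQ : Disjoint P Q) {W : List ι} {c h : ι} (hch : ValidMarks P Q c h)
    (hW : Solves u P Q (W.filter (· ∈ P ∪ Q) ++ W.filter (· ∉ P ∪ Q)) c h) :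
    Solves u P Q W c h := by
  obtain ⟨F, hF, F', rfl, hF'⟩ := hW
  have hmarked : ∀ t ∈ (markedColumns u P Q c h, 0) ::ₘ F', IsMarked u P Q t.1 := by
    simpa using ⟨⟨c, h, hch, rfl⟩, fun w n ht => (hF' (w, n) ht).2.2⟩
  refine ⟨_, Attainable.of_filter (· ∈ P ∪ Q) (fun x y hx hy => ?_) [] W (by simpa using hF),
    F', rfl, hF'⟩
  refine ⟨if x ∈ P then 2 else 1, by split_ifs <;> simp, fun t ht => ?_⟩
  obtain ⟨c', h', hch', heq⟩ := hmarked t ht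
  rw [Finset.mem_union, not_or] at hy
  have hcard := card_markedColumns hPQ u hch'
  have hempty : t.1 y = ∅ := by rw [heq, ← Finset.card_eq_zero, hcard]; simp [hy]
  rw [hempty, heq, hcard]
  have : x ∈ P ∨ x ∈ Q := Finset.mem_union.mp hx
  refine ⟨Finset.empty_subset _, ?_⟩
  split_ifs <;> simp_all

variable {m : ℕ} {P₀ : Finset (Fin m)} {pos : Fin m → ι}

/-- The labels `pos j` with `j ∈ P₀` and `j ∉ P₀` belong to `P` and `Q`, respectively. -/
structure Slots (P Q : Finset ι) (P₀ : Finset (Fin m)) (pos : Fin m → ι) : Prop where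
  injective : Function.Injective pos
  mem_left_iff : ∀ j, pos j ∈ P ↔ j ∈ P₀
  mem_right_iff : ∀ j, pos j ∈ Q ↔ j ∉ P₀

lemma flag_comparable : ∀ u : Fin 6, ∀ S ∈ flag u, ∀ T ∈ flag u, S ⊆ T ∨ T ⊆ S := by
  decide

lemma attainable_of_flag (W : List ι) (pos : Fin m → ι) {w : Fin m → Finset (Fin 3)}
    (hw : ∀ j, w j ∈ flag u) :
    Attainable W (extendFamily pos (plainColumns u P Q) {(w, 0)}) := by
  have hmem : ∀ x, Function.extend pos w (plainColumns u P Q) x ∈ flag u := by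
    intro x
    by_cases hx : ∃ j, pos j = x
    · rw [Function.extend_def, dif_pos hx]
      exact hw _
    · rw [Function.extend_apply' _ _ _ hx, plainColumns]
      split_ifs <;> simp [flag]
  exact Attainable.of_chain W fun x y => flag_comparable u _ (hmem x) _ (hmem y)

end Solves

section Templates

variable {ι : Type*} {u : Fin 6} {P Q : Finset ι} {m : ℕ} {P₀ : Finset (Fin m)}
  {pos : Fin m → ι}

lemma card_colP (u : Fin 6) : (colP u).card = 2 := by
  revert u; decide

lemma card_colQ (u : Fin 6) : (colQ u).card = 1 := by
  revert u; decide

lemma Slots.dominates (hpos : Slots P Q P₀ pos) {base : ι → Finset (Fin 3)}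
    {F : Family (Fin m) 3} {i j : Fin m} {k : ℕ} (hk : 0 < k)
    (hF : ∀ t ∈ F, t.1 j ⊆ t.1 i ∧ (t.1 i).card = (t.1 j).card + k) :
    Dominates (extendFamily pos base F) (pos i) (pos j) := by
  refine ⟨k, hk, fun t ht => ?_⟩
  obtain ⟨t', ht', rfl⟩ := Multiset.mem_map.mp ht
  simpa [hpos.injective.extend_apply] using hF t' ht'

lemma Slots.attainable_moveBeads (hpos : Slots P Q P₀ pos) {base : ι → Finset (Fin 3)}
    {F : Family (Fin m) 3} {A C : List ι} (i j : Fin m) {n : ℕ} (hn : 0 < n)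
    (h : Attainable (A ++ pos i :: pos j :: C) (extendFamily pos base F)) :
    Attainable (A ++ pos i :: pos j :: C) (extendFamily pos base (moveBeads i j n F)) := by
  classical
  rw [← moveBeads_extendFamily hpos.injective]
  exact h.moveBeads hn

lemma Slots.attainable_push_right (hpos : Slots P Q P₀ pos) {base : ι → Finset (Fin 3)}
    {F : Family (Fin m) 3} {A B C : List ι} (i j : Fin m) {n : ℕ} (hn : 0 < n)
    (hdom : ∀ x ∈ B, Dominates (extendFamily pos base (moveBeads i j n F)) (pos j) x)
    (h : Attainable (A ++ pos i :: pos j :: (B ++ C)) (extendFamily pos base F)) :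
    Attainable (A ++ pos i :: B ++ pos j :: C) (extendFamily pos base (moveBeads i j n F)) := by
  have hmove := hpos.attainable_moveBeads i j hn h
  simpa using Attainable.push_right (A := A ++ [pos i]) B hdom (by simpa using hmove)

lemma Slots.attainable_pull_left (hpos : Slots P Q P₀ pos) {base : ι → Finset (Fin 3)}
    {F : Family (Fin m) 3} {A B C : List ι} (i j : Fin m) {n : ℕ} (hn : 0 < n)
    (hdom : ∀ x ∈ B, Dominates (extendFamily pos base (moveBeads i j n F)) x (pos i))
    (h : Attainable (A ++ B ++ pos i :: pos j :: C) (extendFamily pos base F)) :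
    Attainable (A ++ pos i :: B ++ pos j :: C) (extendFamily pos base (moveBeads i j n F)) :=
  Attainable.pull_left B hdom (hpos.attainable_moveBeads i j hn h)

variable [DecidableEq ι]

lemma Solves.of_nodup {W : List ι} {c h : ι} (hW : W.Nodup → Solves u P Q W c h) :
    Solves u P Q W c h := by
  by_cases hnodup : W.Nodup
  · exact hW hnodup
  · exact ⟨_, Attainable.of_nodup (absurd · hnodup), 0, rfl, by simp⟩

lemma Slots.of_word (hPQ : Disjoint P Q) {W R : List ι} (hW : W.Nodup)
    (hcount : ∀ x, (List.ofFn pos ++ R).count x ≤ W.count x)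
    (hmem : ∀ j, if j ∈ P₀ then pos j ∈ P else pos j ∈ Q) :
    Slots P Q P₀ pos ∧ ∀ x ∈ R, x ∉ List.ofFn pos := by
  have hdisj : ∀ x ∈ P, x ∉ Q := fun _ hx => Finset.disjoint_left.mp hPQ hx
  have hnodup : (List.ofFn pos ++ R).Nodup := List.nodup_iff_count_le_one.mpr fun x =>
    (hcount x).trans (List.nodup_iff_count_le_one.mp hW x)
  obtain ⟨hpos, -, hne⟩ := List.nodup_append'.mp hnodup
  refine ⟨⟨List.nodup_ofFn.mp hpos, fun j => ?_, fun j => ?_⟩, fun x hx hx' => hne hx' hx⟩ <;>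
  · have := hmem j
    split_ifs at this with hj <;> grind

lemma Slots.left_dominates (hpos : Slots P Q P₀ pos) {F : Family (Fin m) 3} {j : Fin m}
    (hF : ∀ t ∈ F, t.1 j ⊆ colP u ∧ (t.1 j).card = 1) {x : ι} (hx : x ∈ P)
    (hne : x ∉ List.ofFn pos) :
    Dominates (extendFamily pos (plainColumns u P Q) F) x (pos j) :=
  dominates_extendFamily_left hpos.injective (by simpa using hne)
    ⟨1, one_pos, fun t ht => by simp [plainColumns, hx, card_colP, hF t ht]⟩

lemma Slots.dominates_right (hpos : Slots P Q P₀ pos) (hPQ : Disjoint P Q)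
    {F : Family (Fin m) 3} {j : Fin m}
    (hF : ∀ t ∈ F, colQ u ⊆ t.1 j ∧ (t.1 j).card = 2) {x : ι} (hx : x ∈ Q)
    (hne : x ∉ List.ofFn pos) :
    Dominates (extendFamily pos (plainColumns u P Q) F) (pos j) x :=
  dominates_extendFamily_right hpos.injective (by simpa using hne)
    ⟨1, one_pos, fun t ht => by
      simp [plainColumns, hx, Finset.disjoint_right.mp hPQ hx, card_colQ, hF t ht]⟩

/-- In the arrangement `P₀` of labels in `P` and `Q`, the family `F` has as its leading term the
matrix with marks `c` and `h`. -/
def LeadsWith (u : Fin 6) (P₀ : Finset (Fin m)) (F : Family (Fin m) 3) (c h : Fin m) : Prop :=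
  IsUnitriangular (IsMarked u P₀ P₀ᶜ) (markedColumns u P₀ P₀ᶜ c h) F

instance (u : Fin 6) (P₀ : Finset (Fin m)) (F : Family (Fin m) 3) (c h : Fin m) :
    Decidable (LeadsWith u P₀ F c h) :=
  inferInstanceAs (Decidable (IsUnitriangular _ _ _))

lemma Solves.of_slots (hpos : Slots P Q P₀ pos) {W : List ι} {F : Family (Fin m) 3} {c h : Fin m}
    (hF : LeadsWith u P₀ F c h)
    (hW : Attainable W (extendFamily pos (plainColumns u P Q) F)) :
    Solves u P Q W (pos c) (pos h) := by
  have hext := markedColumns_extend hpos.injective hpos.mem_left_iff hpos.mem_right_iff u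
  refine ⟨_, hW, hext c h ▸ IsUnitriangular.extendFamily hpos.injective ?_ hF⟩
  rintro w ⟨c', h', hch', rfl⟩
  refine ⟨pos c', pos h', ?_, hext c' h'⟩
  simpa [ValidMarks, hpos.mem_left_iff, hpos.mem_right_iff, hpos.injective.eq_iff] using hch'

end Templates

section Families

/-- The columns created from a chain for one label in `P` followed by one in `Q`. Here and below,
the letters in the name say to which of these sets the labels `0, 1, …` belong. -/
def familyPQ : Family (Fin 2) 3 := moveBeads 0 1 1 {(![Finset.univ, ∅], 0)}

/-- The columns created for one label in `Q` followed by one in `P`. -/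
def familyQP : Family (Fin 2) 3 := moveBeads 0 1 2 {(![Finset.univ, ∅], 0)}

/-- The columns created for two labels in `P` and a later one in `Q`. -/
def familyPPQ (u : Fin 6) : Family (Fin 3) 3 :=
  moveBeads 0 1 1 (moveBeads 1 2 1 {(![Finset.univ, colP u, ∅], 0)})

/-- The columns created for one label in `Q` and two later ones in `P`. -/
def familyQPP (u : Fin 6) : Family (Fin 3) 3 :=
  moveBeads 1 2 1 (moveBeads 0 2 1 {(![colP u, Finset.univ, ∅], 0)})

/-- The columns created for one label in `P` and two later ones in `Q`. -/
def familyPQQ (u : Fin 6) : Family (Fin 3) 3 :=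
  moveBeads 1 2 1 (moveBeads 0 1 1 {(![Finset.univ, colQ u, ∅], 0)})

/-- The columns created for two labels in `Q` and a later one in `P`. -/
def familyQQP (u : Fin 6) : Family (Fin 3) 3 :=
  moveBeads 0 1 1 (moveBeads 0 2 1 {(![Finset.univ, ∅, colQ u], 0)})

/-- The columns created for two pairs of labels, one in `P` and one in `Q`, which may come in either
order because the two moves do not interact. -/
def familyPPQQ (u : Fin 6) : Family (Fin 4) 3 :=
  moveBeads 0 1 1 (moveBeads 2 3 1 {(![Finset.univ, colQ u, colP u, ∅], 0)})

/-- The columns created for labels alternating between `P` and `Q`, the first being in `P`. -/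
def familyPQPQ (u : Fin 6) : Family (Fin 4) 3 := moveBeads 1 2 1 (familyPPQQ u)

/-- The columns created for labels alternating between `Q` and `P`, the first being in `Q`. -/
def familyQPQP (u : Fin 6) : Family (Fin 4) 3 :=
  moveBeads 0 1 1 (moveBeads 1 2 1 (moveBeads 1 3 1 {(![colP u, Finset.univ, ∅, colQ u], 0)}))

end Families

section Words

variable {ι : Type*} [DecidableEq ι] {u : Fin 6} {P Q : Finset ι} {A B : List ι}

lemma solves_PQ (hPQ : Disjoint P Q) {k l : ι} (hk : k ∈ P) (hl : l ∈ Q) {c h : Fin 2}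
    (hF : LeadsWith u {0} familyPQ c h) :
    Solves u P Q (A ++ k :: l :: B) (![k, l] c) (![k, l] h) := by
  refine Solves.of_nodup fun hW => ?_
  have hpos : Slots P Q {0} ![k, l] := (Slots.of_word (R := []) hPQ hW
    (by simp +arith [List.count_cons]) (by simp [Fin.forall_fin_succ, *])).1
  refine Solves.of_slots hpos hF (hpos.attainable_moveBeads 0 1 one_pos ?_)
  exact attainable_of_flag _ _ (by simp [Fin.forall_fin_succ, flag])

lemma solves_QP (hPQ : Disjoint P Q) {k l : ι} (hk : k ∈ P) (hl : l ∈ Q) {c h : Fin 2}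
    (hF : LeadsWith u {1} familyQP c h) :
    Solves u P Q (A ++ l :: k :: B) (![l, k] c) (![l, k] h) := by
  refine Solves.of_nodup fun hW => ?_
  have hpos : Slots P Q {1} ![l, k] := (Slots.of_word (R := []) hPQ hW
    (by simp +arith [List.count_cons]) (by simp [Fin.forall_fin_succ, *])).1
  refine Solves.of_slots hpos hF (hpos.attainable_moveBeads 0 1 two_pos ?_)
  exact attainable_of_flag _ _ (by simp [Fin.forall_fin_succ, flag])

lemma slot_bounds_PPQ : ∀ u,
    ∀ t ∈ moveBeads (1 : Fin 3) 2 1 {(![Finset.univ, colP u, ∅], 0)},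
      t.1 1 ⊆ colP u ∧ (t.1 1).card = 1 := by
  decide +kernel

lemma solves_PPQ (hPQ : Disjoint P Q) {k k' l : ι} (hk : k ∈ P) (hk' : k' ∈ P) (hl : l ∈ Q)
    {Ps : List ι} (hPs : ∀ x ∈ Ps, x ∈ P) {c h : Fin 3}
    (hF : LeadsWith u {0, 1} (familyPPQ u) c h) :
    Solves u P Q (A ++ k :: k' :: Ps ++ l :: B) (![k, k', l] c) (![k, k', l] h) := by
  refine Solves.of_nodup fun hW => ?_
  obtain ⟨hpos, hne⟩ : Slots P Q {0, 1} ![k, k', l] ∧ ∀ x ∈ Ps, x ∉ [k, k', l] :=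
    Slots.of_word hPQ hW (by simp +arith [List.count_cons]) (by simp [Fin.forall_fin_succ, *])
  have hpull : Attainable (A ++ [k] ++ k' :: Ps ++ l :: B) (extendFamily ![k, k', l]
      (plainColumns u P Q) (moveBeads 1 2 1 {(![Finset.univ, colP u, ∅], 0)})) :=
    hpos.attainable_pull_left 1 2 one_pos
      (fun x hx => hpos.left_dominates (slot_bounds_PPQ u) (hPs x hx) (hne x hx))
      (attainable_of_flag _ _ (by simp [Fin.forall_fin_succ, flag]))
  have hword : Attainable (A ++ k :: k' :: (Ps ++ l :: B)) _ :=
    hpos.attainable_moveBeads 0 1 one_pos (by simpa using hpull)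
  exact Solves.of_slots hpos hF (by simpa [familyPPQ] using hword)

lemma slot_bounds_QPP : ∀ u, ∀ t ∈ moveBeads (0 : Fin 3) 2 1 {(![colP u, Finset.univ, ∅], 0)},
    (t.1 0 ⊆ colP u ∧ (t.1 0).card = 1) ∧ t.1 0 ⊆ t.1 1 ∧ (t.1 1).card = (t.1 0).card + 2 := by
  decide +kernel

lemma solves_QPP (hPQ : Disjoint P Q) {l k k' : ι} (hl : l ∈ Q) (hk : k ∈ P) (hk' : k' ∈ P)
    {Ps : List ι} (hPs : ∀ x ∈ Ps, x ∈ P) {c h : Fin 3}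
    (hF : LeadsWith u {1, 2} (familyQPP u) c h) :
    Solves u P Q (A ++ l :: Ps ++ k :: k' :: B) (![l, k, k'] c) (![l, k, k'] h) := by
  refine Solves.of_nodup fun hW => ?_
  obtain ⟨hpos, hne⟩ : Slots P Q {1, 2} ![l, k, k'] ∧ ∀ x ∈ Ps, x ∉ [l, k, k'] :=
    Slots.of_word hPQ hW (by simp +arith [List.count_cons]) (by simp [Fin.forall_fin_succ, *])
  have hpull : Attainable (A ++ l :: (Ps ++ [k]) ++ k' :: B) (extendFamily ![l, k, k']
      (plainColumns u P Q) (moveBeads 0 2 1 {(![colP u, Finset.univ, ∅], 0)})) := by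
    refine hpos.attainable_pull_left 0 2 one_pos ?_
      (attainable_of_flag _ _ (by simp [Fin.forall_fin_succ, flag]))
    simp only [List.forall_mem_append, List.forall_mem_singleton]
    exact ⟨fun x hx => hpos.left_dominates (fun t ht => (slot_bounds_QPP u t ht).1) (hPs x hx)
      (hne x hx), hpos.dominates (i := 1) two_pos fun t ht => (slot_bounds_QPP u t ht).2⟩
  have hword : Attainable (A ++ l :: Ps ++ k :: k' :: B) _ :=
    hpos.attainable_moveBeads 1 2 one_pos (by simpa using hpull)
  exact Solves.of_slots hpos hF (by simpa [familyQPP] using hword)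

lemma slot_bounds_PQQ : ∀ u, ∀ t ∈ moveBeads (0 : Fin 3) 1 1 {(![Finset.univ, colQ u, ∅], 0)},
    colQ u ⊆ t.1 1 ∧ (t.1 1).card = 2 := by
  decide +kernel

lemma solves_PQQ (hPQ : Disjoint P Q) {k l l' : ι} (hk : k ∈ P) (hl : l ∈ Q) (hl' : l' ∈ Q)
    {Qs : List ι} (hQs : ∀ x ∈ Qs, x ∈ Q) {c h : Fin 3}
    (hF : LeadsWith u {0} (familyPQQ u) c h) :
    Solves u P Q (A ++ k :: Qs ++ l :: l' :: B) (![k, l, l'] c) (![k, l, l'] h) := by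
  refine Solves.of_nodup fun hW => ?_
  obtain ⟨hpos, hne⟩ : Slots P Q {0} ![k, l, l'] ∧ ∀ x ∈ Qs, x ∉ [k, l, l'] :=
    Slots.of_word hPQ hW (by simp +arith [List.count_cons]) (by simp [Fin.forall_fin_succ, *])
  have hpush : Attainable (A ++ k :: Qs ++ l :: l' :: B) (extendFamily ![k, l, l']
      (plainColumns u P Q) (moveBeads 0 1 1 {(![Finset.univ, colQ u, ∅], 0)})) :=
    hpos.attainable_push_right 0 1 one_pos
      (fun x hx => hpos.dominates_right hPQ (slot_bounds_PQQ u) (hQs x hx) (hne x hx))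
      (attainable_of_flag _ _ (by simp [Fin.forall_fin_succ, flag]))
  have hword : Attainable (A ++ k :: Qs ++ l :: l' :: B) _ :=
    hpos.attainable_moveBeads 1 2 one_pos hpush
  exact Solves.of_slots hpos hF (by simpa [familyPQQ] using hword)

lemma slot_bounds_QQP : ∀ u, ∀ t ∈ moveBeads (0 : Fin 3) 2 1 {(![Finset.univ, ∅, colQ u], 0)},
    (colQ u ⊆ t.1 2 ∧ (t.1 2).card = 2) ∧ t.1 1 ⊆ t.1 2 ∧ (t.1 2).card = (t.1 1).card + 2 := by
  decide +kernel

lemma solves_QQP (hPQ : Disjoint P Q) {l l' k : ι} (hl : l ∈ Q) (hl' : l' ∈ Q) (hk : k ∈ P)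
    {Qs : List ι} (hQs : ∀ x ∈ Qs, x ∈ Q) {c h : Fin 3}
    (hF : LeadsWith u {2} (familyQQP u) c h) :
    Solves u P Q (A ++ l :: l' :: Qs ++ k :: B) (![l, l', k] c) (![l, l', k] h) := by
  refine Solves.of_nodup fun hW => ?_
  obtain ⟨hpos, hne⟩ : Slots P Q {2} ![l, l', k] ∧ ∀ x ∈ Qs, x ∉ [l, l', k] :=
    Slots.of_word hPQ hW (by simp +arith [List.count_cons]) (by simp [Fin.forall_fin_succ, *])
  have hpush : Attainable (A ++ l :: (l' :: Qs) ++ k :: B) (extendFamily ![l, l', k]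
      (plainColumns u P Q) (moveBeads 0 2 1 {(![Finset.univ, ∅, colQ u], 0)})) := by
    refine hpos.attainable_push_right 0 2 one_pos ?_
      (attainable_of_flag _ _ (by simp [Fin.forall_fin_succ, flag]))
    simp only [List.forall_mem_cons]
    exact ⟨hpos.dominates (j := 1) two_pos fun t ht => (slot_bounds_QQP u t ht).2,
      fun x hx => hpos.dominates_right hPQ (fun t ht => (slot_bounds_QQP u t ht).1) (hQs x hx)
        (hne x hx)⟩
  have hword : Attainable (A ++ l :: l' :: (Qs ++ k :: B)) _ :=
    hpos.attainable_moveBeads 0 1 one_pos (by simpa using hpush)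
  exact Solves.of_slots hpos hF (by simpa [familyQQP] using hword)

lemma slot_bounds_PPQQ : ∀ u, ∀ t ∈ familyPPQQ u,
    (colQ u ⊆ t.1 1 ∧ (t.1 1).card = 2) ∧ t.1 2 ⊆ colP u ∧ (t.1 2).card = 1 := by
  decide +kernel

lemma Slots.attainable_PPQQ {P₀ : Finset (Fin 4)} {pos : Fin 4 → ι} (hpos : Slots P Q P₀ pos)
    (hPQ : Disjoint P Q) {Ps Qs V : List ι} (hPs : ∀ x ∈ Ps, x ∈ P ∧ x ∉ List.ofFn pos)
    (hQs : ∀ x ∈ Qs, x ∈ Q ∧ x ∉ List.ofFn pos) :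
    Attainable (A ++ pos 0 :: Qs ++ pos 1 :: (V ++ pos 2 :: Ps ++ pos 3 :: B))
      (extendFamily pos (plainColumns u P Q) (familyPPQQ u)) := by
  have hbase : Attainable ((A ++ pos 0 :: pos 1 :: Qs ++ V ++ Ps) ++ pos 2 :: pos 3 :: B) _ :=
    hpos.attainable_moveBeads 2 3 one_pos
      (attainable_of_flag (u := u) (P := P) (Q := Q) (w := ![Finset.univ, colQ u, colP u, ∅]) _ _
        (by simp [Fin.forall_fin_succ, flag]))
  have hpush : Attainable (A ++ pos 0 :: Qs ++ pos 1 :: (V ++ Ps ++ pos 2 :: pos 3 :: B)) _ :=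
    hpos.attainable_push_right 0 1 one_pos
      (fun x hx => hpos.dominates_right hPQ (fun t ht => (slot_bounds_PPQQ u t ht).1)
        (hQs x hx).1 (hQs x hx).2) (by simpa using hbase)
  have hpull := Attainable.pull_left (A := A ++ pos 0 :: Qs ++ pos 1 :: V) Ps
    (fun x hx => hpos.left_dominates (fun t ht => (slot_bounds_PPQQ u t ht).2) (hPs x hx).1
      (hPs x hx).2) (by simpa [familyPPQQ] using hpush)
  simpa [familyPPQQ] using hpull

lemma Slots.attainable_QQPP {P₀ : Finset (Fin 4)} {pos : Fin 4 → ι} (hpos : Slots P Q P₀ pos)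
    (hPQ : Disjoint P Q) {Ps Qs V : List ι} (hPs : ∀ x ∈ Ps, x ∈ P ∧ x ∉ List.ofFn pos)
    (hQs : ∀ x ∈ Qs, x ∈ Q ∧ x ∉ List.ofFn pos) :
    Attainable (A ++ pos 2 :: Ps ++ pos 3 :: (V ++ pos 0 :: Qs ++ pos 1 :: B))
      (extendFamily pos (plainColumns u P Q) (familyPPQQ u)) := by
  have hbase : Attainable ((A ++ Ps) ++ pos 2 :: pos 3 :: (V ++ pos 0 :: pos 1 :: Qs ++ B)) _ :=
    hpos.attainable_moveBeads 2 3 one_pos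
      (attainable_of_flag (u := u) (P := P) (Q := Q) (w := ![Finset.univ, colQ u, colP u, ∅]) _ _
        (by simp [Fin.forall_fin_succ, flag]))
  have hpush : Attainable (A ++ Ps ++ pos 2 :: pos 3 :: V ++ pos 0 :: Qs ++ pos 1 :: B) _ :=
    hpos.attainable_push_right 0 1 one_pos
      (fun x hx => hpos.dominates_right hPQ (fun t ht => (slot_bounds_PPQQ u t ht).1)
        (hQs x hx).1 (hQs x hx).2) (by simpa using hbase)
  have hpull := Attainable.pull_left (A := A) (C := pos 3 :: (V ++ pos 0 :: Qs ++ pos 1 :: B)) Ps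
    (fun x hx => hpos.left_dominates (fun t ht => (slot_bounds_PPQQ u t ht).2) (hPs x hx).1
      (hPs x hx).2) (by simpa [familyPPQQ] using hpush)
  simpa [familyPPQQ] using hpull

lemma solves_PPQQ (hPQ : Disjoint P Q) {k k' l l' : ι} (hk : k ∈ P) (hk' : k' ∈ P) (hl : l ∈ Q)
    (hl' : l' ∈ Q) {Ps Qs V : List ι} (hPs : ∀ x ∈ Ps, x ∈ P) (hQs : ∀ x ∈ Qs, x ∈ Q)
    {c h : Fin 4} (hF : LeadsWith u {0, 1} (familyPPQQ u) c h) :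
    Solves u P Q (A ++ k :: Qs ++ k' :: (V ++ l :: Ps ++ l' :: B))
      (![k, k', l, l'] c) (![k, k', l, l'] h) := by
  refine Solves.of_nodup fun hW => ?_
  obtain ⟨hpos, hne⟩ : Slots P Q {0, 1} ![k, k', l, l'] ∧ ∀ x ∈ Ps ++ Qs, x ∉ [k, k', l, l'] :=
    Slots.of_word hPQ hW (by simp +arith [List.count_cons]) (by simp [Fin.forall_fin_succ, *])
  exact Solves.of_slots hpos hF (hpos.attainable_PPQQ hPQ
    (fun x hx => ⟨hPs x hx, hne x (by simp [hx])⟩) fun x hx => ⟨hQs x hx, hne x (by simp [hx])⟩)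

lemma solves_QQPP (hPQ : Disjoint P Q) {k k' l l' : ι} (hk : k ∈ P) (hk' : k' ∈ P) (hl : l ∈ Q)
    (hl' : l' ∈ Q) {Ps Qs V : List ι} (hPs : ∀ x ∈ Ps, x ∈ P) (hQs : ∀ x ∈ Qs, x ∈ Q)
    {c h : Fin 4} (hF : LeadsWith u {0, 1} (familyPPQQ u) c h) :
    Solves u P Q (A ++ l :: Ps ++ l' :: (V ++ k :: Qs ++ k' :: B))
      (![k, k', l, l'] c) (![k, k', l, l'] h) := by
  refine Solves.of_nodup fun hW => ?_
  obtain ⟨hpos, hne⟩ : Slots P Q {0, 1} ![k, k', l, l'] ∧ ∀ x ∈ Ps ++ Qs, x ∉ [k, k', l, l'] :=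
    Slots.of_word hPQ hW (by simp +arith [List.count_cons]) (by simp [Fin.forall_fin_succ, *])
  exact Solves.of_slots hpos hF (hpos.attainable_QQPP hPQ
    (fun x hx => ⟨hPs x hx, hne x (by simp [hx])⟩) fun x hx => ⟨hQs x hx, hne x (by simp [hx])⟩)

lemma solves_PQPQ (hPQ : Disjoint P Q) {k l k' l' : ι} (hk : k ∈ P) (hl : l ∈ Q) (hk' : k' ∈ P)
    (hl' : l' ∈ Q) {Ps Qs : List ι} (hPs : ∀ x ∈ Ps, x ∈ P) (hQs : ∀ x ∈ Qs, x ∈ Q)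
    {c h : Fin 4} (hF : LeadsWith u {0, 2} (familyPQPQ u) c h) :
    Solves u P Q (A ++ k :: Qs ++ l :: k' :: Ps ++ l' :: B)
      (![k, l, k', l'] c) (![k, l, k', l'] h) := by
  refine Solves.of_nodup fun hW => ?_
  obtain ⟨hpos, hne⟩ : Slots P Q {0, 2} ![k, l, k', l'] ∧ ∀ x ∈ Ps ++ Qs, x ∉ [k, l, k', l'] :=
    Slots.of_word hPQ hW (by simp +arith [List.count_cons]) (by simp [Fin.forall_fin_succ, *])
  have hpairs := hpos.attainable_PPQQ (u := u) (A := A) (B := B) (V := []) hPQ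
    (fun x hx => ⟨hPs x hx, hne x (by simp [hx])⟩) fun x hx => ⟨hQs x hx, hne x (by simp [hx])⟩
  have hword : Attainable (A ++ k :: Qs ++ l :: k' :: (Ps ++ l' :: B)) _ :=
    hpos.attainable_moveBeads 1 2 one_pos (by simpa using hpairs)
  exact Solves.of_slots hpos hF (by simpa [familyPQPQ] using hword)

lemma slot_bounds_QPQP : ∀ u,
    (∀ t ∈ moveBeads (1 : Fin 4) 3 1 {(![colP u, Finset.univ, ∅, colQ u], 0)},
      (colQ u ⊆ t.1 3 ∧ (t.1 3).card = 2) ∧ t.1 2 ⊆ t.1 3 ∧ (t.1 3).card = (t.1 2).card + 2) ∧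
    ∀ t ∈ familyQPQP u, t.1 0 ⊆ colP u ∧ (t.1 0).card = 1 := by
  decide +kernel

lemma solves_QPQP (hPQ : Disjoint P Q) {l k l' k' : ι} (hl : l ∈ Q) (hk : k ∈ P) (hl' : l' ∈ Q)
    (hk' : k' ∈ P) {Ps Qs : List ι} (hPs : ∀ x ∈ Ps, x ∈ P) (hQs : ∀ x ∈ Qs, x ∈ Q)
    {c h : Fin 4} (hF : LeadsWith u {1, 3} (familyQPQP u) c h) :
    Solves u P Q (A ++ l :: Ps ++ k :: l' :: Qs ++ k' :: B)
      (![l, k, l', k'] c) (![l, k, l', k'] h) := by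
  refine Solves.of_nodup fun hW => ?_
  obtain ⟨hpos, hne⟩ : Slots P Q {1, 3} ![l, k, l', k'] ∧ ∀ x ∈ Ps ++ Qs, x ∉ [l, k, l', k'] :=
    Slots.of_word hPQ hW (by simp +arith [List.count_cons]) (by simp [Fin.forall_fin_succ, *])
  have hpush : Attainable ((A ++ Ps ++ [l]) ++ k :: (l' :: Qs) ++ k' :: B)
      (extendFamily ![l, k, l', k'] (plainColumns u P Q)
        (moveBeads 1 3 1 {(![colP u, Finset.univ, ∅, colQ u], 0)})) := by
    refine hpos.attainable_push_right 1 3 one_pos ?_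
      (attainable_of_flag _ _ (by simp [Fin.forall_fin_succ, flag]))
    simp only [List.forall_mem_cons]
    exact ⟨hpos.dominates (j := 2) two_pos fun t ht => ((slot_bounds_QPQP u).1 t ht).2,
      fun x hx => hpos.dominates_right hPQ (fun t ht => ((slot_bounds_QPQP u).1 t ht).1) (hQs x hx)
        (hne x (by simp [hx]))⟩
  have hmove : Attainable ((A ++ Ps ++ [l]) ++ k :: l' :: (Qs ++ k' :: B)) _ :=
    hpos.attainable_moveBeads 1 2 one_pos (by simpa using hpush)
  have hword : Attainable (A ++ l :: Ps ++ k :: (l' :: Qs ++ k' :: B)) _ :=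
    hpos.attainable_pull_left 0 1 one_pos
      (fun x hx => hpos.left_dominates (slot_bounds_QPQP u).2 (hPs x hx) (hne x (by simp [hx])))
      (by simpa using hmove)
  exact Solves.of_slots hpos hF (by simpa [familyQPQP] using hword)

end Words

section Cases

variable {ι : Type*} {u : Fin 6} {P Q : Finset ι} {A B : List ι}

lemma exists_first_right {R : List ι} (hR : ∀ x ∈ R, x ∈ P ∨ x ∈ Q) (h : ∃ x ∈ R, x ∈ Q) :
    ∃ Ps l B, R = Ps ++ l :: B ∧ l ∈ Q ∧ ∀ x ∈ Ps, x ∈ P := by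
  induction R with
  | nil => simp at h
  | cons a R ih =>
    by_cases ha : a ∈ Q
    · exact ⟨[], a, R, rfl, ha, by simp⟩
    · obtain ⟨Ps, l, B, rfl, hl, hPs⟩ := ih (by simp_all) (by simp_all)
      exact ⟨a :: Ps, l, B, rfl, hl, by simp_all⟩

lemma exists_last_right {R : List ι} (hR : ∀ x ∈ R, x ∈ P ∨ x ∈ Q) (h : ∃ x ∈ R, x ∈ Q) :
    ∃ B l Ps, R = B ++ l :: Ps ∧ l ∈ Q ∧ ∀ x ∈ Ps, x ∈ P := by
  obtain ⟨Ps, l, B, hrev, hl, hPs⟩ := exists_first_right (R := R.reverse) (by simpa) (by simpa)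
  exact ⟨B.reverse, l, Ps.reverse, by simpa using congrArg List.reverse hrev, hl, by simpa⟩

variable [DecidableEq ι]

lemma solves_P_Ps_Q (hPQ : Disjoint P Q) (hu : u = 0 ∨ u = 3) {k l : ι} (hk : k ∈ P) (hl : l ∈ Q)
    {Ps : List ι} (hPs : ∀ x ∈ Ps, x ∈ P) :
    Solves u P Q (A ++ k :: Ps ++ l :: B) k k := by
  cases Ps with
  | nil =>
    simpa using solves_PQ (A := A) (B := B) (c := 0) (h := 0) hPQ hk hl
      (by rcases hu with rfl | rfl <;> decide +kernel)
  | cons k' Ps =>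
    rw [List.forall_mem_cons] at hPs
    simpa using solves_PPQ (A := A) (B := B) (c := 0) (h := 0) hPQ hk hPs.1 hl hPs.2
      (by rcases hu with rfl | rfl <;> decide +kernel)

lemma solves_Q_Ps_P (hPQ : Disjoint P Q) (hu : u = 1 ∨ u = 5) {k l : ι} (hk : k ∈ P) (hl : l ∈ Q)
    {Ps : List ι} (hPs : ∀ x ∈ Ps, x ∈ P) :
    Solves u P Q (A ++ l :: Ps ++ k :: B) k k := by
  cases Ps using List.reverseRecOn with
  | nil =>
    simpa using solves_QP (A := A) (B := B) (c := 1) (h := 1) hPQ hk hl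
      (by rcases hu with rfl | rfl <;> decide +kernel)
  | append_singleton Ps k' =>
    rw [List.forall_mem_append, List.forall_mem_singleton] at hPs
    simpa using solves_QPP (A := A) (B := B) (c := 2) (h := 2) hPQ hl hPs.2 hk hPs.1
      (by rcases hu with rfl | rfl <;> decide +kernel)

lemma solves_Q_Qs_P (hPQ : Disjoint P Q) (hu : u = 0 ∨ u = 4) {k l : ι} (hk : k ∈ P) (hl : l ∈ Q)
    {Qs : List ι} (hQs : ∀ x ∈ Qs, x ∈ Q) :
    Solves u P Q (A ++ l :: Qs ++ k :: B) l l := by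
  cases Qs with
  | nil =>
    simpa using solves_QP (A := A) (B := B) (c := 0) (h := 0) hPQ hk hl
      (by rcases hu with rfl | rfl <;> decide +kernel)
  | cons l' Qs =>
    rw [List.forall_mem_cons] at hQs
    simpa using solves_QQP (A := A) (B := B) (c := 0) (h := 0) hPQ hl hQs.1 hk hQs.2
      (by rcases hu with rfl | rfl <;> decide +kernel)

lemma solves_P_Qs_Q (hPQ : Disjoint P Q) (hu : u = 2 ∨ u = 5) {k l : ι} (hk : k ∈ P) (hl : l ∈ Q)
    {Qs : List ι} (hQs : ∀ x ∈ Qs, x ∈ Q) :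
    Solves u P Q (A ++ k :: Qs ++ l :: B) l l := by
  cases Qs using List.reverseRecOn with
  | nil =>
    simpa using solves_PQ (A := A) (B := B) (c := 1) (h := 1) hPQ hk hl
      (by rcases hu with rfl | rfl <;> decide +kernel)
  | append_singleton Qs l' =>
    rw [List.forall_mem_append, List.forall_mem_singleton] at hQs
    simpa using solves_PQQ (A := A) (B := B) (c := 2) (h := 2) hPQ hk hQs.2 hl hQs.1
      (by rcases hu with rfl | rfl <;> decide +kernel)

lemma solves_P_Qs_P_Ps_Q (hPQ : Disjoint P Q) {k k' l : ι} (hk : k ∈ P) (hk' : k' ∈ P) (hl : l ∈ Q)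
    {Ps Qs : List ι} (hPs : ∀ x ∈ Ps, x ∈ P) (hQs : ∀ x ∈ Qs, x ∈ Q) :
    Solves 2 P Q (A ++ k :: Qs ++ k' :: Ps ++ l :: B) k' k' := by
  cases Qs using List.reverseRecOn with
  | nil =>
    simpa using solves_PPQ (A := A) (B := B) (c := 1) (h := 1) hPQ hk hk' hl hPs
      (by decide +kernel)
  | append_singleton Qs l' =>
    rw [List.forall_mem_append, List.forall_mem_singleton] at hQs
    simpa using solves_PQPQ (A := A) (B := B) (c := 2) (h := 2) hPQ hk hQs.2 hk' hl hPs hQs.1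
      (by decide +kernel)

lemma solves_Q_Ps_P_Qs_P (hPQ : Disjoint P Q) {k k' l : ι} (hk : k ∈ P) (hk' : k' ∈ P) (hl : l ∈ Q)
    {Ps Qs : List ι} (hPs : ∀ x ∈ Ps, x ∈ P) (hQs : ∀ x ∈ Qs, x ∈ Q) :
    Solves 4 P Q (A ++ l :: Ps ++ k :: Qs ++ k' :: B) k k := by
  cases Qs with
  | nil =>
    simpa using solves_QPP (A := A) (B := B) (c := 1) (h := 1) hPQ hl hk hk' hPs
      (by decide +kernel)
  | cons l' Qs =>
    rw [List.forall_mem_cons] at hQs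
    simpa using solves_QPQP (A := A) (B := B) (c := 1) (h := 1) hPQ hl hk hQs.1 hk' hPs hQs.2
      (by decide +kernel)

lemma solves_Q_Ps_Q_Qs_P (hPQ : Disjoint P Q) {k l l' : ι} (hk : k ∈ P) (hl : l ∈ Q) (hl' : l' ∈ Q)
    {Ps Qs : List ι} (hPs : ∀ x ∈ Ps, x ∈ P) (hQs : ∀ x ∈ Qs, x ∈ Q) :
    Solves 1 P Q (A ++ l :: Ps ++ l' :: Qs ++ k :: B) l' l' := by
  cases Ps using List.reverseRecOn with
  | nil =>
    simpa using solves_QQP (A := A) (B := B) (c := 1) (h := 1) hPQ hl hl' hk hQs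
      (by decide +kernel)
  | append_singleton Ps k' =>
    rw [List.forall_mem_append, List.forall_mem_singleton] at hPs
    simpa using solves_QPQP (A := A) (B := B) (c := 2) (h := 2) hPQ hl hPs.2 hl' hk hPs.1 hQs
      (by decide +kernel)

lemma solves_P_Qs_Q_Ps_Q (hPQ : Disjoint P Q) {k l l' : ι} (hk : k ∈ P) (hl : l ∈ Q) (hl' : l' ∈ Q)
    {Ps Qs : List ι} (hPs : ∀ x ∈ Ps, x ∈ P) (hQs : ∀ x ∈ Qs, x ∈ Q) :
    Solves 3 P Q (A ++ k :: Qs ++ l :: Ps ++ l' :: B) l l := by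
  cases Ps with
  | nil =>
    simpa using solves_PQQ (A := A) (B := B) (c := 1) (h := 1) hPQ hk hl hl' hQs
      (by decide +kernel)
  | cons k' Ps =>
    rw [List.forall_mem_cons] at hPs
    simpa using solves_PQPQ (A := A) (B := B) (c := 1) (h := 1) hPQ hk hl hPs.1 hl' hPs.2 hQs
      (by decide +kernel)

lemma solves_P_M_Q_Ps_Q (hPQ : Disjoint P Q) {k l l' : ι} (hk : k ∈ P) (hl : l ∈ Q) (hl' : l' ∈ Q)
    {Ps : List ι} (hPs : ∀ x ∈ Ps, x ∈ P) {M : List ι}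
    (hM : ∀ x ∈ M, x ∈ P ∨ x ∈ Q) :
    Solves 0 P Q (A ++ k :: M ++ l :: Ps ++ l' :: B) k l := by
  by_cases hex : ∃ x ∈ M, x ∈ P
  · obtain ⟨Qs, k', V, rfl, hk', hQs⟩ := exists_first_right (fun x hx => (hM x hx).symm) hex
    simpa using solves_PPQQ (A := A) (B := B) (V := V) (c := 0) (h := 2) hPQ
      hk hk' hl hl' hPs hQs
      (by decide +kernel)
  have hall : ∀ x ∈ M, x ∈ Q := fun x hx =>
    (hM x hx).resolve_left fun h => hex ⟨x, hx, h⟩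
  cases Ps with
  | nil =>
    simpa using solves_PQQ (A := A) (B := B) (c := 0) (h := 1) hPQ hk hl hl' hall
      (by decide +kernel)
  | cons k' Ps =>
    rw [List.forall_mem_cons] at hPs
    simpa using solves_PQPQ (A := A) (B := B) (c := 0) (h := 1) hPQ hk hl hPs.1 hl' hPs.2 hall
      (by decide +kernel)

lemma solves_Q_M_P_Qs_P (hPQ : Disjoint P Q) {k k' l : ι} (hk : k ∈ P) (hk' : k' ∈ P) (hl : l ∈ Q)
    {Qs : List ι} (hQs : ∀ x ∈ Qs, x ∈ Q) {M : List ι}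
    (hM : ∀ x ∈ M, x ∈ P ∨ x ∈ Q) :
    Solves 0 P Q (A ++ l :: M ++ k :: Qs ++ k' :: B) k l := by
  by_cases hex : ∃ x ∈ M, x ∈ Q
  · obtain ⟨Ps, l', V, rfl, hl', hPs⟩ := exists_first_right hM hex
    simpa using solves_QQPP (A := A) (B := B) (V := V) (c := 0) (h := 2) hPQ
      hk hk' hl hl' hPs hQs
      (by decide +kernel)
  have hall : ∀ x ∈ M, x ∈ P := fun x hx =>
    (hM x hx).resolve_right fun h => hex ⟨x, hx, h⟩
  cases Qs with
  | nil =>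
    simpa using solves_QPP (A := A) (B := B) (c := 1) (h := 0) hPQ hl hk hk' hall
      (by decide +kernel)
  | cons l' Qs =>
    rw [List.forall_mem_cons] at hQs
    simpa using solves_QPQP (A := A) (B := B) (c := 1) (h := 0) hPQ hl hk hQs.1 hk' hall hQs.2
      (by decide +kernel)

lemma solves_P_Qs_P_M_Q (hPQ : Disjoint P Q) {k k' l : ι} (hk : k ∈ P) (hk' : k' ∈ P) (hl : l ∈ Q)
    {Qs : List ι} (hQs : ∀ x ∈ Qs, x ∈ Q) {M : List ι}
    (hM : ∀ x ∈ M, x ∈ P ∨ x ∈ Q) :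
    Solves 5 P Q (A ++ k :: Qs ++ k' :: M ++ l :: B) k' l := by
  by_cases hex : ∃ x ∈ M, x ∈ Q
  · obtain ⟨V, l', Ps, rfl, hl', hPs⟩ := exists_last_right hM hex
    simpa using solves_PPQQ (A := A) (B := B) (V := V) (c := 1) (h := 3) hPQ
      hk hk' hl' hl hPs hQs
      (by decide +kernel)
  have hall : ∀ x ∈ M, x ∈ P := fun x hx =>
    (hM x hx).resolve_right fun h => hex ⟨x, hx, h⟩
  cases Qs using List.reverseRecOn with
  | nil =>
    simpa using solves_PPQ (A := A) (B := B) (c := 1) (h := 2) hPQ hk hk' hl hall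
      (by decide +kernel)
  | append_singleton Qs l' =>
    rw [List.forall_mem_append, List.forall_mem_singleton] at hQs
    simpa using solves_PQPQ (A := A) (B := B) (c := 2) (h := 3) hPQ hk hQs.2 hk' hl hall hQs.1
      (by decide +kernel)

lemma solves_Q_Ps_Q_M_P (hPQ : Disjoint P Q) {k l l' : ι} (hk : k ∈ P) (hl : l ∈ Q) (hl' : l' ∈ Q)
    {Ps : List ι} (hPs : ∀ x ∈ Ps, x ∈ P) {M : List ι}
    (hM : ∀ x ∈ M, x ∈ P ∨ x ∈ Q) :
    Solves 5 P Q (A ++ l :: Ps ++ l' :: M ++ k :: B) k l' := by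
  by_cases hex : ∃ x ∈ M, x ∈ P
  · obtain ⟨V, k', Qs, rfl, hk', hQs⟩ := exists_last_right (fun x hx => (hM x hx).symm) hex
    simpa using solves_QQPP (A := A) (B := B) (V := V) (c := 1) (h := 3) hPQ
      hk' hk hl hl' hPs hQs
      (by decide +kernel)
  have hall : ∀ x ∈ M, x ∈ Q := fun x hx =>
    (hM x hx).resolve_left fun h => hex ⟨x, hx, h⟩
  cases Ps using List.reverseRecOn with
  | nil =>
    simpa using solves_QQP (A := A) (B := B) (c := 2) (h := 1) hPQ hl hl' hk hall
      (by decide +kernel)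
  | append_singleton Ps k' =>
    rw [List.forall_mem_append, List.forall_mem_singleton] at hPs
    simpa using solves_QPQP (A := A) (B := B) (c := 3) (h := 2) hPQ hl hPs.2 hl' hk hPs.1 hall
      (by decide +kernel)

lemma solves_P_Qs_P_M_Q_ends (hPQ : Disjoint P Q) (hu : u = 1 ∨ u = 4)
    {k k' l : ι} (hk : k ∈ P) (hk' : k' ∈ P) (hl : l ∈ Q)
    {Qs : List ι} (hQs : ∀ x ∈ Qs, x ∈ Q) {M : List ι}
    (hM : ∀ x ∈ M, x ∈ P ∨ x ∈ Q) :
    Solves u P Q (A ++ k :: Qs ++ k' :: M ++ l :: B) k l := by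
  by_cases hex : ∃ x ∈ M, x ∈ Q
  · obtain ⟨V, l', Ps, rfl, hl', hPs⟩ := exists_last_right hM hex
    simpa using solves_PPQQ (A := A) (B := B) (V := V) (c := 0) (h := 3) hPQ
      hk hk' hl' hl hPs hQs
      (by rcases hu with rfl | rfl <;> decide +kernel)
  have hall : ∀ x ∈ M, x ∈ P := fun x hx =>
    (hM x hx).resolve_right fun h => hex ⟨x, hx, h⟩
  cases Qs using List.reverseRecOn with
  | nil =>
    simpa using solves_PPQ (A := A) (B := B) (c := 0) (h := 2) hPQ hk hk' hl hall
      (by rcases hu with rfl | rfl <;> decide +kernel)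
  | append_singleton Qs l' =>
    rw [List.forall_mem_append, List.forall_mem_singleton] at hQs
    simpa using solves_PQPQ (A := A) (B := B) (c := 0) (h := 3) hPQ hk hQs.2 hk' hl hall hQs.1
      (by rcases hu with rfl | rfl <;> decide +kernel)

lemma solves_Q_M_P_Qs_P_ends (hPQ : Disjoint P Q) (hu : u = 2 ∨ u = 3)
    {k k' l : ι} (hk : k ∈ P) (hk' : k' ∈ P) (hl : l ∈ Q)
    {Qs : List ι} (hQs : ∀ x ∈ Qs, x ∈ Q) {M : List ι}
    (hM : ∀ x ∈ M, x ∈ P ∨ x ∈ Q) :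
    Solves u P Q (A ++ l :: M ++ k :: Qs ++ k' :: B) k' l := by
  by_cases hex : ∃ x ∈ M, x ∈ Q
  · obtain ⟨Ps, l', V, rfl, hl', hPs⟩ := exists_first_right hM hex
    simpa using solves_QQPP (A := A) (B := B) (V := V) (c := 1) (h := 2) hPQ hk hk' hl hl' hPs hQs
      (by rcases hu with rfl | rfl <;> decide +kernel)
  have hall : ∀ x ∈ M, x ∈ P := fun x hx =>
    (hM x hx).resolve_right fun h => hex ⟨x, hx, h⟩
  cases Qs with
  | nil =>
    simpa using solves_QPP (A := A) (B := B) (c := 2) (h := 0) hPQ hl hk hk' hall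
      (by rcases hu with rfl | rfl <;> decide +kernel)
  | cons l' Qs =>
    rw [List.forall_mem_cons] at hQs
    simpa using solves_QPQP (A := A) (B := B) (c := 3) (h := 0) hPQ hl hk hQs.1 hk' hall hQs.2
      (by rcases hu with rfl | rfl <;> decide +kernel)

lemma solves_P_M_Q (hPQ : Disjoint P Q) (hu : u = 1 ∨ u = 4) {k l : ι} (hk : k ∈ P) (hl : l ∈ Q)
    {M : List ι}
    (hM : ∀ x ∈ M, x ∈ P ∨ x ∈ Q) : Solves u P Q (A ++ k :: M ++ l :: B) k l := by
  by_cases hex : ∃ x ∈ M, x ∈ P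
  · obtain ⟨Qs, k', M, rfl, hk', hQs⟩ := exists_first_right (fun x hx => (hM x hx).symm) hex
    simpa using solves_P_Qs_P_M_Q_ends hPQ hu hk hk' hl hQs
      (fun x hx => hM x (by simp [hx])) (A := A) (B := B)
  have hQs : ∀ x ∈ M, x ∈ Q := fun x hx => (hM x hx).resolve_left fun h => hex ⟨x, hx, h⟩
  cases M using List.reverseRecOn with
  | nil =>
    simpa using solves_PQ (A := A) (B := B) (c := 0) (h := 1) hPQ hk hl
      (by rcases hu with rfl | rfl <;> decide +kernel)
  | append_singleton M l' =>
    rw [List.forall_mem_append, List.forall_mem_singleton] at hQs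
    simpa using solves_PQQ (A := A) (B := B) (c := 0) (h := 2) hPQ hk hQs.2 hl hQs.1
      (by rcases hu with rfl | rfl <;> decide +kernel)

lemma solves_Q_M_P (hPQ : Disjoint P Q) (hu : u = 2 ∨ u = 3) {k l : ι} (hk : k ∈ P) (hl : l ∈ Q)
    {M : List ι}
    (hM : ∀ x ∈ M, x ∈ P ∨ x ∈ Q) : Solves u P Q (A ++ l :: M ++ k :: B) k l := by
  by_cases hex : ∃ x ∈ M, x ∈ P
  · obtain ⟨M, k', Qs, rfl, hk', hQs⟩ := exists_last_right (fun x hx => (hM x hx).symm) hex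
    simpa using solves_Q_M_P_Qs_P_ends hPQ hu hk' hk hl hQs
      (fun x hx => hM x (by simp [hx])) (A := A) (B := B)
  have hQs : ∀ x ∈ M, x ∈ Q := fun x hx => (hM x hx).resolve_left fun h => hex ⟨x, hx, h⟩
  cases M with
  | nil =>
    simpa using solves_QP (A := A) (B := B) (c := 1) (h := 0) hPQ hk hl
      (by rcases hu with rfl | rfl <;> decide +kernel)
  | cons l' M =>
    rw [List.forall_mem_cons] at hQs
    simpa using solves_QQP (A := A) (B := B) (c := 2) (h := 0) hPQ hl hQs.1 hk hQs.2
      (by rcases hu with rfl | rfl <;> decide +kernel)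

end Cases

section Unobstructed

variable {ι : Type*} [LinearOrder ι] {u : Fin 6} {P Q : Finset ι} {W A B C R M : List ι} {k l x : ι}

/-- The consequence of the Kleshchev property for the marks `c` and `h`: it provides the labels from
which the matrix in `D^u` with these marks can be reached. -/
def Unobstructed (u : Fin 6) (P Q : Finset ι) (c h : ι) : Prop :=
  ![(c ∈ P → c ≤ h → ∃ y ∈ Q, h < y) ∧ (h ∈ Q → h ≤ c → ∃ y ∈ P, c < y),
    (h ∈ Q → h ≤ c → ∃ y ∈ P, c < y) ∧ (h ≤ c → ∃ y ∈ Q, y < h),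
    (c ∈ P → c ≤ h → ∃ y ∈ Q, h < y) ∧ (c ≤ h → ∃ y ∈ P, y < c),
    (c ≤ h → ∃ y ∈ Q, h < y) ∧ (h ∈ Q → c ≤ h → ∃ y ∈ P, y < c),
    (h ≤ c → ∃ y ∈ P, c < y) ∧ (c ∈ P → h ≤ c → ∃ y ∈ Q, y < h),
    (c ∈ P → h ≤ c → ∃ y ∈ Q, y < h) ∧ (h ∈ Q → c ≤ h → ∃ y ∈ P, y < c)] u

lemma exists_first_right_gt (hsort : (A ++ x :: R).Pairwise (· < ·))
    (hmem : ∀ y, y ∈ A ++ x :: R ↔ y ∈ P ∨ y ∈ Q) (h : ∃ y ∈ Q, x < y) :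
    ∃ Ps l B, R = Ps ++ l :: B ∧ l ∈ Q ∧ ∀ y ∈ Ps, y ∈ P := by
  refine exists_first_right (fun y hy => (hmem y).mp (by simp [hy])) ?_
  obtain ⟨y, hyQ, hxy⟩ := h
  have hAx : ∀ a ∈ A, a < x := fun a ha => (List.pairwise_append.mp hsort).2.2 a ha x (by simp)
  have hy : y ∈ A ∨ y = x ∨ y ∈ R := by simpa using (hmem y).mpr (.inr hyQ)
  rcases hy with hyA | rfl | hyR
  · exact absurd (hAx y hyA) hxy.asymm
  · exact absurd hxy (lt_irrefl _)
  · exact ⟨y, hyR, hyQ⟩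

lemma exists_last_right_lt (hsort : (A ++ x :: R).Pairwise (· < ·))
    (hmem : ∀ y, y ∈ A ++ x :: R ↔ y ∈ P ∨ y ∈ Q) (h : ∃ y ∈ Q, y < x) :
    ∃ B l Ps, A = B ++ l :: Ps ∧ l ∈ Q ∧ ∀ y ∈ Ps, y ∈ P := by
  refine exists_last_right (fun y hy => (hmem y).mp (by simp [hy])) ?_
  obtain ⟨y, hyQ, hyx⟩ := h
  have hxR : ∀ a ∈ R, x < a := (List.pairwise_cons.mp (List.pairwise_append.mp hsort).2.1).1
  have hy : y ∈ A ∨ y = x ∨ y ∈ R := by simpa using (hmem y).mpr (.inr hyQ)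
  rcases hy with hyA | rfl | hyR
  · exact ⟨y, hyA, hyQ⟩
  · exact absurd hyx (lt_irrefl _)
  · exact absurd (hxR y hyR) hyx.asymm

lemma solves_of_mem_left (hPQ : Disjoint P Q) (hk : k ∈ P) (hun : Unobstructed u P Q k k)
    (hsort : (A ++ k :: R).Pairwise (· < ·)) (hmem : ∀ y, y ∈ A ++ k :: R ↔ y ∈ P ∨ y ∈ Q) :
    Solves u P Q (A ++ k :: R ++ C) k k := by
  have hmem' := fun y => (hmem y).trans or_comm
  match u, hun with
  | 0, ⟨hQ, _⟩ | 3, ⟨hQ, _⟩ =>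
    obtain ⟨Ps, l, B, rfl, hl, hPs⟩ := exists_first_right_gt hsort hmem (by simpa [hk] using hQ)
    simpa using solves_P_Ps_Q (A := A) (B := B ++ C) hPQ (by simp) hk hl hPs
  | 1, ⟨_, hQ⟩ | 5, ⟨hQ, _⟩ =>
    obtain ⟨B, l, Ps, rfl, hl, hPs⟩ := exists_last_right_lt hsort hmem (by simpa [hk] using hQ)
    simpa using solves_Q_Ps_P (A := B) (B := R ++ C) hPQ (by simp) hk hl hPs
  | 2, ⟨hQ, hP⟩ =>
    obtain ⟨B, k', Qs, rfl, hk', hQs⟩ := exists_last_right_lt hsort hmem' (hP le_rfl)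
    obtain ⟨Ps, l, B', rfl, hl, hPs⟩ := exists_first_right_gt hsort hmem (hQ hk le_rfl)
    simpa using solves_P_Qs_P_Ps_Q (A := B) (B := B' ++ C) hPQ hk' hk hl hPs hQs
  | 4, ⟨hP, hQ⟩ =>
    obtain ⟨B, l, Ps, rfl, hl, hPs⟩ := exists_last_right_lt hsort hmem (hQ hk le_rfl)
    obtain ⟨Qs, k', B', rfl, hk', hQs⟩ := exists_first_right_gt hsort hmem' (hP le_rfl)
    simpa using solves_Q_Ps_P_Qs_P (A := B) (B := B' ++ C) hPQ hk hk' hl hPs hQs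

lemma solves_of_mem_right (hPQ : Disjoint P Q) (hl : l ∈ Q) (hun : Unobstructed u P Q l l)
    (hsort : (A ++ l :: R).Pairwise (· < ·)) (hmem : ∀ y, y ∈ A ++ l :: R ↔ y ∈ P ∨ y ∈ Q) :
    Solves u P Q (A ++ l :: R ++ C) l l := by
  have hmem' := fun y => (hmem y).trans or_comm
  match u, hun with
  | 0, ⟨_, hP⟩ | 4, ⟨hP, _⟩ =>
    obtain ⟨Qs, k, B, rfl, hk, hQs⟩ := exists_first_right_gt hsort hmem' (by simpa [hl] using hP)
    simpa using solves_Q_Qs_P (A := A) (B := B ++ C) hPQ (by simp) hk hl hQs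
  | 2, ⟨_, hP⟩ | 5, ⟨_, hP⟩ =>
    obtain ⟨B, k, Qs, rfl, hk, hQs⟩ := exists_last_right_lt hsort hmem' (by simpa [hl] using hP)
    simpa using solves_P_Qs_Q (A := B) (B := R ++ C) hPQ (by simp) hk hl hQs
  | 1, ⟨hP, hQ⟩ =>
    obtain ⟨B, l', Ps, rfl, hl', hPs⟩ := exists_last_right_lt hsort hmem (hQ le_rfl)
    obtain ⟨Qs, k, B', rfl, hk, hQs⟩ := exists_first_right_gt hsort hmem' (hP hl le_rfl)
    simpa using solves_Q_Ps_Q_Qs_P (A := B) (B := B' ++ C) hPQ hk hl' hl hPs hQs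
  | 3, ⟨hQ, hP⟩ =>
    obtain ⟨B, k, Qs, rfl, hk, hQs⟩ := exists_last_right_lt hsort hmem' (hP hl le_rfl)
    obtain ⟨Ps, l', B', rfl, hl', hPs⟩ := exists_first_right_gt hsort hmem (hQ le_rfl)
    simpa using solves_P_Qs_Q_Ps_Q (A := B) (B := B' ++ C) hPQ hk hl hl' hPs hQs

lemma solves_of_lt (hPQ : Disjoint P Q) (hk : k ∈ P) (hl : l ∈ Q) (hkl : k < l)
    (hun : Unobstructed u P Q k l) (hsort : (A ++ k :: (M ++ l :: B)).Pairwise (· < ·))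
    (hmem : ∀ y, y ∈ A ++ k :: (M ++ l :: B) ↔ y ∈ P ∨ y ∈ Q) :
    Solves u P Q (A ++ k :: (M ++ l :: B) ++ C) k l := by
  have hmem' := fun y => (hmem y).trans or_comm
  have hM : ∀ x ∈ M, x ∈ P ∨ x ∈ Q := fun x hx => (hmem x).mp (by simp [hx])
  have hafter := exists_first_right_gt (A := A ++ k :: M) (R := B) (x := l) (P := P) (Q := Q)
    (by simpa using hsort) (by simpa using hmem)
  have hbefore := exists_last_right_lt hsort hmem'
  match u, hun with
  | 0, ⟨hQ, _⟩ =>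
    obtain ⟨Ps, l', B, rfl, hl', hPs⟩ := hafter (hQ hk hkl.le)
    simpa using solves_P_M_Q_Ps_Q (A := A) (B := B ++ C) hPQ hk hl hl' hPs hM
  | 1, _ | 4, _ => simpa using solves_P_M_Q (A := A) (B := B ++ C) hPQ (by simp) hk hl hM
  | 2, ⟨hQ, hP⟩ | 3, ⟨hQ, hP⟩ =>
    obtain ⟨A, k', Qs, rfl, hk', hQs⟩ := hbefore (by simpa [hl, hkl.le] using hP)
    obtain ⟨Ps, l', B, rfl, hl', hPs⟩ := hafter (by simpa [hk, hkl.le] using hQ)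
    simpa using solves_PPQQ (A := A) (B := B ++ C) (V := M) (c := 1) (h := 2) hPQ
      hk' hk hl hl' hPs hQs
      (by decide +kernel)
  | 5, ⟨_, hP⟩ =>
    obtain ⟨A, k', Qs, rfl, hk', hQs⟩ := hbefore (hP hl hkl.le)
    simpa using solves_P_Qs_P_M_Q (A := A) (B := B ++ C) hPQ hk' hk hl hQs hM

lemma solves_of_gt (hPQ : Disjoint P Q) (hk : k ∈ P) (hl : l ∈ Q) (hlk : l < k)
    (hun : Unobstructed u P Q k l) (hsort : (A ++ l :: (M ++ k :: B)).Pairwise (· < ·))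
    (hmem : ∀ y, y ∈ A ++ l :: (M ++ k :: B) ↔ y ∈ P ∨ y ∈ Q) :
    Solves u P Q (A ++ l :: (M ++ k :: B) ++ C) k l := by
  have hmem' := fun y => (hmem y).trans or_comm
  have hM : ∀ x ∈ M, x ∈ P ∨ x ∈ Q := fun x hx => (hmem x).mp (by simp [hx])
  have hafter := exists_first_right_gt (A := A ++ l :: M) (R := B) (x := k) (P := Q) (Q := P)
    (by simpa using hsort) (by simpa using hmem')
  have hbefore := exists_last_right_lt hsort hmem
  match u, hun with
  | 0, ⟨_, hP⟩ =>
    obtain ⟨Qs, k', B, rfl, hk', hQs⟩ := hafter (hP hl hlk.le)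
    simpa using solves_Q_M_P_Qs_P (A := A) (B := B ++ C) hPQ hk hk' hl hQs hM
  | 1, ⟨hP, hQ⟩ | 4, ⟨hP, hQ⟩ =>
    obtain ⟨A, l', Ps, rfl, hl', hPs⟩ := hbefore (by simpa [hk, hlk.le] using hQ)
    obtain ⟨Qs, k', B, rfl, hk', hQs⟩ := hafter (by simpa [hl, hlk.le] using hP)
    simpa using solves_QQPP (A := A) (B := B ++ C) (V := M) (c := 0) (h := 3) hPQ
      hk hk' hl' hl hPs hQs
      (by decide +kernel)
  | 2, _ | 3, _ => simpa using solves_Q_M_P (A := A) (B := B ++ C) hPQ (by simp) hk hl hM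
  | 5, ⟨hQ, _⟩ =>
    obtain ⟨A, l', Ps, rfl, hl', hPs⟩ := hbefore (hQ hk hlk.le)
    simpa using solves_Q_Ps_Q_M_P (A := A) (B := B ++ C) hPQ hk hl' hl hPs hM

lemma exists_eq_append_cons_append_cons (hsort : W.Pairwise (· < ·)) (hk : k ∈ W) (hl : l ∈ W)
    (hkl : k < l) : ∃ A M B, W = A ++ k :: (M ++ l :: B) := by
  obtain ⟨A, R, rfl⟩ := List.append_of_mem hk
  have hAk : ∀ a ∈ A, a < k := fun a ha => (List.pairwise_append.mp hsort).2.2 a ha k (by simp)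
  have hlR : l ∈ R := by
    rcases List.mem_append.mp hl with hlA | hl
    · exact absurd (hAk l hlA) hkl.asymm
    · exact (List.mem_cons.mp hl).resolve_left hkl.ne'
  obtain ⟨M, B, rfl⟩ := List.append_of_mem hlR
  exact ⟨A, M, B, rfl⟩

lemma Unobstructed.solves_append {c h : ι} (hun : Unobstructed u P Q c h)
    (hPQ : Disjoint P Q) (hch : ValidMarks P Q c h) (hsort : W.Pairwise (· < ·))
    (hmem : ∀ y, y ∈ W ↔ y ∈ P ∨ y ∈ Q) : Solves u P Q (W ++ C) c h := by
  rcases hch with ⟨rfl, hc | hc⟩ | ⟨hc, hh⟩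
  · obtain ⟨A, R, rfl⟩ := List.append_of_mem ((hmem c).mpr (.inl hc))
    exact solves_of_mem_left hPQ hc hun hsort hmem
  · obtain ⟨A, R, rfl⟩ := List.append_of_mem ((hmem c).mpr (.inr hc))
    exact solves_of_mem_right hPQ hc hun hsort hmem
  · have hcW := (hmem c).mpr (.inl hc)
    have hhW := (hmem h).mpr (.inr hh)
    rcases lt_or_gt_of_ne (Finset.disjoint_iff_ne.mp hPQ c hc h hh) with hlt | hgt
    · obtain ⟨A, M, B, rfl⟩ := exists_eq_append_cons_append_cons hsort hcW hhW hlt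
      exact solves_of_lt hPQ hc hh hlt hun hsort hmem
    · obtain ⟨A, M, B, rfl⟩ := exists_eq_append_cons_append_cons hsort hhW hcW hgt
      exact solves_of_gt hPQ hc hh hgt hun hsort hmem

lemma Unobstructed.solves {c h : ι} (hun : Unobstructed u P Q c h) (hPQ : Disjoint P Q)
    (hch : ValidMarks P Q c h) (hsort : W.Pairwise (· < ·)) (hmem : ∀ y, y ∈ W) :
    Solves u P Q W c h :=
  .of_filter hPQ hch <| hun.solves_append hPQ hch (hsort.filter _) fun y => by simp [hmem]

end Unobstructed

/-! ### Kleshchev multipartitions in terms of matrices -/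

section Enumeration

variable {T : Set ℤ}

lemma isGreatest_tEnum_zero (hbdd : BddAbove T) (hne : ∀ b, (T ∩ Set.Iio b).Nonempty) :
    IsGreatest T (tEnum T 0) :=
  ⟨Int.csSup_mem ((hne 0).mono Set.inter_subset_left) hbdd, fun _ hz => le_csSup hbdd hz⟩

lemma isGreatest_tEnum_succ (hbdd : BddAbove T) (hne : ∀ b, (T ∩ Set.Iio b).Nonempty) (x : ℕ) :
    IsGreatest (T ∩ Set.Iio (tEnum T x)) (tEnum T (x + 1)) :=
  have hbdd' := hbdd.mono Set.inter_subset_left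
  ⟨Int.csSup_mem (hne _) hbdd', fun _ hz => le_csSup hbdd' hz⟩

lemma strictAnti_tEnum (hbdd : BddAbove T) (hne : ∀ b, (T ∩ Set.Iio b).Nonempty) :
    StrictAnti (tEnum T) :=
  strictAnti_nat_of_succ_lt fun x => (isGreatest_tEnum_succ hbdd hne x).1.2

lemma exists_tEnum_eq_of_le (hbdd : BddAbove T) (hne : ∀ b, (T ∩ Set.Iio b).Nonempty) {x : ℕ}
    {z : ℤ} (hz : z ∈ T) (h : tEnum T x ≤ z) : ∃ y ≤ x, tEnum T y = z := by
  induction x with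
  | zero => exact ⟨0, le_rfl, h.antisymm ((isGreatest_tEnum_zero hbdd hne).2 hz)⟩
  | succ x ih =>
    rcases le_or_gt (tEnum T x) z with hle | hlt
    · obtain ⟨y, hy, rfl⟩ := ih hle
      exact ⟨y, by omega, rfl⟩
    · exact ⟨x + 1, le_rfl, h.antisymm ((isGreatest_tEnum_succ hbdd hne x).2 ⟨hz, hlt⟩)⟩

lemma tEnum_range {f : ℕ → ℤ} (hf : StrictAnti f) : tEnum (Set.range f) = f := by
  ext1 x
  induction x with
  | zero =>
    exact IsGreatest.csSup_eq ⟨⟨0, rfl⟩, Set.forall_mem_range.mpr fun y => hf.antitone y.zero_le⟩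
  | succ x ih =>
    rw [tEnum, ih]
    refine IsGreatest.csSup_eq ⟨⟨⟨x + 1, rfl⟩, hf x.lt_succ_self⟩, ?_⟩
    rintro _ ⟨⟨y, rfl⟩, hy⟩
    exact hf.antitone (hf.lt_iff_gt.mp hy)

lemma range_update_of_injective {α β : Type*} [DecidableEq α] {f : α → β}
    (hf : Function.Injective f) (x : α) (b : β) :
    Set.range (Function.update f x b) = insert b (Set.range f \ {f x}) := by
  ext z
  simp only [Set.mem_range, Set.mem_insert_iff, Set.mem_sdiff, Set.mem_singleton_iff]
  constructor
  · rintro ⟨y, rfl⟩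
    rcases eq_or_ne y x with rfl | hyx
    · simp
    · simp [hyx, hf.eq_iff]
  · rintro (rfl | ⟨⟨y, rfl⟩, hy⟩)
    · exact ⟨x, by simp⟩
    · exact ⟨y, Function.update_of_ne (fun h => hy (congrArg f h)) _ _⟩

end Enumeration

section Beads

variable {e : ℕ} {R : Fin e → Bool} {i : Fin e} {x : ℕ}

/-- The β-set of the partition given by a row. -/
def betaSet (R : Fin e → Bool) : Set ℤ := {z | z < 0 ∨ ∃ i : Fin e, (i.1 : ℤ) = z ∧ R i = true}

/-- The elements of the β-set of a row in decreasing order. -/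
def bead (R : Fin e → Bool) : ℕ → ℤ := tEnum (betaSet R)

/-- The number of entries `1` in a row. -/
def beadCount (R : Fin e → Bool) : ℕ := (Finset.univ.filter fun i => R i = true).card

/-- The parts of the partition given by a row, as integers. -/
def part (R : Fin e → Bool) (x : ℕ) : ℤ := bead R x + (x + 1) - beadCount R

lemma bddAbove_betaSet (R : Fin e → Bool) : BddAbove (betaSet R) := by
  refine ⟨e, ?_⟩
  rintro z (h | ⟨i, rfl, -⟩) <;> omega

lemma betaSet_inter_Iio_nonempty (R : Fin e → Bool) (b : ℤ) : (betaSet R ∩ Set.Iio b).Nonempty :=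
  ⟨min (-1) (b - 1), .inl (by omega), by simp⟩

lemma strictAnti_bead (R : Fin e → Bool) : StrictAnti (bead R) :=
  strictAnti_tEnum (bddAbove_betaSet R) (betaSet_inter_Iio_nonempty R)

lemma bead_mem_betaSet (R : Fin e → Bool) (x : ℕ) : bead R x ∈ betaSet R := by
  cases x with
  | zero => exact (isGreatest_tEnum_zero (bddAbove_betaSet R) (betaSet_inter_Iio_nonempty R)).1
  | succ x =>
    exact (isGreatest_tEnum_succ (bddAbove_betaSet R) (betaSet_inter_Iio_nonempty R) x).1.1

lemma exists_bead_eq_of_le {z : ℤ} (hz : z ∈ betaSet R) (h : bead R x ≤ z) :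
    ∃ y ≤ x, bead R y = z :=
  exists_tEnum_eq_of_le (bddAbove_betaSet R) (betaSet_inter_Iio_nonempty R) hz h

lemma bead_le (R : Fin e → Bool) (x : ℕ) : bead R x ≤ bead R 0 - x := by
  induction x with
  | zero => simp
  | succ x ih =>
    have hlt : bead R (x + 1) < bead R x := strictAnti_bead R x.lt_succ_self
    push_cast
    omega

lemma range_bead (R : Fin e → Bool) : Set.range (bead R) = betaSet R := by
  refine (Set.range_subset_iff.mpr (bead_mem_betaSet R)).antisymm fun z hz => ?_
  have hle := bead_le R (bead R 0 - z).toNat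
  obtain ⟨y, -, hy⟩ := exists_bead_eq_of_le hz (x := (bead R 0 - z).toNat) (by
    have := (isGreatest_tEnum_zero (bddAbove_betaSet R) (betaSet_inter_Iio_nonempty R)).2 hz
    rw [← bead] at this
    omega)
  exact ⟨y, hy⟩

lemma natCast_mem_betaSet_iff : ((i.1 : ℤ) ∈ betaSet R) ↔ R i = true := by
  refine ⟨?_, fun h => .inr ⟨i, rfl, h⟩⟩
  rintro (h | ⟨j, hj, h⟩)
  · omega
  · rwa [← Fin.ext (Int.ofNat_inj.mp hj)]

lemma antitone_part (R : Fin e → Bool) : Antitone (part R) :=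
  antitone_nat_of_succ_le fun x => by
    have : bead R (x + 1) < bead R x := strictAnti_bead R x.lt_succ_self
    simp only [part]
    push_cast
    omega

lemma part_nonneg_of_bead_neg (hx : bead R x < 0) : 0 ≤ part R x := by
  have hsub : Finset.Ico (bead R x) 0 ∪
      (Finset.univ.filter fun i => R i = true).image (fun i : Fin e => (i.1 : ℤ)) ⊆
      (Finset.range (x + 1)).image (bead R) := by
    intro z hz
    have hz' : z ∈ betaSet R ∧ bead R x ≤ z := by
      rcases Finset.mem_union.mp hz with hz | hz
      · rw [Finset.mem_Ico] at hz
        exact ⟨.inl hz.2, hz.1⟩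
      · obtain ⟨i, hi, rfl⟩ := Finset.mem_image.mp hz
        exact ⟨natCast_mem_betaSet_iff.mpr (Finset.mem_filter.mp hi).2, by omega⟩
    obtain ⟨y, hy, rfl⟩ := exists_bead_eq_of_le hz'.1 hz'.2
    exact Finset.mem_image_of_mem _ (Finset.mem_range.mpr (by omega))
  have hdisj : Disjoint (Finset.Ico (bead R x) 0)
      ((Finset.univ.filter fun i => R i = true).image fun i : Fin e => (i.1 : ℤ)) := by
    simp only [Finset.disjoint_left, Finset.mem_Ico, Finset.mem_image]
    rintro _ hz ⟨i, -, rfl⟩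
    omega
  have hinj : Function.Injective fun i : Fin e => (i.1 : ℤ) :=
    Nat.cast_injective.comp Fin.val_injective
  have hcard := (Finset.card_le_card hsub).trans Finset.card_image_le
  rw [Finset.card_union_of_disjoint hdisj, Finset.card_image_of_injective _ hinj,
    Int.card_Ico, Finset.card_range, ← beadCount] at hcard
  simp only [part]
  omega

lemma part_nonneg (R : Fin e → Bool) (x : ℕ) : 0 ≤ part R x := by
  set y := x + (bead R 0).toNat + 1
  have hy : bead R y < 0 := by
    have := bead_le R y
    omega
  exact (part_nonneg_of_bead_neg hy).trans (antitone_part R (by omega))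

/-- The bead in column `i` of a row can be moved to the left. -/
def RemovableAt (R : Fin e → Bool) (i : Fin e) : Prop := R (colPred i) = false ∧ R i = true

/-- A bead of a row can be moved to the right into column `i`. -/
def AddableAt (R : Fin e → Bool) (i : Fin e) : Prop := R (colPred i) = true ∧ R i = false

/-- Move the bead in column `i` of a row to the left. -/
def moveLeft (R : Fin e → Bool) (i : Fin e) : Fin e → Bool :=
  Function.update (Function.update R i false) (colPred i) true

lemma natCast_colPred (hi : i.1 ≠ 0) : ((colPred i).1 : ℤ) = i.1 - 1 := by
  simp only [colPred]
  omega

lemma beadCount_moveLeft (hR : RemovableAt R i) :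
    beadCount (moveLeft R i) = beadCount R := by
  have hset : (Finset.univ.filter fun j => moveLeft R i j = true) =
      insert (colPred i) ((Finset.univ.filter fun j => R j = true).erase i) := by
    ext j
    rw [Finset.mem_filter_univ, Finset.mem_insert, Finset.mem_erase, Finset.mem_filter_univ]
    rcases eq_or_ne j (colPred i) with rfl | hj
    · simp [moveLeft]
    rcases eq_or_ne j i with rfl | hji
    · simp [moveLeft, hj]
    · simp [moveLeft, hj, hji]
  rw [beadCount, hset, Finset.card_insert_of_notMem (by simp [hR.1]),
    Finset.card_erase_add_one (by simp [hR.2]), beadCount]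

lemma betaSet_moveLeft (hi : i.1 ≠ 0) :
    betaSet (moveLeft R i) = insert (i.1 - 1 : ℤ) (betaSet R \ {(i.1 : ℤ)}) := by
  have hpred := natCast_colPred hi
  ext z
  by_cases hz : ∃ j : Fin e, (j.1 : ℤ) = z
  · obtain ⟨j, rfl⟩ := hz
    rw [natCast_mem_betaSet_iff, Set.mem_insert_iff, Set.mem_sdiff, natCast_mem_betaSet_iff,
      ← hpred, Set.mem_singleton_iff, Int.ofNat_inj, Int.ofNat_inj, Fin.val_inj, Fin.val_inj]
    simp only [moveLeft, Function.update_apply]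
    grind
  · have hne : z ≠ i.1 - 1 ∧ z ≠ i.1 :=
      ⟨fun h => hz ⟨colPred i, hpred.trans h.symm⟩, fun h => hz ⟨i, h.symm⟩⟩
    simp only [betaSet, Set.mem_insert_iff, Set.mem_sdiff, Set.mem_singleton_iff, hne,
      not_false_iff, and_true, false_or, Set.mem_ofPred_eq]
    grind

lemma bead_moveLeft (hi : i.1 ≠ 0) (hR : RemovableAt R i) (hx : bead R x = i.1) :
    bead (moveLeft R i) = Function.update (bead R) x (i.1 - 1) := by
  have hanti : StrictAnti (Function.update (bead R) x (i.1 - 1 : ℤ)) := by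
    refine strictAnti_nat_of_succ_lt fun n => ?_
    have hn : bead R (n + 1) < bead R n := strictAnti_bead R n.lt_succ_self
    have hne : bead R (n + 1) ≠ i.1 - 1 := fun h => by
      have hmem := bead_mem_betaSet R (n + 1)
      rw [h, ← natCast_colPred hi, natCast_mem_betaSet_iff, hR.1] at hmem
      exact absurd hmem (by decide)
    simp only [Function.update_apply]
    split_ifs <;> grind
  rw [bead, betaSet_moveLeft hi, ← range_bead, ← hx,
    ← range_update_of_injective (strictAnti_bead R).injective, hx, tEnum_range hanti]

end Beads

section KleshchevMatrix

variable {e r : ℕ} {M : Fin r → Fin e → Bool} {A : Node r} {i : Fin e}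

/-- The matrices `M` for which `Pt(0, M)` may be emptied by removing good nodes. Removing a node
amounts to moving a bead to the left; of its being good, only the part of normality that concerns
nodes in columns of `M` and in lower components is recorded. -/
inductive IsKleshchevMatrix : (Fin r → Fin e → Bool) → Prop
  | of_initial (M : Fin r → Fin e → Bool)
      (h : ∀ s, ∃ n : ℕ, ∀ i, M s i = true ↔ i.1 < n) : IsKleshchevMatrix M
  | step (M : Fin r → Fin e → Bool) (s : Fin r) (i : Fin e) (hi : i.1 ≠ 0)
      (hrem : RemovableAt (M s) i)
      (hnormal : ∀ t, s < t → AddableAt (M t) i → ∃ t', s < t' ∧ t' < t ∧ RemovableAt (M t') i)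
      (h : IsKleshchevMatrix (Function.update M s (moveLeft (M s) i))) : IsKleshchevMatrix M

lemma rank_zero (i : Fin e) : rank (fun _ => 0) i = i := by
  have hfilter : (Finset.univ.filter fun j : Fin e => j < i) = Finset.Iio i := by
    ext j
    simp
  ext
  simp [rank, prec, hfilter]

lemma tset_zero (M : Fin r → Fin e → Bool) (s : Fin r) :
    Tset (fun _ => 0) M s = betaSet (M s) := by
  ext z
  simp only [Tset, betaSet, beads, rank_zero, zero_add, Set.mem_ofPred_eq]
  refine or_congr_right ⟨?_, ?_⟩
  · rintro ⟨h0, hlt, hdiv⟩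
    split_ifs at hdiv with hM
    · have hz : z.toNat < e := by rwa [Nat.div_lt_iff_lt_mul (by omega), one_mul] at hdiv
      exact ⟨_, by simp [Nat.mod_eq_of_lt hz, h0], hM⟩
    · exact absurd hdiv (Nat.not_lt_zero _)
  · rintro ⟨i, rfl, hM⟩
    simp [Nat.mod_eq_of_lt i.2, Nat.div_eq_of_lt i.2, hM]

lemma nsum_zero (M : Fin r → Fin e → Bool) (s : Fin r) :
    nsum (fun _ => 0) M s = beadCount (M s) := by
  simp [nsum, beads, rank_zero, beadCount]

lemma ptPart_zero (M : Fin r → Fin e → Bool) (s : Fin r) (x : ℕ) :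
    PtPart (fun _ => 0) M s x = (part (M s) x).toNat := by
  rw [PtPart, tset_zero, nsum_zero, part, bead]

lemma res_ptCharge_zero (M : Fin r → Fin e → Bool) (A : Node r) :
    res (PtCharge (fun _ => 0) M) A =
      ((bead (M A.1) A.2.1 + 1 + (A.2.2 - part (M A.1) A.2.1) : ℤ) : ZMod e) := by
  simp only [res, PtCharge, nsum_zero, part]
  push_cast
  ring

lemma Removable.exists_removableAt (h : Removable (PtPart (fun _ => 0) M) A) :
    ∃ i : Fin e, i.1 ≠ 0 ∧ RemovableAt (M A.1) i ∧ bead (M A.1) A.2.1 = i.1 ∧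
      res (PtCharge (fun _ => 0) M) A = (i.1 : ZMod e) := by
  obtain ⟨s, x, y⟩ := A
  obtain ⟨hlast, hdrop⟩ := h
  simp only [ptPart_zero] at hlast hdrop
  have hpart : part (M s) x = y + 1 := by omega
  have hgap : bead (M s) (x + 1) + 1 < bead (M s) x := by
    simp only [part] at hdrop hpart
    push_cast at hdrop
    omega
  have hnotMem : bead (M s) x - 1 ∉ betaSet (M s) := by
    rw [← range_bead]
    rintro ⟨w, hw⟩
    have h1 : x < w := (strictAnti_bead (M s)).lt_iff_gt.mp (by omega)
    have h2 : w < x + 1 := (strictAnti_bead (M s)).lt_iff_gt.mp (by omega)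
    omega
  obtain hneg | ⟨i, hi, hM⟩ := bead_mem_betaSet (M s) x
  · exact absurd (.inl (by omega)) hnotMem
  have hi0 : i.1 ≠ 0 := fun h0 => hnotMem (.inl (by omega))
  refine ⟨i, hi0, ⟨?_, hM⟩, hi.symm, ?_⟩
  · rw [← hi, ← natCast_colPred hi0, natCast_mem_betaSet_iff] at hnotMem
    simpa using hnotMem
  · rw [res_ptCharge_zero]
    simp [hpart, ← hi]

lemma AddableAt.exists_addable {t : Fin r} (hi : i.1 ≠ 0) (h : AddableAt (M t) i) :
    ∃ B : Node r, B.1 = t ∧ Addable (PtPart (fun _ => 0) M) B ∧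
      res (PtCharge (fun _ => 0) M) B = (i.1 : ZMod e) := by
  have hmem : (i.1 - 1 : ℤ) ∈ Set.range (bead (M t)) := by
    rw [range_bead, ← natCast_colPred hi]
    exact natCast_mem_betaSet_iff.mpr h.1
  obtain ⟨x, hx⟩ := hmem
  have hnonneg := part_nonneg (M t) x
  refine ⟨(t, x, (part (M t) x).toNat), rfl, ⟨by simp only [ptPart_zero], ?_⟩, ?_⟩
  · simp only [ptPart_zero]
    cases x with
    | zero => exact .inl rfl
    | succ x =>
      have hlt : bead (M t) (x + 1) < bead (M t) x := strictAnti_bead _ x.lt_succ_self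
      have hne : bead (M t) x ≠ i.1 := fun hxi => by
        have hmem := bead_mem_betaSet (M t) x
        rw [hxi, natCast_mem_betaSet_iff, h.2] at hmem
        exact absurd hmem (by decide)
      have hpart : part (M t) (x + 1) < part (M t) x := by
        simp only [part]
        push_cast
        omega
      right
      simp only [Nat.add_sub_cancel]
      omega
  · rw [res_ptCharge_zero]
    simp [hx, hnonneg]

lemma natCast_zmod_injective {i j : Fin e} (h : (i.1 : ZMod e) = (j.1 : ZMod e)) : i = j := by
  rw [ZMod.natCast_eq_natCast_iff', Nat.mod_eq_of_lt i.2, Nat.mod_eq_of_lt j.2] at h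
  exact Fin.ext h

lemma exists_removableAt_of_normal (hA : Normal (PtCharge (fun _ => 0) M) (PtPart (fun _ => 0) M) A)
    (hi : i.1 ≠ 0) (hbead : bead (M A.1) A.2.1 = i.1)
    (hres : res (PtCharge (fun _ => 0) M) A = (i.1 : ZMod e)) {t : Fin r} (ht : A.1 < t)
    (hadd : AddableAt (M t) i) : ∃ t', A.1 < t' ∧ t' < t ∧ RemovableAt (M t') i := by
  obtain ⟨B, rfl, hB, hBres⟩ := hadd.exists_addable hi
  have hcard := hA.2 B hB (hBres.trans hres.symm) (.inl ht)
  obtain ⟨C, hC, hCres, hAC, hCB⟩ := Set.nonempty_of_ncard_ne_zero (Nat.ne_zero_of_lt hcard)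
  obtain ⟨j, -, hrem, hCbead, hj⟩ := hC.exists_removableAt
  obtain rfl := natCast_zmod_injective (hj.symm.trans (hCres.trans hres))
  refine ⟨C.1, ?_, ?_, hrem⟩
  · refine hAC.resolve_right fun ⟨hs, hx⟩ => hx.ne ?_
    exact (strictAnti_bead (M A.1)).injective (hbead.trans (hs ▸ hCbead.symm))
  · refine hCB.resolve_right fun ⟨hs, _⟩ => ?_
    exact absurd (hs ▸ hrem.2) (by simp [hadd.2])

lemma isKleshchevMatrix_of_ptPart_eq_zero (h : PtPart (fun _ => 0) M = fun _ _ => 0) :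
    IsKleshchevMatrix M := by
  refine .of_initial M fun s => ⟨beadCount (M s), fun i => ?_⟩
  have hbead : ∀ x, bead (M s) x = beadCount (M s) - 1 - x := by
    intro x
    have hx := congrFun (congrFun h s) x
    have hnonneg := part_nonneg (M s) x
    simp only [ptPart_zero, part] at hx hnonneg
    omega
  rw [← natCast_mem_betaSet_iff, ← range_bead]
  refine ⟨?_, fun hi => ⟨beadCount (M s) - 1 - i.1, ?_⟩⟩
  · rintro ⟨x, hx⟩
    rw [hbead] at hx
    omega
  · rw [hbead]
    omega

lemma ptCharge_moveLeft {s : Fin r} (hrem : RemovableAt (M s) i) :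
    PtCharge (fun _ => 0) (Function.update M s (moveLeft (M s) i)) = PtCharge (fun _ => 0) M := by
  ext1 t
  rw [PtCharge, PtCharge, nsum_zero, nsum_zero]
  rcases eq_or_ne t s with rfl | hts
  · rw [Function.update_self, beadCount_moveLeft hrem]
  · rw [Function.update_of_ne hts]

lemma ptPart_moveLeft (hi : i.1 ≠ 0) (hrem : RemovableAt (M A.1) i)
    (hbead : bead (M A.1) A.2.1 = i.1) :
    PtPart (fun _ => 0) (Function.update M A.1 (moveLeft (M A.1) i)) =
      removeNode (PtPart (fun _ => 0) M) A := by
  ext t x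
  rw [removeNode, ptPart_zero, ptPart_zero]
  rcases eq_or_ne t A.1 with rfl | ht
  · simp only [Function.update_self, part, bead_moveLeft hi hrem hbead, beadCount_moveLeft hrem,
      Function.update_apply, true_and]
    split_ifs with hx
    · rw [hx, hbead]
      omega
    · rfl
  · rw [Function.update_of_ne ht, if_neg fun h => ht h.1]

theorem IsKleshchev.isKleshchevMatrix
    (h : IsKleshchev (PtCharge (fun _ => 0) M) (PtPart (fun _ => 0) M)) : IsKleshchevMatrix M := by
  generalize ha : PtCharge (fun _ => 0) M = a at h
  generalize hlam : PtPart (fun _ => 0) M = lam at h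
  induction h generalizing M with
  | empty => exact isKleshchevMatrix_of_ptPart_eq_zero hlam
  | step lam A hA _ ih =>
    subst ha hlam
    obtain ⟨i, hi, hrem, hbead, hres⟩ := hA.1.1.exists_removableAt
    exact .step M A.1 i hi hrem (fun t => exists_removableAt_of_normal hA.1 hi hbead hres)
      (ih (ptCharge_moveLeft hrem) (ptPart_moveLeft hi hrem hbead))

end KleshchevMatrix

section Heights

variable {e r : ℕ} {R S T : Fin e → Bool} {M : Fin r → Fin e → Bool} {a b c : Fin r} {i : Fin e}
  {n C : ℕ} {ρ : ℕ → ℕ → Prop}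

/-- The number of entries `1` of a row to the left of column `n`. -/
def height (R : Fin e → Bool) (n : ℕ) : ℕ := (Finset.univ.filter fun i => R i = true ∧ i.1 < n).card

lemma height_update_true (h : R i = false) (n : ℕ) :
    height (Function.update R i true) n = height R n + if i.1 < n then 1 else 0 := by
  unfold height
  split_ifs with hi
  · rw [← Finset.card_insert_of_notMem (a := i) (by simp [h])]
    congr 1
    grind
  · rw [add_zero]
    congr 1
    grind

lemma height_moveLeft (hi : i.1 ≠ 0) (h : RemovableAt R i) (n : ℕ) :
    height (moveLeft R i) n = height R n + if n = i.1 then 1 else 0 := by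
  set R' := Function.update R i false with hR'
  have hR : R = Function.update R' i true := by simp [hR', ← h.2]
  have hpred : R' (colPred i) = false := by simp [hR', colPred_ne hi, h.1]
  rw [moveLeft, ← hR', height_update_true hpred, hR, height_update_true (by simp [hR']), colPred]
  grind

lemma height_succ (R : Fin e → Bool) (i : Fin e) :
    height R (i.1 + 1) = height R i.1 + if R i = true then 1 else 0 := by
  unfold height
  split_ifs with hR
  · rw [← Finset.card_insert_of_notMem (a := i) (by simp)]
    congr 1
    grind
  · rw [add_zero]
    congr 1
    grind

lemma height_eq_colPred (R : Fin e → Bool) (hi : i.1 ≠ 0) :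
    height R i.1 = height R (i.1 - 1) + if R (colPred i) = true then 1 else 0 := by
  rw [show i.1 - 1 = (colPred i).1 from rfl, ← height_succ, colPred, Nat.sub_add_cancel (by omega)]

lemma height_of_initial {k : ℕ} (h : ∀ i, R i = true ↔ i.1 < k) (n : ℕ) :
    height R n = min n (min k e) := by
  simp only [height, h, ← lt_min_iff]
  rw [Fin.card_filter_val_lt]
  omega

lemma height_bounds (R : Fin e → Bool) (hi : i.1 ≠ 0) :
    height R (i.1 - 1) ≤ height R i.1 ∧ height R i.1 ≤ height R (i.1 - 1) + 1 ∧
      height R i.1 ≤ height R (i.1 + 1) ∧ height R (i.1 + 1) ≤ height R i.1 + 1 := by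
  have hpred := height_eq_colPred R hi
  have hsucc := height_succ R i
  grind

lemma removableAt_iff_height (hi : i.1 ≠ 0) :
    RemovableAt R i ↔
      height R i.1 = height R (i.1 - 1) ∧ height R (i.1 + 1) = height R i.1 + 1 := by
  have hpred := height_eq_colPred R hi
  have hsucc := height_succ R i
  grind [RemovableAt]

lemma addableAt_iff_height (hi : i.1 ≠ 0) :
    AddableAt R i ↔
      height R i.1 = height R (i.1 - 1) + 1 ∧ height R (i.1 + 1) = height R i.1 := by
  have hpred := height_eq_colPred R hi
  have hsucc := height_succ R i
  grind [AddableAt]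

lemma height_update_moveLeft {s : Fin r} (hi : i.1 ≠ 0) (h : RemovableAt (M s) i) (t : Fin r)
    (n : ℕ) : height (Function.update M s (moveLeft (M s) i) t) n =
      height (M t) n + if t = s ∧ n = i.1 then 1 else 0 := by
  rcases eq_or_ne t s with rfl | hts
  · simp [height_moveLeft hi h]
  · simp [hts]

lemma IsKleshchevMatrix.height_le_add (hM : IsKleshchevMatrix M) (hab : b.1 = a.1 + 1)
    (hC : height (M b) e ≤ height (M a) e + C) (n : ℕ) :
    height (M b) n ≤ height (M a) n + C := by
  induction hM generalizing n with
  | of_initial M h =>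
    obtain ⟨k, hk⟩ := h a
    obtain ⟨l, hl⟩ := h b
    simp only [height_of_initial hk, height_of_initial hl] at hC ⊢
    omega
  | step M s i hi hrem hnormal _ ih =>
    simp only [height_update_moveLeft hi hrem, i.2.ne', and_false, if_false, add_zero] at ih
    have ih := ih hC
    rcases eq_or_ne n i.1 with rfl | hn
    · have hadd : s = a → ¬ AddableAt (M b) i := by
        rintro rfl hadd
        obtain ⟨t, hst, htb, -⟩ := hnormal b (by omega) hadd
        omega
      have hpred := ih (i.1 - 1)
      have hsucc := ih (i.1 + 1)
      have ih := ih i.1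
      have ha := height_bounds (M a) hi
      have hb := height_bounds (M b) hi
      rw [addableAt_iff_height hi] at hadd
      rw [removableAt_iff_height hi] at hrem
      grind
    · simpa [hn] using ih n

/-- Along all pairs of columns related by `ρ`, the heights of the rows `R`, `S` and `T` satisfy the
inequality preserved by moves in rows that are consecutive in a Kleshchev matrix. -/
def HeightGap (ρ : ℕ → ℕ → Prop) (C : ℕ) (R S T : Fin e → Bool) : Prop :=
  ∀ ⦃m n⦄, ρ m n → height T n + height S m ≤ height R m + height S n + C

lemma HeightGap.of_moveLeft_first (hρ : ρ = (· ≤ ·) ∨ ρ = (· ≥ ·)) (hi : i.1 ≠ 0)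
    (hR : RemovableAt R i) (hS : ¬ AddableAt S i) (hT : AddableAt T i → RemovableAt S i)
    (h : HeightGap ρ C (moveLeft R i) S T) : HeightGap ρ C R S T := by
  intro m n hmn
  have ih : ∀ m n, ρ m n → _ := fun m n hmn => h hmn
  simp only [height_moveLeft hi hR] at ih
  rcases eq_or_ne m i.1 with rfl | hm
  · rw [addableAt_iff_height hi] at hS hT
    rw [removableAt_iff_height hi] at hR hT
    have hS' := height_bounds S hi
    have hT' := height_bounds T hi
    have h1 := ih (i.1 - 1) (i.1 - 1)
    have h2 := ih (i.1 + 1) (i.1 + 1)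
    have h3 := ih (i.1 - 1) n
    have h4 := ih (i.1 + 1) n
    rcases eq_or_ne n i.1 with rfl | hn <;> rcases hρ with rfl | rfl <;> grind
  · simpa [hm] using ih m n hmn

lemma HeightGap.of_moveLeft_second (hρ : ρ = (· ≤ ·) ∨ ρ = (· ≥ ·)) (hi : i.1 ≠ 0)
    (hS : RemovableAt S i) (hT : ¬ AddableAt T i) (h : HeightGap ρ C R (moveLeft S i) T) :
    HeightGap ρ C R S T := by
  intro m n hmn
  have ih : ∀ m n, ρ m n → _ := fun m n hmn => h hmn
  simp only [height_moveLeft hi hS] at ih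
  have h3 := ih m n hmn
  rcases eq_or_ne n i.1 with rfl | hn
  · rw [addableAt_iff_height hi] at hT
    rw [removableAt_iff_height hi] at hS
    have hT' := height_bounds T hi
    have h1 := ih m (i.1 - 1)
    have h2 := ih m (i.1 + 1)
    rcases eq_or_ne m i.1 with rfl | hm <;> rcases hρ with rfl | rfl <;> grind
  · grind

lemma HeightGap.of_moveLeft_third (hi : i.1 ≠ 0) (hT : RemovableAt T i)
    (h : HeightGap ρ C R S (moveLeft T i)) : HeightGap ρ C R S T := by
  intro m n hmn
  have h' := h hmn
  rw [height_moveLeft hi hT] at h'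
  omega

lemma HeightGap.of_initial (hρ : (ρ = (· ≤ ·) ∧ height R e ≤ height S e ∧ height T e ≤ height S e) ∨
      (ρ = (· ≥ ·) ∧ height S e ≤ height R e ∧ height S e ≤ height T e))
    (hC : height T e ≤ height R e + C) {k l o : ℕ} (hR : ∀ i, R i = true ↔ i.1 < k)
    (hS : ∀ i, S i = true ↔ i.1 < l) (hT : ∀ i, T i = true ↔ i.1 < o) : HeightGap ρ C R S T := by
  intro m n hmn
  simp only [height_of_initial hR, height_of_initial hS, height_of_initial hT] at hρ hC ⊢
  rcases hρ with ⟨rfl, hρ⟩ | ⟨rfl, hρ⟩ <;> omega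

lemma IsKleshchevMatrix.heightGap (hM : IsKleshchevMatrix M)
    (hab : b.1 = a.1 + 1) (hbc : c.1 = b.1 + 1)
    (hρ : (ρ = (· ≤ ·) ∧ height (M a) e ≤ height (M b) e ∧ height (M c) e ≤ height (M b) e) ∨
      (ρ = (· ≥ ·) ∧ height (M b) e ≤ height (M a) e ∧ height (M b) e ≤ height (M c) e))
    (hC : height (M c) e ≤ height (M a) e + C) : HeightGap ρ C (M a) (M b) (M c) := by
  have hba : b ≠ a := by grind
  have hca : c ≠ a := by grind
  have hcb : c ≠ b := by grind
  induction hM with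
  | of_initial M h =>
    choose k hk using h
    exact .of_initial hρ hC (hk a) (hk b) (hk c)
  | step M s i hi hrem hnormal _ ih =>
    simp only [height_update_moveLeft hi hrem, i.2.ne', and_false, if_false, add_zero] at ih
    have ih := ih hρ hC
    have hρ' : ρ = (· ≤ ·) ∨ ρ = (· ≥ ·) := hρ.imp And.left And.left
    rcases eq_or_ne s a with rfl | hsa
    · simp only [Function.update_self, ne_eq, hba, hca, not_false_eq_true,
        Function.update_of_ne] at ih
      refine ih.of_moveLeft_first hρ' hi hrem (fun hadd => ?_) fun hadd => ?_
      · obtain ⟨t, hst, htb, -⟩ := hnormal b (by omega) hadd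
        omega
      · obtain ⟨t, hst, htc, ht⟩ := hnormal c (by omega) hadd
        rwa [show b = t by omega]
    rcases eq_or_ne s b with rfl | hsb
    · simp only [Function.update_self, ne_eq, hba.symm, hcb, not_false_eq_true,
        Function.update_of_ne] at ih
      refine ih.of_moveLeft_second hρ' hi hrem fun hadd => ?_
      obtain ⟨t, hst, htb, -⟩ := hnormal c (by omega) hadd
      omega
    rw [Function.update_of_ne hsa.symm, Function.update_of_ne hsb.symm] at ih
    rcases eq_or_ne s c with rfl | hsc
    · exact (Function.update_self s (moveLeft (M s) i) M ▸ ih).of_moveLeft_third hi hrem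
    · rwa [Function.update_of_ne hsc.symm] at ih

end Heights

section Obstruction

variable {e : ℕ} {u : Fin 6} {P Q S : Finset (Fin e)} {c h x : Fin e} {n : ℕ}

/-- The number of elements of a set of columns to the left of column `n`. -/
def countBelow (S : Finset (Fin e)) (n : ℕ) : ℕ := ∑ x ∈ S, if x.1 < n then 1 else 0

lemma height_matrixOf_markedColumns (u : Fin 6) (s : Fin 3) (n : ℕ) :
    height (matrixOf (markedColumns u P Q c h) s) n =
      countBelow (markedRow P Q c h (role u s)) n := by
  rw [countBelow, ← Finset.card_filter, height]
  congr 1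
  ext x
  simp [matrixOf, markedColumns]

lemma countBelow_singleton (c : Fin e) (n : ℕ) :
    countBelow {c} n = if c.1 < n then 1 else 0 :=
  Finset.sum_singleton _ _

lemma countBelow_erase (hx : x ∈ S) (n : ℕ) :
    countBelow (S.erase x) n + (if x.1 < n then 1 else 0) = countBelow S n :=
  Finset.sum_erase_add _ _ hx

lemma countBelow_union (hPQ : Disjoint P Q) (n : ℕ) :
    countBelow (P ∪ Q) n = countBelow P n + countBelow Q n :=
  Finset.sum_union hPQ

lemma countBelow_insert (hx : x ∉ S) (n : ℕ) :
    countBelow (insert x S) n = (if x.1 < n then 1 else 0) + countBelow S n :=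
  Finset.sum_insert hx

lemma countBelow_markedRow_one (hPQ : Disjoint P Q) (hch : ValidMarks P Q c h) (n : ℕ) :
    countBelow (markedRow P Q c h 1) n + (if c.1 < n then 1 else 0) =
      countBelow P n + if h.1 < n then 1 else 0 := by
  by_cases hc : c ∈ P
  · have hh : h ∉ P.erase c := by
      rcases hch with ⟨rfl, -⟩ | ⟨-, hh⟩
      · simp
      · simp [Finset.disjoint_right.mp hPQ hh]
    simp only [markedRow, Matrix.cons_val_one, Matrix.cons_val_zero, if_pos hc,
      countBelow_insert hh, ← countBelow_erase hc n]
    ring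
  · obtain ⟨rfl, -⟩ := hch.resolve_right fun h => hc h.1
    simp [markedRow, hc]

lemma countBelow_markedRow_two (hPQ : Disjoint P Q) (hch : ValidMarks P Q c h) (n : ℕ) :
    countBelow (markedRow P Q c h 2) n + (if h.1 < n then 1 else 0) =
      countBelow P n + countBelow Q n := by
  have hh : h ∈ P ∪ Q := by
    rcases hch with ⟨rfl, hc⟩ | ⟨-, hh⟩
    · simpa using hc
    · simp [hh]
  rw [← countBelow_union hPQ, ← countBelow_erase hh]
  rfl

lemma countBelow_succ (S : Finset (Fin e)) (x : Fin e) :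
    countBelow S (x.1 + 1) = countBelow S x.1 + if x ∈ S then 1 else 0 := by
  by_cases hx : x ∈ S
  · have hne : ∀ y ∈ S.erase x, (y.1 < x.1 + 1 ↔ y.1 < x.1) := fun y hy => by grind
    rw [← countBelow_erase hx, ← countBelow_erase hx x.1, countBelow, countBelow,
      Finset.sum_congr rfl fun y hy => if_congr (hne y hy) rfl rfl]
    simp [hx]
  · have hne : ∀ y ∈ S, (y.1 < x.1 + 1 ↔ y.1 < x.1) := fun y hy => by grind
    rw [countBelow, countBelow, Finset.sum_congr rfl fun y hy => if_congr (hne y hy) rfl rfl]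
    simp [hx]

lemma countBelow_pos (h : S.Nonempty) : 0 < countBelow S e := by
  obtain ⟨x, hx⟩ := h
  exact Finset.sum_pos (fun y _ => by simp [y.2]) ⟨x, hx⟩

lemma exists_lt_of_countBelow_pos (h : 0 < countBelow S x.1) : ∃ y ∈ S, y < x := by
  simpa [countBelow, Finset.card_pos, Finset.Nonempty] using h

lemma exists_gt_of_countBelow_lt (h : countBelow S (x.1 + 1) < countBelow S e) :
    ∃ y ∈ S, x < y := by
  by_contra! hle
  exact h.ne (Finset.sum_congr rfl fun y hy => by
    rw [if_pos y.2, if_pos (Nat.lt_succ_of_le (hle y hy))])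

lemma IsKleshchevMatrix.countBelow_le_add
    (hM : IsKleshchevMatrix (matrixOf (markedColumns u P Q c h))) {a b i j : Fin 3}
    (hab : b.1 = a.1 + 1) (ha : role u a = i) (hb : role u b = j) {C : ℕ}
    (hC : countBelow (markedRow P Q c h j) e ≤ countBelow (markedRow P Q c h i) e + C) (n : ℕ) :
    countBelow (markedRow P Q c h j) n ≤ countBelow (markedRow P Q c h i) n + C := by
  subst ha hb
  simp only [← height_matrixOf_markedColumns] at hC ⊢
  exact hM.height_le_add hab hC n

lemma IsKleshchevMatrix.countBelow_gap
    (hM : IsKleshchevMatrix (matrixOf (markedColumns u P Q c h))) {i j k : Fin 3}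
    (hi : role u 0 = i) (hj : role u 1 = j) (hk : role u 2 = k) {ρ : ℕ → ℕ → Prop} {C : ℕ}
    (hρ : (ρ = (· ≤ ·) ∧
        countBelow (markedRow P Q c h i) e ≤ countBelow (markedRow P Q c h j) e ∧
        countBelow (markedRow P Q c h k) e ≤ countBelow (markedRow P Q c h j) e) ∨
      (ρ = (· ≥ ·) ∧
        countBelow (markedRow P Q c h j) e ≤ countBelow (markedRow P Q c h i) e ∧
        countBelow (markedRow P Q c h j) e ≤ countBelow (markedRow P Q c h k) e))
    (hC : countBelow (markedRow P Q c h k) e ≤ countBelow (markedRow P Q c h i) e + C)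
    {m n : ℕ} (hmn : ρ m n) :
    countBelow (markedRow P Q c h k) n + countBelow (markedRow P Q c h j) m ≤
      countBelow (markedRow P Q c h i) m + countBelow (markedRow P Q c h j) n + C := by
  subst hi hj hk
  simp only [← height_matrixOf_markedColumns] at hρ hC ⊢
  exact hM.heightGap rfl rfl hρ hC hmn

lemma countBelow_markedRow (hPQ : Disjoint P Q) (hch : ValidMarks P Q c h) (n : ℕ) :
    (countBelow (markedRow P Q c h 0) n = if c.1 < n then 1 else 0) ∧
      (countBelow (markedRow P Q c h 1) n + (if c.1 < n then 1 else 0) =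
        countBelow P n + if h.1 < n then 1 else 0) ∧
      countBelow (markedRow P Q c h 2) n + (if h.1 < n then 1 else 0) =
        countBelow P n + countBelow Q n :=
  ⟨countBelow_singleton c n, countBelow_markedRow_one hPQ hch n,
    countBelow_markedRow_two hPQ hch n⟩

lemma countBelow_markedRow_top (hPQ : Disjoint P Q) (hch : ValidMarks P Q c h) :
    countBelow (markedRow P Q c h 0) e = 1 ∧
      countBelow (markedRow P Q c h 1) e = countBelow P e ∧
      countBelow (markedRow P Q c h 2) e + 1 = countBelow P e + countBelow Q e := by
  simpa using countBelow_markedRow hPQ hch e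

lemma IsKleshchevMatrix.exists_gt_of_rows_zero_one (hPQ : Disjoint P Q) (hP : P.Nonempty)
    (hch : ValidMarks P Q c h)
    (hM : IsKleshchevMatrix (matrixOf (markedColumns u P Q c h))) {a b : Fin 3}
    (hab : b.1 = a.1 + 1) (ha : role u a = 0) (hb : role u b = 1) (hhQ : h ∈ Q) (hhc : h ≤ c) :
    ∃ y ∈ P, c < y := by
  have hcard := countBelow_pos hP
  obtain ⟨h0, h1, h2⟩ := countBelow_markedRow_top hPQ hch
  have hle := hM.countBelow_le_add hab ha hb (C := countBelow P e - 1) (by omega) c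
  apply exists_gt_of_countBelow_lt
  grind [Finset.disjoint_left, ValidMarks, countBelow_markedRow hPQ hch c.1, countBelow_succ P c]

lemma IsKleshchevMatrix.exists_gt_of_rows_one_two (hPQ : Disjoint P Q) (hQ : Q.Nonempty)
    (hch : ValidMarks P Q c h)
    (hM : IsKleshchevMatrix (matrixOf (markedColumns u P Q c h))) {a b : Fin 3}
    (hab : b.1 = a.1 + 1) (ha : role u a = 1) (hb : role u b = 2) (hcP : c ∈ P) (hle : c ≤ h) :
    ∃ y ∈ Q, h < y := by
  have hcard := countBelow_pos hQ
  obtain ⟨-, h1, h2⟩ := countBelow_markedRow_top hPQ hch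
  have hle := hM.countBelow_le_add hab ha hb (C := countBelow Q e - 1) (by omega) h
  apply exists_gt_of_countBelow_lt
  grind [Finset.disjoint_left, ValidMarks, countBelow_markedRow hPQ hch h.1, countBelow_succ Q h]

lemma IsKleshchevMatrix.exists_lt_of_rows_two_one (hPQ : Disjoint P Q) (hQ : Q.Nonempty)
    (hch : ValidMarks P Q c h)
    (hM : IsKleshchevMatrix (matrixOf (markedColumns u P Q c h))) {a b : Fin 3}
    (hab : b.1 = a.1 + 1) (ha : role u a = 2) (hb : role u b = 1) (hcP : c ∈ P) (hhc : h ≤ c) :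
    ∃ y ∈ Q, y < h := by
  have hcard := countBelow_pos hQ
  obtain ⟨-, h1, h2⟩ := countBelow_markedRow_top hPQ hch
  have hle := hM.countBelow_le_add hab ha hb (C := 0) (by omega) (h + 1)
  apply exists_lt_of_countBelow_pos
  grind [Finset.disjoint_left, ValidMarks, countBelow_markedRow hPQ hch (h.1 + 1),
    countBelow_succ Q h]

lemma IsKleshchevMatrix.exists_lt_of_rows_one_zero (hPQ : Disjoint P Q) (hP : P.Nonempty)
    (hch : ValidMarks P Q c h)
    (hM : IsKleshchevMatrix (matrixOf (markedColumns u P Q c h))) {a b : Fin 3}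
    (hab : b.1 = a.1 + 1) (ha : role u a = 1) (hb : role u b = 0) (hhQ : h ∈ Q) (hle : c ≤ h) :
    ∃ y ∈ P, y < c := by
  have hcard := countBelow_pos hP
  obtain ⟨h0, h1, h2⟩ := countBelow_markedRow_top hPQ hch
  have hle := hM.countBelow_le_add hab ha hb (C := 0) (by omega) (c + 1)
  apply exists_lt_of_countBelow_pos
  grind [Finset.disjoint_left, ValidMarks, countBelow_markedRow hPQ hch (c.1 + 1),
    countBelow_succ P c]

lemma IsKleshchevMatrix.exists_lt_of_rows_two_zero_one (hPQ : Disjoint P Q) (hP : P.Nonempty)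
    (hQ : Q.Nonempty) (hch : ValidMarks P Q c h)
    (hM : IsKleshchevMatrix (matrixOf (markedColumns 1 P Q c h))) (hhc : h ≤ c) :
    ∃ y ∈ Q, y < h := by
  have hcardP := countBelow_pos hP
  have hcardQ := countBelow_pos hQ
  obtain ⟨h0, h1, h2⟩ := countBelow_markedRow_top hPQ hch
  have hgap := fun m n => hM.countBelow_gap (i := 2) (j := 0) (k := 1) rfl rfl rfl
    (ρ := (· ≥ ·)) (C := 0) (m := m) (n := n) (.inr ⟨rfl, by omega, by omega⟩) (by omega)
  apply exists_lt_of_countBelow_pos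
  rcases hhc.eq_or_lt with rfl | hlt
  · have hgap := hgap (h + 1) h (Nat.le_succ _)
    grind [Finset.disjoint_left, ValidMarks, countBelow_markedRow hPQ hch h.1,
      countBelow_markedRow hPQ hch (h.1 + 1), countBelow_succ P h, countBelow_succ Q h]
  · have hgap := hgap (h + 1) (h + 1) le_rfl
    grind [Finset.disjoint_left, ValidMarks, countBelow_markedRow hPQ hch h.1,
      countBelow_markedRow hPQ hch (h.1 + 1), countBelow_succ P h, countBelow_succ Q h]

lemma IsKleshchevMatrix.exists_lt_of_rows_one_two_zero (hPQ : Disjoint P Q) (hP : P.Nonempty)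
    (hQ : Q.Nonempty) (hch : ValidMarks P Q c h)
    (hM : IsKleshchevMatrix (matrixOf (markedColumns 2 P Q c h))) (hle : c ≤ h) :
    ∃ y ∈ P, y < c := by
  have hcardP := countBelow_pos hP
  have hcardQ := countBelow_pos hQ
  obtain ⟨h0, h1, h2⟩ := countBelow_markedRow_top hPQ hch
  have hgap := fun m n => hM.countBelow_gap (i := 1) (j := 2) (k := 0) rfl rfl rfl
    (ρ := (· ≤ ·)) (C := 0) (m := m) (n := n) (.inl ⟨rfl, by omega, by omega⟩) (by omega)
  apply exists_lt_of_countBelow_pos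
  rcases hle.eq_or_lt with rfl | hlt
  · have hgap := hgap c (c + 1) (Nat.le_succ _)
    grind [Finset.disjoint_left, ValidMarks, countBelow_markedRow hPQ hch c.1,
      countBelow_markedRow hPQ hch (c.1 + 1), countBelow_succ P c, countBelow_succ Q c]
  · have hgap := hgap (c + 1) (c + 1) le_rfl
    grind [Finset.disjoint_left, ValidMarks, countBelow_markedRow hPQ hch c.1,
      countBelow_markedRow hPQ hch (c.1 + 1), countBelow_succ P c, countBelow_succ Q c]

lemma IsKleshchevMatrix.exists_gt_of_rows_one_zero_two (hPQ : Disjoint P Q) (hP : P.Nonempty)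
    (hQ : Q.Nonempty) (hch : ValidMarks P Q c h)
    (hM : IsKleshchevMatrix (matrixOf (markedColumns 3 P Q c h))) (hle : c ≤ h) :
    ∃ y ∈ Q, h < y := by
  have hcardP := countBelow_pos hP
  have hcardQ := countBelow_pos hQ
  obtain ⟨h0, h1, h2⟩ := countBelow_markedRow_top hPQ hch
  have hgap := fun m n => hM.countBelow_gap (i := 1) (j := 0) (k := 2) rfl rfl rfl
    (ρ := (· ≥ ·)) (C := countBelow Q e - 1) (m := m) (n := n)
    (.inr ⟨rfl, by omega, by omega⟩) (by omega)
  apply exists_gt_of_countBelow_lt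
  rcases hle.eq_or_lt with rfl | hlt
  · have hgap := hgap (c + 1) c (Nat.le_succ _)
    grind [Finset.disjoint_left, ValidMarks, countBelow_markedRow hPQ hch c.1,
      countBelow_markedRow hPQ hch (c.1 + 1), countBelow_succ P c, countBelow_succ Q c]
  · have hgap := hgap h h le_rfl
    grind [Finset.disjoint_left, ValidMarks, countBelow_markedRow hPQ hch h.1,
      countBelow_markedRow hPQ hch (h.1 + 1), countBelow_succ P h, countBelow_succ Q h]

lemma IsKleshchevMatrix.exists_gt_of_rows_zero_two_one (hPQ : Disjoint P Q) (hP : P.Nonempty)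
    (hQ : Q.Nonempty) (hch : ValidMarks P Q c h)
    (hM : IsKleshchevMatrix (matrixOf (markedColumns 4 P Q c h))) (hhc : h ≤ c) :
    ∃ y ∈ P, c < y := by
  have hcardP := countBelow_pos hP
  have hcardQ := countBelow_pos hQ
  obtain ⟨h0, h1, h2⟩ := countBelow_markedRow_top hPQ hch
  have hgap := fun m n => hM.countBelow_gap (i := 0) (j := 2) (k := 1) rfl rfl rfl
    (ρ := (· ≤ ·)) (C := countBelow P e - 1) (m := m) (n := n)
    (.inl ⟨rfl, by omega, by omega⟩) (by omega)
  apply exists_gt_of_countBelow_lt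
  rcases hhc.eq_or_lt with rfl | hlt
  · have hgap := hgap h (h + 1) (Nat.le_succ _)
    grind [Finset.disjoint_left, ValidMarks, countBelow_markedRow hPQ hch h.1,
      countBelow_markedRow hPQ hch (h.1 + 1), countBelow_succ P h, countBelow_succ Q h]
  · have hgap := hgap c c le_rfl
    grind [Finset.disjoint_left, ValidMarks, countBelow_markedRow hPQ hch c.1,
      countBelow_markedRow hPQ hch (c.1 + 1), countBelow_succ P c, countBelow_succ Q c]

lemma unobstructed_of_isKleshchevMatrix (hPQ : Disjoint P Q) (hP : P.Nonempty) (hQ : Q.Nonempty)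
    (hch : ValidMarks P Q c h) (hM : IsKleshchevMatrix (matrixOf (markedColumns u P Q c h))) :
    Unobstructed u P Q c h := by
  match u, hM with
  | 0, hM => exact ⟨hM.exists_gt_of_rows_one_two (a := 1) (b := 2) hPQ hQ hch rfl rfl rfl,
      hM.exists_gt_of_rows_zero_one (a := 0) (b := 1) hPQ hP hch rfl rfl rfl⟩
  | 1, hM => exact ⟨hM.exists_gt_of_rows_zero_one (a := 1) (b := 2) hPQ hP hch rfl rfl rfl,
      hM.exists_lt_of_rows_two_zero_one hPQ hP hQ hch⟩
  | 2, hM => exact ⟨hM.exists_gt_of_rows_one_two (a := 0) (b := 1) hPQ hQ hch rfl rfl rfl,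
      hM.exists_lt_of_rows_one_two_zero hPQ hP hQ hch⟩
  | 3, hM => exact ⟨hM.exists_gt_of_rows_one_zero_two hPQ hP hQ hch,
      hM.exists_lt_of_rows_one_zero (a := 0) (b := 1) hPQ hP hch rfl rfl rfl⟩
  | 4, hM => exact ⟨hM.exists_gt_of_rows_zero_two_one hPQ hP hQ hch,
      hM.exists_lt_of_rows_two_one (a := 1) (b := 2) hPQ hQ hch rfl rfl rfl⟩
  | 5, hM => exact ⟨hM.exists_lt_of_rows_two_one (a := 0) (b := 1) hPQ hQ hch rfl rfl rfl,
      hM.exists_lt_of_rows_one_zero (a := 1) (b := 2) hPQ hP hch rfl rfl rfl⟩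

end Obstruction

section Duset

variable {e : ℕ} {Y Z : Finset (Fin e)} {y z : ℕ}

/-- `a` or `b` according to the parity of `u`. The columns in `Y` have two entries `1` for even `u`
(odd in the numbering `1, …, 6`), and those in `Z` do for odd `u`. -/
def pick {α : Type*} (u : Fin 6) (a b : α) : α := ![a, b, a, b, a, b] u

lemma disjoint_pick (hYZ : Disjoint Y Z) (u : Fin 6) : Disjoint (pick u Y Z) (pick u Z Y) := by
  fin_cases u <;> simp [pick, hYZ, hYZ.symm]

lemma nonempty_pick (hY : Y.Nonempty) (hZ : Z.Nonempty) (u : Fin 6) : (pick u Y Z).Nonempty := by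
  fin_cases u <;> simp [pick, hY, hZ]

lemma alphaM_eq_matrixOf (hY : Y.card = y + 1) (hYZ : Disjoint Y Z) (u : Fin 6) (k : Fin (y + 1)) :
    alphaM Y Z hY u k = matrixOf (markedColumns u (pick u Y Z) (pick u Z Y)
      (Y.orderEmbOfFin hY k) (Y.orderEmbOfFin hY k)) := by
  have hk := Y.orderEmbOfFin_mem hY k
  ext s x
  simp only [alphaM, matrixOf, markedColumns, markedRow]
  generalize Y.orderEmbOfFin hY k = a at hk
  have := Finset.disjoint_left.mp hYZ hk
  have := @Finset.disjoint_left.mp hYZ x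
  fin_cases u <;> fin_cases s <;> simp [pick, role, aacol, ycol, zcol] <;> grind

lemma betaM_eq_matrixOf (hZ : Z.card = z + 1) (hYZ : Disjoint Y Z) (u : Fin 6) (l : Fin (z + 1)) :
    betaM Y Z hZ u l = matrixOf (markedColumns u (pick u Y Z) (pick u Z Y)
      (Z.orderEmbOfFin hZ l) (Z.orderEmbOfFin hZ l)) := by
  have hl := Z.orderEmbOfFin_mem hZ l
  ext s x
  simp only [betaM, matrixOf, markedColumns, markedRow]
  generalize Z.orderEmbOfFin hZ l = b at hl
  have := Finset.disjoint_right.mp hYZ hl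
  have := @Finset.disjoint_left.mp hYZ x
  fin_cases u <;> fin_cases s <;> simp [pick, role, abcol, ycol, zcol] <;> grind

lemma gammaM_eq_matrixOf (hY : Y.card = y + 1) (hZ : Z.card = z + 1) (hYZ : Disjoint Y Z)
    (u : Fin 6) (k : Fin (y + 1)) (l : Fin (z + 1)) :
    gammaM Y Z hY hZ u k l = matrixOf (markedColumns u (pick u Y Z) (pick u Z Y)
      (pick u (Y.orderEmbOfFin hY k) (Z.orderEmbOfFin hZ l))
      (pick u (Z.orderEmbOfFin hZ l) (Y.orderEmbOfFin hY k))) := by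
  have hk := Y.orderEmbOfFin_mem hY k
  have hl := Z.orderEmbOfFin_mem hZ l
  ext s x
  simp only [gammaM, matrixOf, markedColumns, markedRow]
  generalize Y.orderEmbOfFin hY k = a at hk
  generalize Z.orderEmbOfFin hZ l = b at hl
  have := Finset.disjoint_left.mp hYZ hk
  have := Finset.disjoint_right.mp hYZ hl
  have := @Finset.disjoint_left.mp hYZ x
  fin_cases u <;> fin_cases s <;> simp [pick, role, oycol, ozcol, ycol, zcol] <;> grind

lemma exists_validMarks_pick_iff (u : Fin 6) (p : Fin e → Fin e → Prop) :
    (∃ c h, ValidMarks (pick u Y Z) (pick u Z Y) c h ∧ p c h) ↔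
      (∃ a ∈ Y, p a a) ∨ (∃ b ∈ Z, p b b) ∨
        ∃ a ∈ Y, ∃ b ∈ Z, p (pick u a b) (pick u b a) := by
  have hpick : (∀ (α : Type) (a b : α), pick u a b = a) ∨
      ∀ (α : Type) (a b : α), pick u a b = b := by
    fin_cases u <;> simp [pick]
  obtain hpick | hpick := hpick <;> simp only [hpick, ValidMarks] <;> grind

lemma exists_orderEmbOfFin_iff {n : ℕ} {S : Finset (Fin e)} (hS : S.card = n) (p : Fin e → Prop) :
    (∃ k, p (S.orderEmbOfFin hS k)) ↔ ∃ x ∈ S, p x := by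
  simp only [← Finset.mem_coe, ← S.range_orderEmbOfFin hS, Set.exists_range_iff]

lemma mem_duset_iff (hY : Y.card = y + 1) (hZ : Z.card = z + 1) (hYZ : Disjoint Y Z) (u : Fin 6)
    {M : Fin 3 → Fin e → Bool} :
    M ∈ Duset Y Z hY hZ u ↔
      ∃ w, IsMarked u (pick u Y Z) (pick u Z Y) w ∧ M = matrixOf w := by
  have hmarked : (∃ w, IsMarked u (pick u Y Z) (pick u Z Y) w ∧ M = matrixOf w) ↔
      ∃ c h, ValidMarks (pick u Y Z) (pick u Z Y) c h ∧
        M = matrixOf (markedColumns u (pick u Y Z) (pick u Z Y) c h) := by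
    simp [IsMarked]
  rw [hmarked, exists_validMarks_pick_iff, ← exists_orderEmbOfFin_iff hY,
    ← exists_orderEmbOfFin_iff hZ, ← exists_orderEmbOfFin_iff hY]
  simp only [Duset, Set.mem_ofPred_eq, alphaM_eq_matrixOf hY hYZ, betaM_eq_matrixOf hZ hYZ,
    gammaM_eq_matrixOf hY hZ hYZ, ← exists_orderEmbOfFin_iff hZ]

end Duset

section Coefficients

variable {e r : ℕ}

lemma isVNPoly_zero : IsVNPoly 0 := ⟨0, by simp, by simp⟩

lemma isVNPoly_T {n : ℤ} (hn : 0 < n) : IsVNPoly (LaurentPolynomial.T n) := by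
  refine ⟨Finsupp.single n 1, fun k hk => ?_, by simp⟩
  rw [Finset.mem_singleton.mp (Finsupp.support_single_subset hk)]
  exact hn

lemma IsVNPoly.add {a b : LaurentPolynomial ℤ} (ha : IsVNPoly a) (hb : IsVNPoly b) :
    IsVNPoly (a + b) := by
  obtain ⟨f, hf, rfl⟩ := ha
  obtain ⟨g, hg, rfl⟩ := hb
  refine ⟨f + g, fun n hn => ?_, ?_⟩
  · exact (Finset.mem_union.mp (Finsupp.support_add hn)).elim (hf n) (hg n)
  · rw [Finsupp.sum_add_index' (by simp) fun _ _ _ => by push_cast; rw [add_mul]]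

lemma vec_apply_eq_zero {ι : Type*} {ρ : Fin e ≃ ι} {F : Family ι r} {M : Fin r → Fin e → Bool}
    (h : ∀ t ∈ F, matrixOf (t.1 ∘ ρ) ≠ M) : vec ρ F M = 0 := by
  induction F using Multiset.induction_on with
  | empty => simp [vec]
  | cons t F ih =>
    rw [vec_cons, Finsupp.add_apply, Finsupp.single_eq_of_ne' (h t (by simp)), zero_add]
    exact ih fun t' ht' => h t' (by simp [ht'])

lemma isVNPoly_vec_apply {ι : Type*} (ρ : Fin e ≃ ι) {F : Family ι r} (h : ∀ t ∈ F, 0 < t.2)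
    (M : Fin r → Fin e → Bool) : IsVNPoly (vec ρ F M) := by
  induction F using Multiset.induction_on with
  | empty => simpa [vec] using isVNPoly_zero
  | cons t F ih =>
    rw [vec_cons, Finsupp.add_apply, Finsupp.single_apply]
    refine .add ?_ (ih fun t' ht' => h t' (by simp [ht']))
    split_ifs
    exacts [isVNPoly_T (h t (by simp)), isVNPoly_zero]

section IsUnitriangular

variable {ι : Type*} {ρ : Fin e ≃ ι} {D : (ι → Finset (Fin r)) → Prop} {w : ι → Finset (Fin r)}
  {F : Family ι r} {M : Fin r → Fin e → Bool}

lemma IsUnitriangular.vec_apply_self (hF : IsUnitriangular D w F) :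
    vec ρ F (matrixOf (w ∘ ρ)) = 1 := by
  obtain ⟨F', rfl, hF'⟩ := hF
  rw [vec_cons, Finsupp.add_apply, Finsupp.single_eq_same, LaurentPolynomial.T_zero,
    vec_apply_eq_zero fun t ht heq => (hF' t ht).1 ?_, add_zero]
  exact ρ.surjective.injective_comp_right (matrixOf_injective heq)

lemma IsUnitriangular.isVNPoly_vec_apply (hF : IsUnitriangular D w F)
    (hM : M ≠ matrixOf (w ∘ ρ)) : IsVNPoly (vec ρ F M) := by
  obtain ⟨F', rfl, hF'⟩ := hF
  rw [vec_cons, Finsupp.add_apply, Finsupp.single_eq_of_ne hM, zero_add]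
  exact AK.isVNPoly_vec_apply ρ (fun t ht => (hF' t ht).2.1) M

lemma IsUnitriangular.exists_of_vec_apply_ne_zero (hF : IsUnitriangular D w F)
    (h0 : vec ρ F M ≠ 0) (hM : M ≠ matrixOf (w ∘ ρ)) : ∃ w', D w' ∧ M = matrixOf (w' ∘ ρ) := by
  obtain ⟨F', rfl, hF'⟩ := hF
  rw [vec_cons, Finsupp.add_apply, Finsupp.single_eq_of_ne hM, zero_add] at h0
  contrapose! h0
  exact vec_apply_eq_zero fun t ht heq => h0 t.1 (hF' t ht).2.2 heq.symm

end IsUnitriangular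

end Coefficients
/-- Every Kleshchev multipartition in `D^u` is reachable by an
induction sequence from a matrix of weight 0, with coefficients in `v·ℕ[v]`
supported on `D^u`. -/
theorem Duset_induction_sequence (e : ℕ) (he : 2 ≤ e)
    (X Y Z : Finset (Fin e)) {y z : ℕ} (hY : Y.card = y + 1) (hZ : Z.card = z + 1)
    (hXY : Disjoint X Y) (hXZ : Disjoint X Z) (hYZ : Disjoint Y Z)
    (hcover : X ∪ Y ∪ Z = Finset.univ)
    (u : Fin 6) (M : Fin 3 → Fin e → Bool) (hM : M ∈ Duset Y Z hY hZ u)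
    (hK : IsKleshchev (PtCharge (fun _ => 0) M) (PtPart (fun _ => 0) M)) :
    ∃ L : Fin 3 → Fin e → Bool, wtM L = 0 ∧
      ∃ ops : List (Fin e × ℕ), (∀ p ∈ ops, p.1.1 ≠ 0 ∧ 0 < p.2) ∧
        GopList ops (Finsupp.single L 1) M = 1 ∧
        ∀ M' : Fin 3 → Fin e → Bool, M' ≠ M →
          IsVNPoly (GopList ops (Finsupp.single L 1) M') ∧
          (GopList ops (Finsupp.single L 1) M' ≠ 0 → M' ∈ Duset Y Z hY hZ u) := by
  obtain ⟨_, ⟨c, h, hch, rfl⟩, rfl⟩ := (mem_duset_iff hY hZ hYZ u).mp hM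
  have hPQ := disjoint_pick hYZ u
  have hY' : Y.Nonempty := Finset.card_pos.mp (by lia)
  have hZ' : Z.Nonempty := Finset.card_pos.mp (by lia)
  have hun := unobstructed_of_isKleshchevMatrix hPQ (nonempty_pick hY' hZ' u)
    (nonempty_pick hZ' hY' u) hch hK.isKleshchevMatrix
  obtain ⟨F, hF, hFu⟩ :=
    hun.solves hPQ hch (List.pairwise_lt_finRange e) fun x => List.mem_finRange x
  obtain ⟨L, hL, ops, hops, hvec⟩ := hF (Equiv.refl (Fin e)) (List.ofFn_id e)
  refine ⟨L, hL, ops, hops, hvec ▸ hFu.vec_apply_self, fun M' hM' => ?_⟩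
  rw [hvec]
  exact ⟨hFu.isVNPoly_vec_apply hM', fun h0 =>
    (mem_duset_iff hY hZ hYZ u).mpr (hFu.exists_of_vec_apply_ne_zero h0 hM')⟩

end
end AK
end

section
/- Let e ≥ 2, r ≥ 2, and let M ∈ M(r,e) be such that the weight graph G(M) is a tree. Then there exist y′ = (y′_1,…,y′_{r−1}) ∈ ℕ^{r−1} with y′_1 ≥ 1 and y′_{r−1} ≥ 1, an integer 1 ≤ t′ ≤ r−1 and (i′,j′) ∈ P_{t′}(y′) such that M is row equivalent to a matrix in T^{y′}(i′,j′). -/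
open scoped Classical

namespace AK
noncomputable section



/-! ### Weight graphs and the sets `T^y(i,j)` -/

/-- The weight graph of `M`. -/
def wGraph {e r : ℕ} (M : Fin r → Fin e → Bool) : SimpleGraph (Fin r) :=
  SimpleGraph.fromRel (fun s t => wtPair M s t = 1)

/-- The weight graph of `M` is a tree. -/
def GTree {e r : ℕ} (M : Fin r → Fin e → Bool) : Prop :=
  (∀ s t : Fin r, s ≠ t → wtPair M s t ≤ 1) ∧ (wGraph M).IsTree

/-- The column vector `I(a)` (1-based rows `1,…,a` are ones). -/
def Ivec (r a : ℕ) : Fin r → Bool := fun s => decide (s.1 + 1 ≤ a)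

/-- The condition `(i,j) ∈ P_t(y)`. -/
def PtPairCond (r t : ℕ) (y : ℕ → ℕ) (iseq : Fin t → ℕ) (jseq : Fin (t + 1) → ℕ) : Prop :=
  jseq 0 = 1 ∧ jseq (Fin.last t) = r ∧
  (∀ m : Fin t, jseq m.castSucc ≤ iseq m) ∧
  (∀ m : Fin t, iseq m < jseq m.succ) ∧
  (∀ m : Fin t, 1 ≤ y (iseq m))

/-- The column vector `c_m(i,j)`: `I(i_m)` with the entries in (1-based) rows
`j_m` and `j_{m+1}` interchanged. -/
def cvec (r : ℕ) {t : ℕ} (iseq : Fin t → ℕ) (jseq : Fin (t + 1) → ℕ) (m : Fin t) :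
    Fin r → Bool :=
  fun s =>
    if s.1 + 1 = jseq m.castSucc then decide (jseq m.succ ≤ iseq m)
    else if s.1 + 1 = jseq m.succ then decide (jseq m.castSucc ≤ iseq m)
    else decide (s.1 + 1 ≤ iseq m)

/-- The multiset of columns of a matrix. -/
def colMultiset {e r : ℕ} (M : Fin r → Fin e → Bool) : Multiset (Fin r → Bool) :=
  (Finset.univ.val : Multiset (Fin e)).map fun c => fun s => M s c

/-- `M ∈ T^y(i,j)`. -/
def memT (r e : ℕ) (y : ℕ → ℕ) {t : ℕ} (iseq : Fin t → ℕ) (jseq : Fin (t + 1) → ℕ)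
    (M : Fin r → Fin e → Bool) : Prop :=
  ∃ w0 wr : ℕ,
    colMultiset M =
      (∑ a ∈ Finset.Icc 1 (r - 1),
        Multiset.replicate (if ∃ m, iseq m = a then y a - 1 else y a) (Ivec r a))
      + ((Finset.univ.val : Multiset (Fin t)).map (cvec r iseq jseq))
      + Multiset.replicate w0 (Ivec r 0) + Multiset.replicate wr (Ivec r r)

/-!
Permuting rows, list the rows of `M` by decreasing number of 1s. Then `wt(s,t) = δ₊(t,s)` for
`s < t`, so, all weights being at most 1, the weight graph is the edge-disjoint union of the
inversion graphs of the columns. A tree has no 4-cycle, which forces every column that is not some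
`I(a)` to be an `I(a)` with a 1 in row `lo` and a 0 in row `hi > lo` interchanged. The inversion
graph of such a column connects the whole interval `[lo, hi]`, so acyclicity makes two of these
intervals share at most an endpoint, and connectivity makes them cover all rows: ordered from top to
bottom, they form the chain `j_1 < ⋯ < j_{t+1}`. If the first of these columns comes from
`I(a)` with `a ≠ 1`, then some column must counter its inversion of the first two rows, and it can
only be `I(1)`; symmetrically at the bottom.
-/

section Graph

variable {V : Type*} {G H K : SimpleGraph V}

theorem eq_of_reachable_of_disjoint (hG : G.IsAcyclic) (hH : H ≤ G) (hK : K ≤ G)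
    (hHK : Disjoint H K) {u v : V} (hHuv : H.Reachable u v) (hKuv : K.Reachable u v) : u = v := by
  obtain ⟨p, hp⟩ := hHuv.exists_isPath
  obtain ⟨q, hq⟩ := hKuv.exists_isPath
  have hpq : p.mapLe hH = q.mapLe hK :=
    congrArg Subtype.val ((hG.subsingleton_path u v).elim ⟨_, hp.mapLe hH⟩ ⟨_, hq.mapLe hK⟩)
  have hedges : p.edges = q.edges := by simpa using congrArg SimpleGraph.Walk.edges hpq
  cases p with
  | nil => rfl
  | cons hadj p' =>
    rw [SimpleGraph.Walk.edges_cons] at hedges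
    have hKadj := q.adj_of_mem_edges (hedges ▸ List.mem_cons_self)
    exact (SimpleGraph.disjoint_left.1 hHK _ _ hadj hKadj).elim

theorem eq_or_eq_of_adj_square (hG : G.IsAcyclic) {a b c d : V} (hab : G.Adj a b)
    (hbc : G.Adj b c) (had : G.Adj a d) (hdc : G.Adj d c) : a = c ∨ b = d := by
  by_contra! hne
  have hpath : (hab.toWalk.concat hbc).IsPath ∧ (had.toWalk.concat hdc).IsPath := by
    simp [SimpleGraph.Walk.concat, hab.ne, hbc.ne, had.ne, hdc.ne, hne.1]
  have := congrArg Subtype.val ((hG.subsingleton_path a c).elim ⟨_, hpath.1⟩ ⟨_, hpath.2⟩)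
  simp [SimpleGraph.Walk.concat, hne.2] at this

theorem exists_adj_le_lt [LinearOrder V] (hG : G.Preconnected) {x y : V} (hxy : x < y) :
    ∃ u v, G.Adj u v ∧ u ≤ x ∧ x < v := by
  obtain ⟨p⟩ := hG x y
  obtain ⟨d, -, hfst, hsnd⟩ := p.exists_boundary_dart (Set.Iic x) le_rfl (not_le.2 hxy)
  exact ⟨d.fst, d.snd, d.adj, hfst, not_le.1 hsnd⟩

end Graph

section InversionGraph

variable {α : Type*} [LinearOrder α] {v : α → Bool}

/-- The graph of inversions of a 0-1 vector, whose edges join each 0 to the 1s that come after it.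
The weight graph of a matrix with suitably sorted rows is the union of the inversion graphs of its
columns. -/
def inversionGraph (v : α → Bool) : SimpleGraph α :=
  SimpleGraph.fromRel fun s t => s < t ∧ v s = false ∧ v t = true

theorem inversionGraph_adj_of_lt {s t : α} (hst : s < t) :
    (inversionGraph v).Adj s t ↔ v s = false ∧ v t = true := by
  simp [inversionGraph, hst, hst.ne, hst.not_gt]

theorem exists_inversion_of_not_antitone (hv : ¬Antitone v) :
    ∃ s t, s < t ∧ v s = false ∧ v t = true := by
  simp only [Antitone, not_forall, not_le, Bool.lt_iff] at hv
  obtain ⟨s, t, hst, hs, ht⟩ := hv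
  exact ⟨s, t, hst.lt_of_ne (by rintro rfl; simp_all), hs, ht⟩

theorem not_antitone_of_inversion {s t : α} (hst : s < t) (hs : v s = false) (ht : v t = true) :
    ¬Antitone v := fun hv => absurd (hv hst.le) (by simp [hs, ht])

theorem inversionGraph_reachable {lo hi s : α} (hlo : v lo = false) (hhi : v hi = true)
    (hs : s ∈ Set.Icc lo hi) : (inversionGraph v).Reachable lo s := by
  obtain rfl | hlos := hs.1.eq_or_lt
  · rfl
  cases hvs : v s with
  | true => exact ((inversionGraph_adj_of_lt hlos).2 ⟨hlo, hvs⟩).reachable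
  | false =>
    have hshi : s < hi := hs.2.lt_of_ne (by rintro rfl; simp_all)
    exact ((inversionGraph_adj_of_lt (hlos.trans hshi)).2 ⟨hlo, hhi⟩).reachable.trans
      ((inversionGraph_adj_of_lt hshi).2 ⟨hvs, hhi⟩).reachable.symm

theorem Icc_inter_Icc_subsingleton {G : SimpleGraph α} (hG : G.IsAcyclic) {w : α → Bool}
    (hv : inversionGraph v ≤ G) (hw : inversionGraph w ≤ G)
    (hvw : Disjoint (inversionGraph v) (inversionGraph w)) {lo hi lo' hi' : α}
    (hlo : v lo = false) (hhi : v hi = true) (hlo' : w lo' = false) (hhi' : w hi' = true) :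
    (Set.Icc lo hi ∩ Set.Icc lo' hi').Subsingleton := fun _ hx _ hy =>
  eq_of_reachable_of_disjoint hG hv hw hvw
    ((inversionGraph_reachable hlo hhi hx.1).symm.trans (inversionGraph_reachable hlo hhi hy.1))
    ((inversionGraph_reachable hlo' hhi' hx.2).symm.trans
      (inversionGraph_reachable hlo' hhi' hy.2))

theorem exists_antitone_comp_swap [Finite α] (hacyc : (inversionGraph v).IsAcyclic)
    (hv : ¬Antitone v) :
    ∃ lo hi, v lo = false ∧ v hi = true ∧ Antitone (v ∘ Equiv.swap lo hi) := by
  obtain ⟨s, t, hst, hs, ht⟩ := exists_inversion_of_not_antitone hv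
  obtain ⟨lo, hlo, hlo_le⟩ := Set.exists_min_image {x | v x = false} id (Set.toFinite _) ⟨s, hs⟩
  obtain ⟨hi, hhi, hle_hi⟩ := Set.exists_max_image {x | v x = true} id (Set.toFinite _) ⟨t, ht⟩
  simp only [Set.mem_ofPred_eq, id] at hlo hhi hlo_le hle_hi
  refine ⟨lo, hi, hlo, hhi, ?_⟩
  by_contra hanti
  obtain ⟨p, q, hpq, hp, hq⟩ := exists_inversion_of_not_antitone hanti
  have hp_lo : p ≠ lo := by rintro rfl; simp_all
  have hq_hi : q ≠ hi := by rintro rfl; simp_all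
  have hqhi : q < hi := by
    obtain rfl | hq_lo := eq_or_ne q lo
    · exact (hlo_le s hs).trans_lt (hst.trans_le (hle_hi t ht))
    · rw [Function.comp_apply, Equiv.swap_apply_of_ne_of_ne hq_lo hq_hi] at hq
      exact (hle_hi q hq).lt_of_ne hq_hi
  rw [Function.comp_apply, Equiv.swap_apply_of_ne_of_ne hp_lo (hpq.trans hqhi).ne] at hp
  have hlop : lo < p := (hlo_le p hp).lt_of_ne' hp_lo
  rw [Function.comp_apply, Equiv.swap_apply_of_ne_of_ne (hlop.trans hpq).ne' hq_hi] at hq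
  -- The inversions of `lo < p` (zeros) with `q < hi` (ones) would form a 4-cycle.
  obtain h | h := eq_or_eq_of_adj_square hacyc
    ((inversionGraph_adj_of_lt (hlop.trans hpq)).2 ⟨hlo, hq⟩)
    ((inversionGraph_adj_of_lt hpq).2 ⟨hp, hq⟩).symm
    ((inversionGraph_adj_of_lt (hlop.trans (hpq.trans hqhi))).2 ⟨hlo, hhi⟩)
    ((inversionGraph_adj_of_lt (hpq.trans hqhi)).2 ⟨hp, hhi⟩).symm
  exacts [hlop.ne h, hqhi.ne h]

end InversionGraph

section Column

variable {r : ℕ} {v : Fin r → Bool}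

theorem Ivec_apply_eq_true_iff {a : ℕ} {s : Fin r} : Ivec r a s = true ↔ s.1 < a := by
  simp [Ivec]

theorem Ivec_apply_eq_false_iff {a : ℕ} {s : Fin r} : Ivec r a s = false ↔ a ≤ s.1 := by
  simp [Ivec]

theorem antitone_Ivec (r a : ℕ) : Antitone (Ivec r a) := by
  by_contra h
  obtain ⟨s, t, hst, hs, ht⟩ := exists_inversion_of_not_antitone h
  rw [Ivec_apply_eq_false_iff] at hs
  rw [Ivec_apply_eq_true_iff] at ht
  omega

theorem injOn_Ivec (r : ℕ) : Set.InjOn (Ivec r) (Set.Iic r) := by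
  have le_of_eq {a b : ℕ} (ha : a ≤ r) (hab : Ivec r a = Ivec r b) : a ≤ b := by
    by_contra! hba
    have hb := congrFun hab ⟨b, hba.trans_le ha⟩
    rw [Ivec_apply_eq_true_iff.2 hba, eq_comm, Ivec_apply_eq_true_iff] at hb
    exact lt_irrefl b hb
  exact fun a ha b hb hab => (le_of_eq ha hab).antisymm (le_of_eq hb hab.symm)

theorem exists_eq_Ivec (hv : Antitone v) : ∃ a ≤ r, v = Ivec r a := by
  have hex : ∃ a, ∀ s : Fin r, a ≤ s.1 → v s = false := ⟨r, fun s hs => absurd s.2 hs.not_gt⟩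
  refine ⟨Nat.find hex, Nat.find_min' hex fun s hs => absurd s.2 hs.not_gt, funext fun s => ?_⟩
  obtain hs | hs := lt_or_ge s.1 (Nat.find hex)
  · have := Nat.find_min hex hs
    push Not at this
    obtain ⟨t, hst, ht⟩ := this
    rw [Ivec_apply_eq_true_iff.2 hs]
    exact Bool.eq_true_of_true_le (by simpa [ht] using hv (Fin.le_def.2 hst))
  · rw [Nat.find_spec hex s hs, Ivec_apply_eq_false_iff.2 hs]

theorem eq_Ivec_of_antitone {n : ℕ} {v : Fin (n + 1) → Bool} (hv : Antitone v) {s : Fin n}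
    (hs : v s.castSucc = true) (hs' : v s.succ = false) : v = Ivec (n + 1) (s + 1) := by
  obtain ⟨a, -, rfl⟩ := exists_eq_Ivec hv
  rw [Ivec_apply_eq_true_iff, Fin.val_castSucc] at hs
  rw [Ivec_apply_eq_false_iff, Fin.val_succ] at hs'
  rw [hs'.antisymm hs]

/-- `v` is `I(a)` with the entries in the 0-based rows `lo` and `hi` interchanged: a
column `c_m(i,j)` of the paper, with `a = i_m`, `lo + 1 = j_m` and `hi + 1 = j_{m+1}`. -/
structure IsSwapColumn (v : Fin r → Bool) (lo hi : Fin r) (a : ℕ) : Prop where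
  lo_lt : lo.1 < a
  le_hi : a ≤ hi.1
  eq_comp : v = Ivec r a ∘ Equiv.swap lo hi

namespace IsSwapColumn

variable {lo hi : Fin r} {a : ℕ}

theorem lo_lt_hi (h : IsSwapColumn v lo hi a) : lo < hi := Fin.lt_def.2 (h.lo_lt.trans_le h.le_hi)

theorem apply_lo (h : IsSwapColumn v lo hi a) : v lo = false := by
  simp [h.eq_comp, Ivec_apply_eq_false_iff, h.le_hi]

theorem apply_hi (h : IsSwapColumn v lo hi a) : v hi = true := by
  simp [h.eq_comp, Ivec_apply_eq_true_iff, h.lo_lt]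

theorem apply_of_ne (h : IsSwapColumn v lo hi a) {s : Fin r} (hlo : s ≠ lo) (hhi : s ≠ hi) :
    v s = Ivec r a s := by
  rw [h.eq_comp, Function.comp_apply, Equiv.swap_apply_of_ne_of_ne hlo hhi]

theorem lo_le_of_eq_false (h : IsSwapColumn v lo hi a) {s : Fin r} (hs : v s = false) :
    lo ≤ s := by
  by_contra! hslo
  rw [h.apply_of_ne hslo.ne (hslo.trans h.lo_lt_hi).ne, Ivec_apply_eq_false_iff] at hs
  exact absurd h.lo_lt (by omega)

theorem le_hi_of_eq_true (h : IsSwapColumn v lo hi a) {s : Fin r} (hs : v s = true) : s ≤ hi := by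
  by_contra! hhis
  rw [h.apply_of_ne (h.lo_lt_hi.trans hhis).ne' hhis.ne', Ivec_apply_eq_true_iff] at hs
  exact absurd h.le_hi (by omega)

theorem eq_cvec {t : ℕ} {iseq : Fin t → ℕ} {jseq : Fin (t + 1) → Fin r} {m : Fin t}
    (h : IsSwapColumn v (jseq m.castSucc) (jseq m.succ) (iseq m)) :
    v = cvec r iseq (fun k => jseq k + 1) m := by
  funext s
  simp only [h.eq_comp, Function.comp_apply, Equiv.swap_apply_def, cvec, Ivec, Fin.ext_iff,
    Nat.add_right_cancel_iff]
  split_ifs <;> rfl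

end IsSwapColumn

theorem exists_isSwapColumn (hacyc : (inversionGraph v).IsAcyclic) (hv : ¬Antitone v) :
    ∃ lo hi a, IsSwapColumn v lo hi a := by
  obtain ⟨lo, hi, hlo, hhi, hanti⟩ := exists_antitone_comp_swap hacyc hv
  obtain ⟨a, -, ha⟩ := exists_eq_Ivec hanti
  refine ⟨lo, hi, a, ?_, ?_, ?_⟩
  · rw [← Ivec_apply_eq_true_iff, ← ha, Function.comp_apply, Equiv.swap_apply_left, hhi]
  · rw [← Ivec_apply_eq_false_iff, ← ha, Function.comp_apply, Equiv.swap_apply_right, hlo]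
  · funext s
    rw [← ha, Function.comp_apply, Function.comp_apply, Equiv.swap_apply_self]

end Column

section Tiling

variable {α β : Type*} [LinearOrder β] [LocallyFiniteOrder β]

theorem exists_eq_left_of_biUnion_Ico {S : Finset α} {lo hi : α → β} {x y : β}
    (hS : S.biUnion (fun c => Finset.Ico (lo c) (hi c)) = Finset.Ico x y) (hxy : x < y) :
    ∃ c ∈ S, lo c = x ∧ hi c ≤ y := by
  have mem_iff (z : β) : (∃ c ∈ S, lo c ≤ z ∧ z < hi c) ↔ x ≤ z ∧ z < y := by
    simpa using Finset.ext_iff.1 hS z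
  obtain ⟨c, hc, hlo, hhi⟩ := (mem_iff x).2 ⟨le_rfl, hxy⟩
  refine ⟨c, hc, hlo.antisymm ((mem_iff _).1 ⟨c, hc, le_rfl, hlo.trans_lt hhi⟩).1, ?_⟩
  by_contra! hy
  exact lt_irrefl y ((mem_iff y).1 ⟨c, hc, hlo.trans hxy.le, hy⟩).2

theorem biUnion_Ico_erase {S : Finset α} {lo hi : α → β} {c : α} {y : β} (hc : c ∈ S)
    (hlohi : lo c ≤ hi c)
    (hdisj : (S : Set α).PairwiseDisjoint fun c => Finset.Ico (lo c) (hi c))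
    (hS : S.biUnion (fun c => Finset.Ico (lo c) (hi c)) = Finset.Ico (lo c) y) :
    (S.erase c).biUnion (fun c => Finset.Ico (lo c) (hi c)) = Finset.Ico (hi c) y := by
  ext z
  have hz := Finset.ext_iff.1 hS z
  simp only [Finset.mem_biUnion, Finset.mem_Ico, Finset.mem_erase] at hz ⊢
  refine ⟨fun ⟨d, ⟨hdc, hd⟩, hzd⟩ => ?_, fun hzc => ?_⟩
  · obtain ⟨hcz, hzy⟩ := hz.1 ⟨d, hd, hzd⟩
    have hzc := Finset.disjoint_left.1 (hdisj hd hc hdc) (Finset.mem_Ico.2 hzd)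
    exact ⟨by simpa [hcz] using hzc, hzy⟩
  · obtain ⟨d, hd, hzd⟩ := hz.2 ⟨hlohi.trans hzc.1, hzc.2⟩
    exact ⟨d, ⟨by rintro rfl; exact hzc.1.not_gt hzd.2, hd⟩, hzd⟩

theorem exists_consecutive_of_biUnion_Ico (S : Finset α) {lo hi : α → β} {x y : β} (hxy : x ≤ y)
    (hne : ∀ c ∈ S, lo c < hi c)
    (hdisj : (S : Set α).PairwiseDisjoint fun c => Finset.Ico (lo c) (hi c))
    (hS : S.biUnion (fun c => Finset.Ico (lo c) (hi c)) = Finset.Ico x y) :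
    ∃ (t : ℕ) (col : Fin t → α) (j : Fin (t + 1) → β),
      (Finset.univ : Finset (Fin t)).val.map col = S.val ∧ j 0 = x ∧ j (Fin.last t) = y ∧
        ∀ m, lo (col m) = j m.castSucc ∧ hi (col m) = j m.succ := by
  induction S using Finset.strongInduction generalizing x with
  | H S ih =>
    obtain rfl | hxy := hxy.eq_or_lt
    · have hS_empty : S = ∅ := by
        by_contra! ⟨c, hc⟩
        have : lo c ∈ Finset.Ico x x := hS ▸ Finset.mem_biUnion.2 ⟨c, hc, by simp [hne c hc]⟩
        simp at this
      exact ⟨0, Fin.elim0, fun _ => x, by simp [hS_empty], rfl, rfl, fun m => m.elim0⟩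
    obtain ⟨c, hc, rfl, hhi⟩ := exists_eq_left_of_biUnion_Ico hS hxy
    obtain ⟨t, col, j, hcol, hj0, hjlast, hj⟩ := ih (S.erase c) (Finset.erase_ssubset hc) hhi
      (fun d hd => hne d (Finset.mem_of_mem_erase hd))
      (hdisj.subset (Finset.coe_subset.2 (Finset.erase_subset c S)))
      (biUnion_Ico_erase hc (hne c hc).le hdisj hS)
    refine ⟨t + 1, Fin.cons c col, Fin.cons (lo c) j, ?_, Fin.cons_zero _ _,
      by rw [← Fin.succ_last, Fin.cons_succ, hjlast], ?_⟩
    · rw [← Multiset.cons_erase (Finset.mem_def.1 hc), ← Finset.erase_val, ← hcol]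
      simp [Fin.univ_succ]
    · intro m
      cases m using Fin.cases with
      | zero => simp [hj0]
      | succ m => simpa [← Fin.succ_castSucc] using hj m

end Tiling

section Weight

variable {e r : ℕ} {M : Fin r → Fin e → Bool}

/-- The rows of `M` are listed by decreasing number of 1s, so that `wt^M(s,t) = δ₊^M(t,s)` for
`s ≤ t`. -/
def RowSorted (M : Fin r → Fin e → Bool) : Prop :=
  Antitone fun s => (Finset.univ.filter fun c => M s c = true).card

theorem exists_perm_rowSorted (M : Fin r → Fin e → Bool) :
    ∃ σ : Equiv.Perm (Fin r), RowSorted (M ∘ σ) :=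
  ⟨_, Tuple.monotone_sort fun s => OrderDual.toDual (Finset.univ.filter fun c => M s c = true).card⟩

theorem wtPair_comm (M : Fin r → Fin e → Bool) (s t : Fin r) : wtPair M s t = wtPair M t s :=
  min_comm _ _

theorem wGraph_adj {s t : Fin r} : (wGraph M).Adj s t ↔ s ≠ t ∧ wtPair M s t = 1 := by
  rw [wGraph, SimpleGraph.fromRel_adj, wtPair_comm M t s, or_self]

theorem GTree.comp_perm (hM : GTree M) (σ : Equiv.Perm (Fin r)) : GTree (M ∘ σ) := by
  refine ⟨fun s t hst => hM.1 _ _ (σ.injective.ne hst), ?_⟩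
  have hcomap : wGraph (M ∘ σ) = (wGraph M).comap σ := by
    ext s t
    rw [SimpleGraph.comap_adj, wGraph_adj, wGraph_adj, σ.injective.ne_iff]
    rfl
  rw [hcomap]
  exact (SimpleGraph.Iso.comap σ (wGraph M)).isTree_iff.2 hM.2

theorem deltaP_le_deltaP_iff {s t : Fin r} :
    deltaP M t s ≤ deltaP M s t ↔ (Finset.univ.filter fun c => M t c = true).card ≤
      (Finset.univ.filter fun c => M s c = true).card := by
  have deltaP_eq (s t : Fin r) : deltaP M s t = ((Finset.univ.filter fun c => M s c = true) \
      (Finset.univ.filter fun c => M t c = true)).card := by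
    rw [deltaP]
    congr 1
    ext c
    simp
  rw [deltaP_eq, deltaP_eq, Finset.card_sdiff_le_card_sdiff_iff]

theorem deltaP_pos_iff {s t : Fin r} : 0 < deltaP M t s ↔ ∃ c, M s c = false ∧ M t c = true := by
  simp [deltaP, Finset.card_pos, Finset.filter_nonempty_iff, and_comm]

namespace RowSorted

theorem deltaP_le (hM : RowSorted M) {s t : Fin r} (hst : s ≤ t) :
    deltaP M t s ≤ deltaP M s t :=
  deltaP_le_deltaP_iff.2 (hM hst)

theorem wtPair_eq (hM : RowSorted M) {s t : Fin r} (hst : s ≤ t) :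
    wtPair M s t = deltaP M t s :=
  min_eq_right (hM.deltaP_le hst)

theorem exists_reverse (hM : RowSorted M) {s t : Fin r} (hst : s ≤ t) {c : Fin e}
    (hs : M s c = false) (ht : M t c = true) : ∃ c', M t c' = false ∧ M s c' = true :=
  deltaP_pos_iff.1 ((deltaP_pos_iff.2 ⟨c, hs, ht⟩).trans_le (hM.deltaP_le hst))

theorem wGraph_eq_iSup (hM : RowSorted M) (hwt : ∀ s t, s ≠ t → wtPair M s t ≤ 1) :
    wGraph M = ⨆ c, inversionGraph (M · c) := by
  have adj_iff_of_lt {s t : Fin r} (hst : s < t) :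
      (wGraph M).Adj s t ↔ (⨆ c, inversionGraph (M · c)).Adj s t := by
    have hle := hwt s t hst.ne
    simp only [SimpleGraph.iSup_adj, inversionGraph_adj_of_lt hst, wGraph_adj, hst.ne,
      ← deltaP_pos_iff, hM.wtPair_eq hst.le, ne_eq, not_false_eq_true, true_and] at hle ⊢
    omega
  ext s t
  obtain hst | rfl | hts := lt_trichotomy s t
  · exact adj_iff_of_lt hst
  · simp
  · rw [SimpleGraph.adj_comm, adj_iff_of_lt hts, SimpleGraph.adj_comm]

theorem disjoint_inversionGraph (hM : RowSorted M) (hwt : ∀ s t, s ≠ t → wtPair M s t ≤ 1)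
    {c c' : Fin e} (hc : c ≠ c') :
    Disjoint (inversionGraph (M · c)) (inversionGraph (M · c')) := by
  rw [SimpleGraph.disjoint_left]
  intro s t h h'
  wlog hst : s < t generalizing s t
  · exact this t s h.symm h'.symm (h.ne.lt_or_gt.resolve_left hst)
  rw [inversionGraph_adj_of_lt hst] at h h'
  have hle : deltaP M t s ≤ 1 := hM.wtPair_eq hst.le ▸ hwt s t hst.ne
  exact hc (Finset.card_le_one.1 hle c (by simp [h]) c' (by simp [h']))

end RowSorted

end Weight

section SwapSequence

variable {e n : ℕ} {M : Fin (n + 1) → Fin e → Bool}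

namespace GTree

theorem inversionGraph_le (hM : GTree M) (hsort : RowSorted M) (c : Fin e) :
    inversionGraph (M · c) ≤ wGraph M :=
  hsort.wGraph_eq_iSup hM.1 ▸ le_iSup (fun c => inversionGraph (M · c)) c

theorem exists_isSwapColumn (hM : GTree M) (hsort : RowSorted M) {c : Fin e}
    (hc : ¬Antitone (M · c)) : ∃ lo hi a, IsSwapColumn (M · c) lo hi a :=
  AK.exists_isSwapColumn (hM.2.isAcyclic.anti (hM.inversionGraph_le hsort c)) hc

theorem hi_le_lo_or_hi_le_lo (hM : GTree M) (hsort : RowSorted M) {c c' : Fin e} (hc : c ≠ c')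
    {lo hi lo' hi' : Fin (n + 1)} {a a' : ℕ} (h : IsSwapColumn (M · c) lo hi a)
    (h' : IsSwapColumn (M · c') lo' hi' a') : hi ≤ lo' ∨ hi' ≤ lo := by
  by_contra! hoverlap
  have hsub := Icc_inter_Icc_subsingleton hM.2.isAcyclic (hM.inversionGraph_le hsort c)
    (hM.inversionGraph_le hsort c') (hsort.disjoint_inversionGraph hM.1 hc)
    h.apply_lo h.apply_hi h'.apply_lo h'.apply_hi
  rw [Set.Icc_inter_Icc] at hsub
  have hlt : lo ⊔ lo' < hi ⊓ hi' :=
    lt_inf_iff.2 ⟨sup_lt_iff.2 ⟨h.lo_lt_hi, hoverlap.1⟩, sup_lt_iff.2 ⟨hoverlap.2, h'.lo_lt_hi⟩⟩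
  exact hlt.ne (hsub (Set.left_mem_Icc.2 hlt.le) (Set.right_mem_Icc.2 hlt.le))

theorem exists_not_antitone_forall_mem_Ico (hM : GTree M) (hsort : RowSorted M) {s : Fin (n + 1)}
    (hs : s < Fin.last n) :
    ∃ c, ¬Antitone (M · c) ∧ ∀ lo hi a, IsSwapColumn (M · c) lo hi a → s ∈ Finset.Ico lo hi := by
  obtain ⟨u, v, huv, hus, hsv⟩ := exists_adj_le_lt hM.2.connected.preconnected hs
  rw [hsort.wGraph_eq_iSup hM.1, SimpleGraph.iSup_adj] at huv
  obtain ⟨c, huv⟩ := huv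
  rw [inversionGraph_adj_of_lt (hus.trans_lt hsv)] at huv
  exact ⟨c, not_antitone_of_inversion (hus.trans_lt hsv) huv.1 huv.2, fun lo hi a h =>
    Finset.mem_Ico.2 ⟨(h.lo_le_of_eq_false huv.1).trans hus,
      hsv.trans_le (h.le_hi_of_eq_true huv.2)⟩⟩

theorem exists_swapSequence (hM : GTree M) (hsort : RowSorted M) :
    ∃ (t : ℕ) (col : Fin t → Fin e) (i : Fin t → ℕ) (j : Fin (t + 1) → Fin (n + 1)),
      Finset.univ.val.map col = (Finset.univ.filter fun c => ¬Antitone (M · c)).val ∧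
      j 0 = 0 ∧ j (Fin.last t) = Fin.last n ∧
      ∀ m, IsSwapColumn (M · (col m)) (j m.castSucc) (j m.succ) (i m) := by
  have hswap : ∀ c, ¬Antitone (M · c) → ∃ lo hi a, IsSwapColumn (M · c) lo hi a :=
    fun c => hM.exists_isSwapColumn hsort
  choose! lo hi a hswap using hswap
  let S := Finset.univ.filter fun c => ¬Antitone (M · c)
  have swap {c : Fin e} (hc : c ∈ S) : IsSwapColumn (M · c) (lo c) (hi c) (a c) :=
    hswap c (Finset.mem_filter.1 hc).2
  have hdisj : (S : Set (Fin e)).PairwiseDisjoint fun c => Finset.Ico (lo c) (hi c) := by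
    intro c hc c' hc' hcc'
    refine Finset.disjoint_left.2 fun x hx hx' => ?_
    rw [Finset.mem_Ico] at hx hx'
    obtain h | h := hM.hi_le_lo_or_hi_le_lo hsort hcc' (swap hc) (swap hc')
    exacts [(h.trans hx'.1).not_gt hx.2, (h.trans hx.1).not_gt hx'.2]
  have hcover : S.biUnion (fun c => Finset.Ico (lo c) (hi c)) = Finset.Ico 0 (Fin.last n) := by
    ext s
    rw [Finset.mem_biUnion, Finset.mem_Ico]
    constructor
    · rintro ⟨c, -, hs⟩
      exact ⟨Fin.zero_le s, (Finset.mem_Ico.1 hs).2.trans_le (Fin.le_last _)⟩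
    · rintro ⟨-, hs⟩
      obtain ⟨c, hc, hmem⟩ := hM.exists_not_antitone_forall_mem_Ico hsort hs
      exact ⟨c, Finset.mem_filter.2 ⟨Finset.mem_univ c, hc⟩, hmem _ _ _ (hswap c hc)⟩
  obtain ⟨t, col, j, hcol, hj0, hjlast, hj⟩ := exists_consecutive_of_biUnion_Ico S
    (Fin.zero_le (Fin.last n)) (fun c hc => (swap hc).lo_lt_hi) hdisj hcover
  refine ⟨t, col, a ∘ col, j, hcol, hj0, hjlast, fun m => ?_⟩
  have hm : col m ∈ S := by
    rw [Finset.mem_def, ← hcol]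
    exact Multiset.mem_map_of_mem col (Finset.mem_univ m)
  rw [← (hj m).1, ← (hj m).2]
  exact swap hm

theorem exists_eq_Ivec_or (hM : GTree M) (hsort : RowSorted M) {c : Fin e}
    {lo hi : Fin (n + 1)} {a : ℕ} (h : IsSwapColumn (M · c) lo hi a) {s : Fin n}
    (hs : M s.castSucc c = false) (hs' : M s.succ c = true) :
    ∃ c', (M · c') = Ivec (n + 1) (s + 1) ∨ ∃ lo' hi' a', IsSwapColumn (M · c') lo' hi' a' ∧
      (hi = s.succ ∧ lo' = s.succ ∨ lo = s.castSucc ∧ hi' = s.castSucc) := by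
  obtain ⟨c', hc', hc''⟩ := hsort.exists_reverse s.castSucc_lt_succ.le hs hs'
  refine ⟨c', or_iff_not_imp_left.2 fun hne => ?_⟩
  obtain ⟨lo', hi', a', h'⟩ :=
    hM.exists_isSwapColumn hsort fun hanti => hne (eq_Ivec_of_antitone hanti hc'' hc')
  have hcc' : c ≠ c' := by
    rintro rfl
    simp_all
  refine ⟨lo', hi', a', h', (hM.hi_le_lo_or_hi_le_lo hsort hcc' h h').imp (fun hle => ?_)
    fun hle => ?_⟩
  · have hhi := h.le_hi_of_eq_true hs'
    have hlo' := h'.lo_le_of_eq_false hc'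
    exact ⟨(hle.trans hlo').antisymm hhi, hlo'.antisymm (hhi.trans hle)⟩
  · have hlo := h.lo_le_of_eq_false hs
    have hhi' := h'.le_hi_of_eq_true hc''
    exact ⟨hlo.antisymm (hhi'.trans hle), (hle.trans hlo).antisymm hhi'⟩

theorem eq_one_or_exists_eq_Ivec_one {M : Fin (n + 2) → Fin e → Bool} (hM : GTree M)
    (hsort : RowSorted M) {c : Fin e} {hi : Fin (n + 2)} {a : ℕ}
    (h : IsSwapColumn (M · c) 0 hi a) : a = 1 ∨ ∃ c', (M · c') = Ivec (n + 2) 1 := by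
  refine or_iff_not_imp_left.2 fun ha => ?_
  have hlo := h.lo_lt
  have hhi := h.le_hi
  rw [Fin.val_zero] at hlo
  have hone_ne : (1 : Fin (n + 2)) ≠ hi := by
    rintro rfl
    rw [Fin.val_one] at hhi
    omega
  have hone : M 1 c = true := by
    rw [h.apply_of_ne one_ne_zero hone_ne, Ivec_apply_eq_true_iff, Fin.val_one]
    omega
  obtain ⟨c', hc' | ⟨lo', hi', a', h', ⟨rfl, -⟩ | ⟨-, rfl⟩⟩⟩ :=
    hM.exists_eq_Ivec_or hsort (s := 0) h h.apply_lo hone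
  · exact ⟨c', hc'⟩
  · exact absurd rfl hone_ne
  · exact absurd h'.lo_lt_hi (Fin.not_lt_zero _)

theorem eq_or_exists_eq_Ivec_last {M : Fin (n + 2) → Fin e → Bool} (hM : GTree M)
    (hsort : RowSorted M) {c : Fin e} {lo : Fin (n + 2)} {a : ℕ}
    (h : IsSwapColumn (M · c) lo (Fin.last (n + 1)) a) :
    a = n + 1 ∨ ∃ c', (M · c') = Ivec (n + 2) (n + 1) := by
  refine or_iff_not_imp_left.2 fun ha => ?_
  have hlo := h.lo_lt
  have hhi := h.le_hi
  rw [Fin.val_last] at hhi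
  have hne_lo : (Fin.last n).castSucc ≠ lo := by
    rintro rfl
    rw [Fin.val_castSucc, Fin.val_last] at hlo
    omega
  have hzero : M (Fin.last n).castSucc c = false := by
    rw [h.apply_of_ne hne_lo (Fin.castSucc_lt_last _).ne, Ivec_apply_eq_false_iff,
      Fin.val_castSucc, Fin.val_last]
    omega
  obtain ⟨c', hc' | ⟨lo', hi', a', h', ⟨-, rfl⟩ | ⟨rfl, -⟩⟩⟩ :=
    hM.exists_eq_Ivec_or hsort (s := Fin.last n) h hzero h.apply_hi
  · exact ⟨c', hc'⟩
  · exact absurd h'.lo_lt_hi (Fin.le_last _).not_gt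
  · exact absurd rfl hne_lo

end GTree

end SwapSequence

section ColumnMultiset

variable {e r : ℕ} {M : Fin r → Fin e → Bool}

theorem eq_sum_replicate_of_forall_mem_image {α β : Type*} [DecidableEq β] {g : α → β}
    {A : Finset α} (hg : Set.InjOn g A) {m : Multiset β}
    (hm : ∀ b ∈ m, b ∈ A.image g) :
    m = ∑ a ∈ A, Multiset.replicate (m.count (g a)) (g a) := by
  calc m = ∑ b ∈ m.toFinset, m.count b • {b} := (Multiset.toFinset_sum_count_nsmul_eq m).symm
    _ = ∑ b ∈ A.image g, m.count b • {b} :=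
      Finset.sum_subset (fun b hb => hm b (Multiset.mem_toFinset.1 hb)) fun b _ hb => by
        rw [Multiset.count_eq_zero.2 (mt Multiset.mem_toFinset.2 hb), zero_smul]
    _ = ∑ a ∈ A, m.count (g a) • {g a} := Finset.sum_image hg
    _ = _ := by simp only [Multiset.nsmul_singleton]

theorem filter_antitone_colMultiset (M : Fin r → Fin e → Bool) :
    (colMultiset M).filter Antitone =
      ∑ a ∈ Finset.range (r + 1), Multiset.replicate ((colMultiset M).count (Ivec r a))
        (Ivec r a) := by
  have hinj : Set.InjOn (Ivec r) (Finset.range (r + 1)) :=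
    (injOn_Ivec r).mono fun a ha => Nat.lt_succ_iff.1 (Finset.mem_range.1 ha)
  have hmem : ∀ v ∈ (colMultiset M).filter Antitone,
      v ∈ (Finset.range (r + 1)).image (Ivec r) := by
    intro v hv
    obtain ⟨a, ha, rfl⟩ := exists_eq_Ivec (Multiset.mem_filter.1 hv).2
    exact Finset.mem_image_of_mem _ (Finset.mem_range.2 (Nat.lt_succ_iff.2 ha))
  simpa only [Multiset.count_filter_of_pos (antitone_Ivec r _)] using
    eq_sum_replicate_of_forall_mem_image hinj hmem

variable {t : ℕ} {iseq : Fin t → ℕ}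

/-- The tuple `y` for which `M ∈ T^y(i,j)`: the multiplicity of each `I(a)` among the columns of
`M`, plus one when `a` is some `i_m`, to account for the copy of `I(i_m)` traded for `c_m(i,j)`. -/
def columnMultiplicity (M : Fin r → Fin e → Bool) (iseq : Fin t → ℕ) (a : ℕ) : ℕ :=
  (colMultiset M).count (Ivec r a) + if ∃ m, iseq m = a then 1 else 0

theorem one_le_columnMultiplicity {a : ℕ} (h : (∃ m, iseq m = a) ∨ ∃ c, (M · c) = Ivec r a) :
    1 ≤ columnMultiplicity M iseq a := by
  obtain h | ⟨c, hc⟩ := h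
  · rw [columnMultiplicity, if_pos h]
    exact Nat.le_add_left _ _
  · refine (Multiset.one_le_count_iff_mem.2 ?_).trans (Nat.le_add_right _ _)
    exact hc ▸ Multiset.mem_map_of_mem _ (Finset.mem_univ c)

theorem memT_columnMultiplicity {jseq : Fin (t + 1) → ℕ} (hr : 0 < r)
    (hcvec : (colMultiset M).filter (¬Antitone ·) = Finset.univ.val.map (cvec r iseq jseq)) :
    memT r e (columnMultiplicity M iseq) iseq jseq M := by
  refine ⟨(colMultiset M).count (Ivec r 0), (colMultiset M).count (Ivec r r), ?_⟩
  have count_eq (a : ℕ) : (if ∃ m, iseq m = a then columnMultiplicity M iseq a - 1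
      else columnMultiplicity M iseq a) = (colMultiset M).count (Ivec r a) := by
    unfold columnMultiplicity
    split_ifs <;> rfl
  have range_eq : Finset.range r = insert 0 (Finset.Icc 1 (r - 1)) := by
    ext a
    simp only [Finset.mem_range, Finset.mem_insert, Finset.mem_Icc]
    omega
  simp only [count_eq]
  calc colMultiset M = (colMultiset M).filter Antitone + (colMultiset M).filter (¬Antitone ·) :=
        (Multiset.filter_add_not _ _).symm
    _ = _ := by
      rw [hcvec, filter_antitone_colMultiset, Finset.sum_range_succ, range_eq,
        Finset.sum_insert (by simp)]
      abel

end ColumnMultiset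

section Assembly

variable {e r t : ℕ} {M : Fin r → Fin e → Bool} {col : Fin t → Fin e} {i : Fin t → ℕ}
  {j : Fin (t + 1) → Fin r}

theorem memT_of_isSwapColumn (hr : 0 < r)
    (hcol : Finset.univ.val.map col = (Finset.univ.filter fun c => ¬Antitone (M · c)).val)
    (hswap : ∀ m, IsSwapColumn (M · (col m)) (j m.castSucc) (j m.succ) (i m)) :
    memT r e (columnMultiplicity M i) i (fun k => j k + 1) M := by
  refine memT_columnMultiplicity hr ?_
  rw [colMultiset, Multiset.filter_map]
  change Multiset.map _ (Finset.univ.filter fun c => ¬Antitone (M · c)).val = _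
  rw [← hcol, Multiset.map_map]
  exact Multiset.map_congr rfl fun m _ => (hswap m).eq_cvec

theorem ptPairCond_of_isSwapColumn {n : ℕ} {M : Fin (n + 1) → Fin e → Bool}
    {j : Fin (t + 1) → Fin (n + 1)} (hj0 : j 0 = 0) (hjlast : j (Fin.last t) = Fin.last n)
    (hswap : ∀ m, IsSwapColumn (M · (col m)) (j m.castSucc) (j m.succ) (i m)) :
    PtPairCond (n + 1) t (columnMultiplicity M i) i (fun k => j k + 1) :=
  ⟨by simp [hj0], by simp [hjlast], fun m => (hswap m).lo_lt,
    fun m => Nat.lt_succ_of_le (hswap m).le_hi,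
    fun m => one_le_columnMultiplicity (Or.inl ⟨m, rfl⟩)⟩

theorem strictMono_of_isSwapColumn
    (hswap : ∀ m, IsSwapColumn (M · (col m)) (j m.castSucc) (j m.succ) (i m)) : StrictMono j :=
  Fin.strictMono_iff_lt_succ.2 fun m => (hswap m).lo_lt_hi

end Assembly

/-- Any matrix whose weight graph is a tree is row equivalent
to a matrix in some `T^{y'}(i',j')`. -/
theorem gtree_memT (e r : ℕ) (he : 2 ≤ e) (hr : 2 ≤ r)
    (M : Fin r → Fin e → Bool) (hM : GTree M) :
    ∃ y' : ℕ → ℕ, 1 ≤ y' 1 ∧ 1 ≤ y' (r - 1) ∧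
      ∃ t' : ℕ, 1 ≤ t' ∧ t' ≤ r - 1 ∧
        ∃ (iseq : Fin t' → ℕ) (jseq : Fin (t' + 1) → ℕ),
          PtPairCond r t' y' iseq jseq ∧
          ∃ σ : Equiv.Perm (Fin r), memT r e y' iseq jseq (fun s c => M (σ s) c) := by
  obtain ⟨n, rfl⟩ := Nat.exists_eq_add_of_le' hr
  obtain ⟨σ, hsort⟩ := exists_perm_rowSorted M
  have hMσ := hM.comp_perm σ
  obtain ⟨t, col, i, j, hcol, hj0, hjlast, hswap⟩ := hMσ.exists_swapSequence hsort
  have ht : t ≤ n + 1 := by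
    simpa using Fin.le_of_injective j (strictMono_of_isSwapColumn hswap).injective
  obtain _ | t := t
  · exact absurd (hj0.symm.trans hjlast) (Fin.last_pos).ne
  refine ⟨columnMultiplicity (M ∘ σ) i, one_le_columnMultiplicity ?_,
    one_le_columnMultiplicity ?_, t + 1, Nat.le_add_left 1 t, ht, i, fun k => j k + 1,
    ptPairCond_of_isSwapColumn hj0 hjlast hswap, σ,
    memT_of_isSwapColumn (Nat.succ_pos _) hcol hswap⟩
  · have hfirst := hswap 0
    rw [Fin.castSucc_zero, hj0] at hfirst
    exact (hMσ.eq_one_or_exists_eq_Ivec_one hsort hfirst).imp_left fun h => ⟨0, h⟩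
  · have hlast := hswap (Fin.last t)
    rw [Fin.succ_last, hjlast] at hlast
    exact (hMσ.eq_or_exists_eq_Ivec_last hsort hlast).imp_left fun h => ⟨Fin.last t, h⟩

end
end AK
end
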